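/- Davenport's estimate: for every A > 0 there exists a constant C_A > 0 such that for all integers N ≥ 2 and all real numbers t, |Σ_{n≤N} e^{2πint} μ(n)| ≤ C_A · N / (log N)^A. -/

import Mathlib

open Filter Topology

/-!
By Dirichlet's approximation theorem `t` is close to a fraction `a / q` with `q ≤ N / U ^ 3`, where
`U` is a power of `log N`. If `q` is large, Vaughan's identity splits the sum into bilinear sums,
which geometric series and the Cauchy–Schwarz inequality bound with a saving of `√U`.

If `q` is small, partial summation removes the phase `t - a / q`, and sorting `n` by residue classes
modulo `q` reduces to sums of `χ n * μ n` for Dirichlet characters `χ`. No zero-free region is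
needed: for `1 < re s` one has `|L(χ, s)| ≫ (q (|im s| + 4)) ^ (-ε)`, by the 3-4-1 inequality and,
when `χ` is quadratic and `s` is near `1`, by Siegel's theorem (proved by Estermann's method).
Cauchy's estimate then shows that the derivatives of `1 / L(χ, s)` are
`≪ (q (|im s| + 4)) ^ (1 / 2)`, uniformly up to the line `re s = 1`. Hence, by Perron's formula, the
first-order Riesz means of `χ n * μ n * log n ^ k` are bounded without any loss of logarithms, and
removing the weight `log n ^ k` for large `k` saves an arbitrary power of `log N`.
-/

section ExponentialSums

open Finset
open scoped FourierTransform

lemma fourierChar_intCast (m : ℤ) : (𝐞 (m : ℝ) : ℂ) = 1 := by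
  rw [Real.fourierChar_apply, ← Complex.exp_int_mul_two_pi_mul_I m]
  push_cast
  ring_nf

lemma fourierChar_add (x y : ℝ) : (𝐞 (x + y) : ℂ) = 𝐞 x * 𝐞 y := by
  rw [AddChar.map_add_eq_mul, Circle.coe_mul]

lemma norm_fourierChar_sub_one (t : ℝ) : ‖(𝐞 t : ℂ) - 1‖ = 2 * |Real.sin (Real.pi * t)| := by
  rw [Real.fourierChar_apply, mul_comm _ Complex.I, Complex.norm_exp_I_mul_ofReal_sub_one,
    mul_assoc, mul_div_cancel_left₀ _ two_ne_zero, norm_mul, Real.norm_ofNat, Real.norm_eq_abs]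

lemma norm_fourierChar_sub_one_le (t : ℝ) : ‖(𝐞 t : ℂ) - 1‖ ≤ 2 * Real.pi * |t| := by
  have h : |Real.sin (Real.pi * t)| ≤ Real.pi * |t| := by
    simpa [abs_mul, abs_of_pos Real.pi_pos] using Real.abs_sin_le_abs (x := Real.pi * t)
  rw [norm_fourierChar_sub_one]
  linarith

lemma four_mul_norm_le_norm_fourierChar_sub_one (t : ℝ) :
    4 * ‖(t : UnitAddCircle)‖ ≤ ‖(𝐞 t : ℂ) - 1‖ := by
  set y := t - round t
  have hy_le : |Real.pi * y| ≤ Real.pi / 2 := by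
    rw [abs_mul, abs_of_pos Real.pi_pos]
    nlinarith [Real.pi_pos, abs_sub_round t]
  have hsin := Real.mul_abs_le_abs_sin hy_le
  rw [abs_mul, abs_of_pos Real.pi_pos, ← mul_assoc, div_mul_cancel₀ _ Real.pi_pos.ne'] at hsin
  have hty : (𝐞 t : ℂ) = 𝐞 y := by
    rw [← sub_add_cancel t (round t), fourierChar_add, fourierChar_intCast, mul_one]
  rw [hty, norm_fourierChar_sub_one, UnitAddCircle.norm_eq]
  linarith

lemma sum_Ioc_fourierChar_mul (t : ℝ) (n : ℕ) :
    (∑ k ∈ Ioc 0 n, (𝐞 (k * t) : ℂ)) * (𝐞 t - 1) = 𝐞 ((n + 1 : ℕ) * t) - 𝐞 t := by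
  induction n with
  | zero => simp
  | succ n ih =>
    have hstep : (𝐞 ((n + 1 + 1 : ℕ) * t) : ℂ) = 𝐞 ((n + 1 : ℕ) * t) * 𝐞 t := by
      rw [← fourierChar_add]
      push_cast
      ring_nf
    rw [sum_Ioc_succ_top n.zero_le, add_mul, ih, hstep]
    ring

lemma norm_sum_Ioc_fourierChar_mul_norm_le (t : ℝ) (n : ℕ) :
    ‖∑ k ∈ Ioc 0 n, (𝐞 (k * t) : ℂ)‖ * ‖(t : UnitAddCircle)‖ ≤ 1 / 2 := by
  have h : ‖∑ k ∈ Ioc 0 n, (𝐞 (k * t) : ℂ)‖ * ‖(𝐞 t : ℂ) - 1‖ ≤ 2 := by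
    rw [← norm_mul, sum_Ioc_fourierChar_mul]
    refine (norm_sub_le _ _).trans ?_
    rw [Circle.norm_coe, Circle.norm_coe]
    norm_num
  nlinarith [four_mul_norm_le_norm_fourierChar_sub_one t,
    norm_nonneg (∑ k ∈ Ioc 0 n, (𝐞 (k * t) : ℂ))]

/-- The standard majorant `min X (1 / (2 * r))` of a geometric sum with at most `X` terms whose
ratio `𝐞 t` has `‖t‖ = r`. It is written as a single quotient so that it is `X`, as it should be,
when `r = 0`. -/
noncomputable def geomBound (X r : ℝ) : ℝ := X / max 1 (2 * X * r)

lemma geomBound_zero_right (X : ℝ) : geomBound X 0 = X := by simp [geomBound]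

section

variable {X r : ℝ} (hX : 0 ≤ X)
include hX

lemma geomBound_nonneg : 0 ≤ geomBound X r := div_nonneg hX (by positivity)

lemma geomBound_antitone : Antitone (geomBound X) := fun _ _ h ↦ by
  unfold geomBound
  gcongr

omit hX in
lemma geomBound_le_inv (hr : 0 < r) : geomBound X r ≤ (2 * r)⁻¹ := by
  rw [geomBound, div_le_iff₀ (by positivity), inv_mul_eq_div, le_div_iff₀ (by positivity)]
  linarith [le_max_right 1 (2 * X * r)]

lemma le_geomBound {y : ℝ} (hyX : y ≤ X) (hyr : y * r ≤ 1 / 2) : y ≤ geomBound X r := by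
  rw [geomBound, le_div_iff₀ (by positivity)]
  rcases le_total 1 (2 * X * r) with h | h
  · rw [max_eq_right h]
    nlinarith
  · rwa [max_eq_left h, mul_one]

lemma geomBound_norm_le_of_floor {m j : ℕ} {x : ℝ} (hm : 0 < m) (hj : ⌊m * Int.fract x⌋₊ = j) :
    geomBound X ‖(x : UnitAddCircle)‖ ≤
      geomBound X (j / m) + geomBound X ((m - 1 - j : ℕ) / m) := by
  have hm' : (0 : ℝ) < m := by exact_mod_cast hm
  have hlow : (j : ℝ) / m ≤ Int.fract x := by
    rw [div_le_iff₀' hm', ← hj]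
    exact Nat.floor_le (mul_nonneg hm'.le (Int.fract_nonneg x))
  have hhigh : ((m - 1 - j : ℕ) : ℝ) / m ≤ 1 - Int.fract x := by
    have hlt := Nat.lt_floor_add_one (m * Int.fract x)
    have hcast : ((m - 1 - j : ℕ) : ℝ) ≤ max (m - 1 - j : ℝ) 0 := by
      rcases le_total (j + 1) m with h | h
      · rw [Nat.sub_sub, Nat.cast_sub (by omega)]
        exact le_max_of_le_left (by push_cast; linarith)
      · rw [Nat.sub_sub, Nat.sub_eq_zero_of_le (by omega)]
        simp
    rw [hj] at hlt
    rw [div_le_iff₀' hm']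
    refine hcast.trans (max_le (by linarith) ?_)
    nlinarith [Int.fract_lt_one x]
  rw [UnitAddCircle.norm_eq, abs_sub_round_eq_min]
  rcases min_choice (Int.fract x) (1 - Int.fract x) with h | h <;> rw [h]
  · linarith [geomBound_antitone hX hlow, geomBound_nonneg hX (r := (m - 1 - j : ℕ) / m)]
  · linarith [geomBound_antitone hX hhigh, geomBound_nonneg hX (r := (j : ℝ) / m)]

lemma sum_range_geomBound_div_le (m : ℕ) :
    ∑ j ∈ range m, geomBound X (j / m) ≤ X + m / 2 * (1 + Real.log m) := by
  rcases m with _ | m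
  · simpa using hX
  have hpos : (0 : ℝ) < (m + 1 : ℕ) := by positivity
  have hsum : ∑ j ∈ range m, ((j + 1 : ℕ) : ℝ)⁻¹ ≤ 1 + Real.log (m + 1 : ℕ) := by
    refine (le_of_eq_of_le ?_ (harmonic_le_one_add_log m)).trans ?_
    · simp [harmonic]
    · rcases m.eq_zero_or_pos with rfl | hm
      · simp
      · gcongr
        omega
  rw [sum_range_succ', Nat.cast_zero, zero_div, geomBound_zero_right, add_comm]
  gcongr
  calc
    ∑ j ∈ range m, geomBound X ((j + 1 : ℕ) / (m + 1 : ℕ))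
      ≤ ∑ j ∈ range m, (m + 1 : ℕ) / 2 * ((j + 1 : ℕ) : ℝ)⁻¹ := by
        refine sum_le_sum fun j _ ↦ (geomBound_le_inv (by positivity)).trans_eq ?_
        field_simp
    _ ≤ (m + 1 : ℕ) / 2 * (1 + Real.log (m + 1 : ℕ)) := by
        rw [← mul_sum]
        gcongr

lemma sum_geomBound_norm_le_of_separated {ι : Type*} {s : Finset ι} {x : ι → ℝ} {m : ℕ}
    (hm : 0 < m)
    (hx : (s : Set ι).Pairwise fun i j ↦ 1 / (m : ℝ) ≤ ‖((x i - x j : ℝ) : UnitAddCircle)‖) :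
    ∑ i ∈ s, geomBound X ‖(x i : UnitAddCircle)‖ ≤ 2 * X + m * (1 + Real.log m) := by
  have hm' : (0 : ℝ) < m := by exact_mod_cast hm
  let J i := ⌊m * Int.fract (x i)⌋₊
  have hJ_lt i : J i < m := by
    rw [Nat.floor_lt (mul_nonneg hm'.le (Int.fract_nonneg _))]
    nlinarith [Int.fract_lt_one (x i)]
  have hJ_inj : Set.InjOn J s := by
    intro i hi j hj hij
    by_contra hne
    have hclose : |m * Int.fract (x i) - m * Int.fract (x j)| < 1 :=
      Int.abs_sub_lt_one_of_floor_eq_floor <| by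
        rw [← Int.natCast_floor_eq_floor (mul_nonneg hm'.le (Int.fract_nonneg _)),
          ← Int.natCast_floor_eq_floor (mul_nonneg hm'.le (Int.fract_nonneg _))]
        exact congrArg _ hij
    have hsep : 1 / (m : ℝ) ≤ |Int.fract (x i) - Int.fract (x j)| := calc
      1 / (m : ℝ) ≤ |x i - x j - round (x i - x j)| := by
        rw [← UnitAddCircle.norm_eq]
        exact hx hi hj hne
      _ ≤ |x i - x j - (⌊x i⌋ - ⌊x j⌋ : ℤ)| := round_le _ _
      _ = |Int.fract (x i) - Int.fract (x j)| := by
        rw [Int.fract, Int.fract]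
        push_cast
        ring_nf
    rw [← mul_sub, abs_mul, abs_of_pos hm', ← lt_div_iff₀' hm'] at hclose
    exact hsep.not_gt hclose
  calc
    ∑ i ∈ s, geomBound X ‖(x i : UnitAddCircle)‖
      ≤ ∑ i ∈ s, (geomBound X (J i / m) + geomBound X ((m - 1 - J i : ℕ) / m)) :=
        sum_le_sum fun i _ ↦ geomBound_norm_le_of_floor hX hm rfl
    _ = ∑ j ∈ s.image J, (geomBound X (j / m) + geomBound X ((m - 1 - j : ℕ) / m)) := by
        rw [sum_image hJ_inj]
    _ ≤ ∑ j ∈ range m, (geomBound X (j / m) + geomBound X ((m - 1 - j : ℕ) / m)) := by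
        refine sum_le_sum_of_subset_of_nonneg ?_ fun j _ _ ↦
          add_nonneg (geomBound_nonneg hX) (geomBound_nonneg hX)
        exact image_subset_iff.mpr fun i _ ↦ mem_range.mpr (hJ_lt i)
    _ = 2 * ∑ j ∈ range m, geomBound X (j / m) := by
        rw [sum_add_distrib, sum_range_reflect (fun j : ℕ ↦ geomBound X (j / m)), two_mul]
    _ ≤ 2 * X + m * (1 + Real.log m) := by
        linarith [sum_range_geomBound_div_le hX m]

end

end ExponentialSums

section DivisorSums

open Finset ArithmeticFunction
open scoped ArithmeticFunction.sigma

lemma sum_Ioc_sum_divisorsAntidiagonal {M : Type*} [AddCommMonoid M] (N : ℕ) (F : ℕ → ℕ → M) :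
    ∑ n ∈ Ioc 0 N, ∑ x ∈ n.divisorsAntidiagonal, F x.1 x.2 =
      ∑ b ∈ Ioc 0 N, ∑ k ∈ Ioc 0 (N / b), F b k := by
  rw [sum_sigma', sum_sigma']
  refine sum_bij' (fun x _ ↦ ⟨x.2.1, x.2.2⟩) (fun y _ ↦ ⟨y.1 * y.2, y.1, y.2⟩) ?_ ?_ ?_ ?_ ?_
  · rintro ⟨n, b, k⟩ h
    simp only [mem_sigma, mem_Ioc, Nat.mem_divisorsAntidiagonal] at h ⊢
    obtain ⟨⟨hn, hnN⟩, rfl, -⟩ := h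
    have hb := Nat.pos_of_mul_pos_right hn
    have hk := Nat.pos_of_mul_pos_left hn
    exact ⟨⟨hb, (Nat.le_mul_of_pos_right _ hk).trans hnN⟩, hk,
      (Nat.le_div_iff_mul_le hb).mpr (by rwa [mul_comm])⟩
  · rintro ⟨b, k⟩ h
    simp only [mem_sigma, mem_Ioc, Nat.mem_divisorsAntidiagonal] at h ⊢
    obtain ⟨⟨hb, -⟩, hk, hkN⟩ := h
    rw [Nat.le_div_iff_mul_le hb, mul_comm] at hkN
    exact ⟨⟨Nat.mul_pos hb hk, hkN⟩, trivial, (Nat.mul_pos hb hk).ne'⟩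
  · rintro ⟨n, b, k⟩ h
    simp only [mem_sigma, Nat.mem_divisorsAntidiagonal] at h
    obtain ⟨-, rfl, -⟩ := h
    rfl
  · exact fun _ _ ↦ rfl
  · exact fun _ _ ↦ rfl

lemma sum_Ioc_inv_le_one_add_log (N : ℕ) : ∑ n ∈ Ioc 0 N, (n : ℝ)⁻¹ ≤ 1 + Real.log N := by
  refine le_of_eq_of_le ?_ (harmonic_le_one_add_log N)
  rw [harmonic_eq_sum_Icc, ← Icc_add_one_left_eq_Ioc]
  push_cast
  rfl

lemma one_add_log_natCast_nonneg (N : ℕ) : 0 ≤ 1 + Real.log N := by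
  linarith [Real.log_natCast_nonneg N]

lemma sigma_zero_mul_le (m n : ℕ) : σ 0 (m * n) ≤ σ 0 m * σ 0 n := by
  rw [sigma_zero_apply, sigma_zero_apply, sigma_zero_apply, Nat.divisors_mul]
  exact card_mul_le

lemma sum_Ioc_sigma_zero_mul (N : ℕ) (f : ℕ → ℝ) :
    ∑ n ∈ Ioc 0 N, (σ 0 n : ℝ) * f n = ∑ b ∈ Ioc 0 N, ∑ k ∈ Ioc 0 (N / b), f (b * k) := by
  rw [← sum_Ioc_sum_divisorsAntidiagonal N fun b k ↦ f (b * k)]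
  refine sum_congr rfl fun n _ ↦ ?_
  have hprod : ∀ x ∈ n.divisorsAntidiagonal, f (x.1 * x.2) = f n := fun x hx ↦ by
    rw [(Nat.mem_divisorsAntidiagonal.mp hx).1]
  rw [sum_congr rfl hprod, sum_const, nsmul_eq_mul, ← Nat.map_div_right_divisors, card_map,
    sigma_zero_apply]

lemma sum_Ioc_sigma_zero_le (N : ℕ) : ∑ n ∈ Ioc 0 N, (σ 0 n : ℝ) ≤ N * (1 + Real.log N) := by
  calc
    ∑ n ∈ Ioc 0 N, (σ 0 n : ℝ) = ∑ b ∈ Ioc 0 N, ((N / b : ℕ) : ℝ) := by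
      exact_mod_cast sum_Ioc_sigma0_eq_sum_div N
    _ ≤ ∑ b ∈ Ioc 0 N, N * (b : ℝ)⁻¹ := sum_le_sum fun b _ ↦ Nat.cast_div_le
    _ ≤ N * (1 + Real.log N) := by
      rw [← mul_sum]
      gcongr
      exact sum_Ioc_inv_le_one_add_log N

lemma sum_Ioc_sigma_zero_mul_inv_le (N : ℕ) :
    ∑ n ∈ Ioc 0 N, (σ 0 n : ℝ) * (n : ℝ)⁻¹ ≤ (1 + Real.log N) ^ 2 := by
  calc
    ∑ n ∈ Ioc 0 N, (σ 0 n : ℝ) * (n : ℝ)⁻¹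
      = ∑ b ∈ Ioc 0 N, ∑ k ∈ Ioc 0 (N / b), (b : ℝ)⁻¹ * (k : ℝ)⁻¹ := by
        rw [sum_Ioc_sigma_zero_mul N fun n ↦ (n : ℝ)⁻¹]
        simp only [Nat.cast_mul, mul_inv]
    _ ≤ ∑ b ∈ Ioc 0 N, ∑ k ∈ Ioc 0 N, (b : ℝ)⁻¹ * (k : ℝ)⁻¹ := by
        gcongr with b
        exact Nat.div_le_self N b
    _ = (∑ b ∈ Ioc 0 N, (b : ℝ)⁻¹) ^ 2 := by rw [sq, sum_mul_sum]
    _ ≤ (1 + Real.log N) ^ 2 := by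
        gcongr
        exact sum_Ioc_inv_le_one_add_log N

lemma sum_Ioc_sigma_zero_sq_le (N : ℕ) :
    ∑ n ∈ Ioc 0 N, (σ 0 n : ℝ) ^ 2 ≤ N * (1 + Real.log N) ^ 3 := by
  calc
    ∑ n ∈ Ioc 0 N, (σ 0 n : ℝ) ^ 2
      = ∑ b ∈ Ioc 0 N, ∑ k ∈ Ioc 0 (N / b), (σ 0 (b * k) : ℝ) := by
        simp only [sq, sum_Ioc_sigma_zero_mul N fun n ↦ (σ 0 n : ℝ)]
    _ ≤ ∑ b ∈ Ioc 0 N, σ 0 b * ∑ k ∈ Ioc 0 (N / b), (σ 0 k : ℝ) := by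
        simp only [mul_sum]
        gcongr with b _ k
        exact_mod_cast sigma_zero_mul_le b k
    _ ≤ ∑ b ∈ Ioc 0 N, σ 0 b * (N * (b : ℝ)⁻¹ * (1 + Real.log N)) := by
        gcongr with b hb
        refine (sum_Ioc_sigma_zero_le _).trans ?_
        have hNb : 0 < N / b := Nat.div_pos (mem_Ioc.mp hb).2 (mem_Ioc.mp hb).1
        have := one_add_log_natCast_nonneg (N / b)
        gcongr
        · exact Nat.cast_div_le
        · exact Nat.div_le_self N b
    _ = N * (1 + Real.log N) * ∑ b ∈ Ioc 0 N, (σ 0 b : ℝ) * (b : ℝ)⁻¹ := by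
        rw [mul_sum]
        exact sum_congr rfl fun b _ ↦ by ring
    _ ≤ N * (1 + Real.log N) * (1 + Real.log N) ^ 2 := by
        have := one_add_log_natCast_nonneg N
        gcongr
        exact sum_Ioc_sigma_zero_mul_inv_le N
    _ = N * (1 + Real.log N) ^ 3 := by ring

end DivisorSums

section BilinearSums

open Finset
open scoped FourierTransform ComplexConjugate

variable {t X : ℝ}

section Diophantine

variable {a : ℤ} {q : ℕ} (hq : 0 < q) (haq : IsCoprime a (q : ℤ))
  (ht : |t - a / q| ≤ 1 / (q : ℝ) ^ 2)
include hq haq ht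

lemma inv_two_mul_le_norm_intCast_mul {h : ℤ} (h0 : h ≠ 0) (hh : 2 * |h| ≤ q) :
    1 / ((2 * q : ℕ) : ℝ) ≤ ‖((h * t : ℝ) : UnitAddCircle)‖ := by
  have hq' : (0 : ℝ) < q := by exact_mod_cast hq
  set m := round (h * t)
  have hne : h * a - m * q ≠ 0 := by
    intro heq
    have hdvd : (q : ℤ) ∣ h := haq.symm.dvd_of_dvd_mul_right ⟨m, by linarith⟩
    have hle := Int.le_of_dvd (abs_pos.mpr h0) ((dvd_abs _ _).mpr hdvd)
    have hpos := abs_pos.mpr h0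
    omega
  have hfar : 1 / (q : ℝ) ≤ |(h : ℝ) * a / q - m| := by
    have hone : (1 : ℝ) ≤ |(h : ℝ) * a - m * q| := by exact_mod_cast Int.one_le_abs hne
    rw [show (h : ℝ) * a / q - m = (h * a - m * q) / q by field_simp, abs_div, abs_of_pos hq']
    gcongr
  have htri : |(h : ℝ) * a / q - m| ≤ |h * t - m| + |(h : ℝ)| * |t - a / q| := by
    rw [← abs_mul, show (h : ℝ) * a / q - m = (h * t - m) - h * (t - a / q) by ring]
    exact abs_sub _ _
  have hnear : |(h : ℝ)| * |t - a / q| ≤ q / 2 * (1 / (q : ℝ) ^ 2) := by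
    have hh' : 2 * |(h : ℝ)| ≤ q := by exact_mod_cast hh
    gcongr
    linarith
  rw [UnitAddCircle.norm_eq]
  calc
    1 / ((2 * q : ℕ) : ℝ) = 1 / q - q / 2 * (1 / (q : ℝ) ^ 2) := by
      push_cast
      field_simp
      norm_num
    _ ≤ |h * t - m| := by linarith

lemma sum_range_geomBound_block_le (hX : 0 ≤ X) (H : ℕ) :
    ∑ r ∈ range (q / 2 + 1), geomBound X ‖(((H + r : ℕ) * t : ℝ) : UnitAddCircle)‖ ≤
      2 * X + 2 * q * (1 + Real.log (2 * q)) := by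
  have hsep := sum_geomBound_norm_le_of_separated (s := range (q / 2 + 1))
    (x := fun r ↦ (H + r : ℕ) * t) hX (by positivity : 0 < 2 * q) ?_
  · exact_mod_cast hsep
  · intro r hr r' hr' hne
    simp only [coe_range, Set.mem_Iio] at hr hr'
    have h := inv_two_mul_le_norm_intCast_mul hq haq ht (h := r - r') (by omega) (by
      rcases abs_cases ((r : ℤ) - r') with ⟨h, _⟩ | ⟨h, _⟩ <;> omega)
    convert! h using 3
    push_cast
    ring

lemma sum_range_geomBound_le (hX : 0 ≤ X) (M : ℕ) :
    ∑ h ∈ range M, geomBound X ‖((h * t : ℝ) : UnitAddCircle)‖ ≤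
      (2 * M / q + 1) * (2 * X + 2 * q * (1 + Real.log (2 * q))) := by
  have : (0 : ℝ) < q := by exact_mod_cast hq
  set L := q / 2 + 1
  set B := 2 * X + 2 * q * (1 + Real.log (2 * q))
  have hB : 0 ≤ B := (sum_nonneg fun _ _ ↦ geomBound_nonneg hX).trans
    (sum_range_geomBound_block_le hq haq ht hX 0)
  have hblocks (n : ℕ) :
      ∑ h ∈ range (n * L), geomBound X ‖((h * t : ℝ) : UnitAddCircle)‖ ≤ n * B := by
    induction n with
    | zero => simp
    | succ n ih =>
      rw [add_mul, one_mul, sum_range_add]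
      have hblock := sum_range_geomBound_block_le hq haq ht hX (n * L)
      push_cast at hblock ih ⊢
      linarith
  calc
    ∑ h ∈ range M, geomBound X ‖((h * t : ℝ) : UnitAddCircle)‖
      ≤ ∑ h ∈ range ((M / L + 1) * L), geomBound X ‖((h * t : ℝ) : UnitAddCircle)‖ := by
        refine sum_le_sum_of_subset_of_nonneg (range_mono ?_) fun _ _ _ ↦ geomBound_nonneg hX
        rw [add_mul, one_mul]
        exact (Nat.lt_div_mul_add (by omega)).le
    _ ≤ (M / L + 1 : ℕ) * B := hblocks _
    _ ≤ (2 * M / q + 1) * B := by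
        have hL : (q : ℝ) ≤ 2 * L := by exact_mod_cast (by omega : q ≤ 2 * L)
        have hML : ((M / L : ℕ) : ℝ) ≤ 2 * M / q := calc
          ((M / L : ℕ) : ℝ) ≤ M / L := Nat.cast_div_le
          _ ≤ M / (q / 2) := by
            gcongr
            linarith
          _ = 2 * M / q := by field_simp
        push_cast
        gcongr

end Diophantine

lemma sum_Ico_geomBound_sub_le (hX : 0 ≤ X) {M b : ℕ} (hb : b ∈ Ico M (2 * M)) :
    ∑ b' ∈ Ico M (2 * M), geomBound X ‖((((b : ℝ) - b') * t : ℝ) : UnitAddCircle)‖ ≤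
      2 * ∑ h ∈ range M, geomBound X ‖((h * t : ℝ) : UnitAddCircle)‖ := by
  let F (h : ℕ) := geomBound X ‖((h * t : ℝ) : UnitAddCircle)‖
  have hle {s : Finset ℕ} {g : ℕ → ℕ} (hg : Set.InjOn g s) (hgs : ∀ b' ∈ s, g b' < M)
      (hF : ∀ b' ∈ s, geomBound X ‖((((b : ℝ) - b') * t : ℝ) : UnitAddCircle)‖ = F (g b')) :
      ∑ b' ∈ s, geomBound X ‖((((b : ℝ) - b') * t : ℝ) : UnitAddCircle)‖ ≤ ∑ h ∈ range M, F h := by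
    rw [sum_congr rfl hF, ← sum_image hg]
    exact sum_le_sum_of_subset_of_nonneg
      (image_subset_iff.mpr fun b' hb' ↦ mem_range.mpr (hgs b' hb'))
      fun _ _ _ ↦ geomBound_nonneg hX
  rw [← sum_filter_add_sum_filter_not (Ico M (2 * M)) (· ≤ b), two_mul (Finset.sum _ _)]
  refine add_le_add ?_ ?_
  · refine hle (g := fun b' ↦ b - b') (fun x hx y hy hxy ↦ ?_) (fun x hx ↦ ?_) fun x hx ↦ ?_
    · grind
    · grind
    · simp only [F]
      rw [Nat.cast_sub (mem_filter.mp hx).2]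
  · refine hle (g := fun b' ↦ b' - b) (fun x hx y hy hxy ↦ ?_) (fun x hx ↦ ?_) fun x hx ↦ ?_
    · grind
    · grind
    · simp only [F]
      rw [Nat.cast_sub (not_le.mp (mem_filter.mp hx).2).le, ← norm_neg, ← AddCircle.coe_neg,
        ← neg_mul, neg_sub]

lemma sum_norm_sum_sq_le {ι κ : Type*} (s : Finset ι) (r : Finset κ) (z : ι → κ → ℂ) :
    ∑ k ∈ r, ‖∑ i ∈ s, z i k‖ ^ 2 ≤ ∑ i ∈ s, ∑ j ∈ s, ‖∑ k ∈ r, z i k * conj (z j k)‖ := by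
  have hexpand : ((∑ k ∈ r, ‖∑ i ∈ s, z i k‖ ^ 2 : ℝ) : ℂ) =
      ∑ i ∈ s, ∑ j ∈ s, ∑ k ∈ r, z i k * conj (z j k) := by
    push_cast
    simp_rw [← Complex.mul_conj', map_sum, sum_mul_sum]
    rw [sum_comm]
    exact sum_congr rfl fun i _ ↦ sum_comm
  calc
    ∑ k ∈ r, ‖∑ i ∈ s, z i k‖ ^ 2 = ‖((∑ k ∈ r, ‖∑ i ∈ s, z i k‖ ^ 2 : ℝ) : ℂ)‖ := by
      rw [Complex.norm_real, Real.norm_of_nonneg (by positivity)]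
    _ ≤ ∑ i ∈ s, ∑ j ∈ s, ‖∑ k ∈ r, z i k * conj (z j k)‖ := by
      rw [hexpand]
      exact (norm_sum_le _ _).trans (sum_le_sum fun i _ ↦ norm_sum_le _ _)

lemma filter_mul_le_Ioc_div {M N b : ℕ} (hM : 0 < M) (hb : M ≤ b) :
    {k ∈ Ioc 0 (N / M) | b * k ≤ N} = Ioc 0 (N / b) := by
  ext k
  rw [mem_filter, mem_Ioc, mem_Ioc, Nat.le_div_iff_mul_le hM,
    Nat.le_div_iff_mul_le (hM.trans_le hb), mul_comm b]
  exact ⟨fun h ↦ ⟨h.1.1, h.2⟩, fun h ↦ ⟨⟨h.1, (Nat.mul_le_mul_left k hb).trans h.2⟩, h.2⟩⟩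

lemma norm_sum_mul_conj_le {M N b b' : ℕ} (hM : 0 < M) (hb : M ≤ b) (hb' : M ≤ b') {u v : ℂ}
    (hu : ‖u‖ ≤ 1) (hv : ‖v‖ ≤ 1) :
    ‖∑ k ∈ Ioc 0 (N / M), (if b * k ≤ N then u * 𝐞 ((b * k : ℕ) * t) else 0) *
        conj (if b' * k ≤ N then v * 𝐞 ((b' * k : ℕ) * t) else 0 : ℂ)‖ ≤
      geomBound ((N : ℝ) / M) ‖((((b : ℝ) - b') * t : ℝ) : UnitAddCircle)‖ := by
  have hsum : ∑ k ∈ Ioc 0 (N / M), (if b * k ≤ N then u * 𝐞 ((b * k : ℕ) * t) else 0) *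
        conj (if b' * k ≤ N then v * 𝐞 ((b' * k : ℕ) * t) else 0 : ℂ) =
      u * conj v * ∑ k ∈ Ioc 0 (min (N / b) (N / b')), (𝐞 (k * (((b : ℝ) - b') * t)) : ℂ) := by
    have hset : Ioc 0 (min (N / b) (N / b')) = {k ∈ Ioc 0 (N / M) | b * k ≤ N ∧ b' * k ≤ N} := by
      rw [filter_and, filter_mul_le_Ioc_div hM hb, filter_mul_le_Ioc_div hM hb', Ioc_inter_Ioc,
        max_self]
    rw [hset, sum_filter, mul_sum]
    refine sum_congr rfl fun k _ ↦ ?_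
    have he : (𝐞 (k * (((b : ℝ) - b') * t)) : ℂ) =
        𝐞 ((b * k : ℕ) * t) * conj (𝐞 ((b' * k : ℕ) * t) : ℂ) := by
      rw [← Circle.coe_inv_eq_conj, ← AddChar.map_neg_eq_inv, ← fourierChar_add]
      push_cast
      ring_nf
    by_cases h : b * k ≤ N <;> by_cases h' : b' * k ≤ N <;>
      simp only [h, h', he, and_true, and_false, if_true, if_false, map_mul, map_zero, mul_zero,
        zero_mul]
    ring
  have hlen : min (N / b) (N / b') ≤ N / M :=
    (min_le_left _ _).trans (Nat.div_le_div_left hb hM)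
  rw [hsum, norm_mul, norm_mul, RCLike.norm_conj]
  calc
    ‖u‖ * ‖v‖ * ‖∑ k ∈ Ioc 0 (min (N / b) (N / b')), (𝐞 (k * (((b : ℝ) - b') * t)) : ℂ)‖
      ≤ 1 * ‖∑ k ∈ Ioc 0 (min (N / b) (N / b')), (𝐞 (k * (((b : ℝ) - b') * t)) : ℂ)‖ := by
        gcongr
        exact mul_le_one₀ hu (norm_nonneg v) hv
    _ ≤ geomBound ((N : ℝ) / M) ‖((((b : ℝ) - b') * t : ℝ) : UnitAddCircle)‖ := by
        rw [one_mul]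
        refine le_geomBound (by positivity) ?_ (norm_sum_Ioc_fourierChar_mul_norm_le _ _)
        calc
          ‖∑ k ∈ Ioc 0 (min (N / b) (N / b')), (𝐞 (k * (((b : ℝ) - b') * t)) : ℂ)‖
            ≤ (min (N / b) (N / b') : ℕ) := by
              refine (norm_sum_le _ _).trans_eq ?_
              simp only [Circle.norm_coe, sum_const, Nat.card_Ioc, tsub_zero, nsmul_one]
          _ ≤ (N / M : ℕ) := by exact_mod_cast hlen
          _ ≤ (N : ℝ) / M := Nat.cast_div_le

lemma norm_bilinear_sum_sq_le (t : ℝ) {M : ℕ} (hM : 0 < M) (N : ℕ) {α : ℕ → ℂ}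
    (hα : ∀ b, ‖α b‖ ≤ 1) (γ : ℕ → ℂ) :
    ‖∑ b ∈ Ico M (2 * M), ∑ k ∈ Ioc 0 (N / b), α b * γ k * 𝐞 ((b * k : ℕ) * t)‖ ^ 2 ≤
      (∑ k ∈ Ioc 0 (N / M), ‖γ k‖ ^ 2) *
        (2 * M * ∑ h ∈ range M, geomBound ((N : ℝ) / M) ‖((h * t : ℝ) : UnitAddCircle)‖) := by
  let z (b k : ℕ) : ℂ := if b * k ≤ N then α b * 𝐞 ((b * k : ℕ) * t) else 0
  have hswap : ∑ b ∈ Ico M (2 * M), ∑ k ∈ Ioc 0 (N / b), α b * γ k * 𝐞 ((b * k : ℕ) * t) =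
      ∑ k ∈ Ioc 0 (N / M), γ k * ∑ b ∈ Ico M (2 * M), z b k := by
    simp only [mul_sum]
    rw [sum_comm]
    refine sum_congr rfl fun b hb ↦ ?_
    rw [← filter_mul_le_Ioc_div hM (mem_Ico.mp hb).1, sum_filter]
    exact sum_congr rfl fun k _ ↦ by simp only [z]; split_ifs <;> ring
  have hcorr : ∀ b ∈ Ico M (2 * M), ∀ b' ∈ Ico M (2 * M),
      ‖∑ k ∈ Ioc 0 (N / M), z b k * conj (z b' k)‖ ≤
        geomBound ((N : ℝ) / M) ‖((((b : ℝ) - b') * t : ℝ) : UnitAddCircle)‖ := by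
    intro b hb b' hb'
    exact norm_sum_mul_conj_le hM (mem_Ico.mp hb).1 (mem_Ico.mp hb').1 (hα b) (hα b')
  rw [hswap]
  calc
    ‖∑ k ∈ Ioc 0 (N / M), γ k * ∑ b ∈ Ico M (2 * M), z b k‖ ^ 2
      ≤ (∑ k ∈ Ioc 0 (N / M), ‖γ k‖ * ‖∑ b ∈ Ico M (2 * M), z b k‖) ^ 2 := by
        gcongr
        exact norm_sum_le_of_le _ fun k _ ↦ norm_mul_le _ _
    _ ≤ (∑ k ∈ Ioc 0 (N / M), ‖γ k‖ ^ 2) *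
        ∑ k ∈ Ioc 0 (N / M), ‖∑ b ∈ Ico M (2 * M), z b k‖ ^ 2 := sum_mul_sq_le_sq_mul_sq _ _ _
    _ ≤ (∑ k ∈ Ioc 0 (N / M), ‖γ k‖ ^ 2) *
        ∑ b ∈ Ico M (2 * M), 2 * ∑ h ∈ range M,
          geomBound ((N : ℝ) / M) ‖((h * t : ℝ) : UnitAddCircle)‖ := by
        gcongr
        refine (sum_norm_sum_sq_le _ _ z).trans (sum_le_sum fun b hb ↦ ?_)
        exact (sum_le_sum (hcorr b hb)).trans (sum_Ico_geomBound_sub_le (by positivity) hb)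
    _ = _ := by
        rw [sum_const, Nat.card_Ico, nsmul_eq_mul, two_mul M, Nat.add_sub_cancel_left]
        ring

end BilinearSums

section Vaughan

open Finset ArithmeticFunction
open scoped ArithmeticFunction.sigma ArithmeticFunction.zeta ArithmeticFunction.Moebius
open scoped FourierTransform

/-- The exponential sum `∑_{n ≤ N} f n * e(n * t)` of an arithmetic function. -/
noncomputable def expSum (f : ArithmeticFunction ℂ) (N : ℕ) (t : ℝ) : ℂ :=
  ∑ n ∈ Ioc 0 N, f n * 𝐞 (n * t)

lemma arithmeticFunction_sub_apply {R : Type*} [AddGroup R] (f g : ArithmeticFunction R) (n : ℕ) :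
    (f - g) n = f n - g n := by
  rw [sub_eq_add_neg, ArithmeticFunction.add_apply, ArithmeticFunction.neg_apply, sub_eq_add_neg]

lemma norm_moebius_le_one (n : ℕ) : ‖((μ n : ℤ) : ℂ)‖ ≤ 1 := by
  rw [Complex.norm_intCast]
  exact_mod_cast abs_moebius_le_one

variable {f g : ArithmeticFunction ℂ} {t : ℝ} {N U : ℕ}

lemma expSum_add : expSum (f + g) N t = expSum f N t + expSum g N t := by
  simp only [expSum, ArithmeticFunction.add_apply, add_mul, sum_add_distrib]

lemma expSum_sub : expSum (f - g) N t = expSum f N t - expSum g N t := by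
  simp only [expSum, arithmeticFunction_sub_apply, sub_mul, sum_sub_distrib]

lemma norm_expSum_le : ‖expSum f N t‖ ≤ ∑ n ∈ Ioc 0 N, ‖f n‖ :=
  norm_sum_le_of_le _ fun n _ ↦ by rw [norm_mul, Circle.norm_coe, mul_one]

lemma expSum_mul : expSum (f * g) N t =
    ∑ b ∈ Ioc 0 N, ∑ k ∈ Ioc 0 (N / b), f b * g k * 𝐞 ((b * k : ℕ) * t) := by
  rw [expSum, ← sum_Ioc_sum_divisorsAntidiagonal N fun b k ↦ f b * g k * 𝐞 ((b * k : ℕ) * t)]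
  refine sum_congr rfl fun n _ ↦ ?_
  rw [mul_apply, sum_mul]
  exact sum_congr rfl fun x hx ↦ by rw [(Nat.mem_divisorsAntidiagonal.mp hx).1]

lemma sum_norm_mul_le :
    ∑ n ∈ Ioc 0 N, ‖(f * g) n‖ ≤ (∑ n ∈ Ioc 0 N, ‖f n‖) * ∑ n ∈ Ioc 0 N, ‖g n‖ := by
  calc
    ∑ n ∈ Ioc 0 N, ‖(f * g) n‖ ≤ ∑ n ∈ Ioc 0 N, ∑ x ∈ n.divisorsAntidiagonal, ‖f x.1‖ * ‖g x.2‖ :=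
      sum_le_sum fun n _ ↦ by
        rw [mul_apply]
        exact norm_sum_le_of_le _ fun x _ ↦ norm_mul_le _ _
    _ = ∑ b ∈ Ioc 0 N, ∑ k ∈ Ioc 0 (N / b), ‖f b‖ * ‖g k‖ :=
      sum_Ioc_sum_divisorsAntidiagonal N fun b k ↦ ‖f b‖ * ‖g k‖
    _ ≤ ∑ b ∈ Ioc 0 N, ∑ k ∈ Ioc 0 N, ‖f b‖ * ‖g k‖ := by
      gcongr with b
      exact Nat.div_le_self N b
    _ = (∑ n ∈ Ioc 0 N, ‖f n‖) * ∑ n ∈ Ioc 0 N, ‖g n‖ := by rw [sum_mul_sum]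

/-- The restriction `f_{≤ U}` of an arithmetic function to `n ≤ U`. -/
def truncate {R : Type*} [Zero R] (f : ArithmeticFunction R) (U : ℕ) : ArithmeticFunction R :=
  ⟨fun n ↦ if n ≤ U then f n else 0, by simp⟩

lemma truncate_apply {R : Type*} [Zero R] (f : ArithmeticFunction R) (U n : ℕ) :
    truncate f U n = if n ≤ U then f n else 0 := rfl

lemma vaughan_identity {R : Type*} [CommRing R] {f g : R} (hfg : f * g = 1) (h : R) :
    f = h + h - h * h * g + (f - h) * ((f - h) * g) := by
  linear_combination (2 * h - f) * hfg

lemma sum_norm_truncate_le (hf : ∀ n, ‖f n‖ ≤ 1) : ∑ n ∈ Ioc 0 N, ‖truncate f U n‖ ≤ U := by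
  calc
    ∑ n ∈ Ioc 0 N, ‖truncate f U n‖ = ∑ n ∈ Ioc 0 N with n ≤ U, ‖f n‖ := by
      simp only [truncate_apply, apply_ite norm, norm_zero, sum_filter]
    _ ≤ ∑ n ∈ Ioc 0 U, ‖f n‖ :=
      sum_le_sum_of_subset_of_nonneg (fun n ↦ by grind) fun _ _ _ ↦ norm_nonneg _
    _ ≤ U := by simpa using sum_le_card_nsmul (Ioc 0 U) _ 1 fun n _ ↦ hf n

lemma truncate_mul_truncate_eq_zero {n : ℕ} (hn : U ^ 2 < n) :
    (truncate f U * truncate g U) n = 0 := by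
  rw [mul_apply]
  refine sum_eq_zero fun x hx ↦ ?_
  rw [truncate_apply, truncate_apply]
  split_ifs with h₁ h₂
  · have hprod := Nat.mul_le_mul h₁ h₂
    rw [(Nat.mem_divisorsAntidiagonal.mp hx).1, ← sq] at hprod
    omega
  · rw [mul_zero]
  · rw [zero_mul]
  · rw [zero_mul]

lemma norm_sub_truncate_le (hf : ∀ n, ‖f n‖ ≤ 1) (n : ℕ) : ‖(f - truncate f U) n‖ ≤ 1 := by
  rw [arithmeticFunction_sub_apply, truncate_apply]
  split_ifs
  · simp
  · simpa using hf n

lemma sub_truncate_eq_zero {n : ℕ} (hn : n ≤ U) : (f - truncate f U) n = 0 := by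
  rw [arithmeticFunction_sub_apply, truncate_apply, if_pos hn, sub_self]

lemma norm_mul_zeta_le (hf : ∀ n, ‖f n‖ ≤ 1) (n : ℕ) :
    ‖(f * (ζ : ArithmeticFunction ℂ)) n‖ ≤ σ 0 n := by
  rw [coe_mul_zeta_apply, sigma_zero_apply]
  simpa using norm_sum_le_of_le n.divisors fun i _ ↦ hf i

lemma mul_zeta_eq_zero (hf : ∀ n ≤ U, f n = 0) {n : ℕ} (hn : n ≤ U) :
    (f * (ζ : ArithmeticFunction ℂ)) n = 0 := by
  rw [coe_mul_zeta_apply]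
  exact sum_eq_zero fun i hi ↦ hf i ((Nat.divisor_le hi).trans hn)

lemma mul_mul_le_mul_log_pow_div_sqrt {q : ℕ} (hU0 : 0 < U) (hqN : q * U ^ 3 ≤ N) :
    U * U * q ≤ N * (1 + Real.log N) ^ 3 / Real.sqrt U := by
  have hU1 : (1 : ℝ) ≤ U := by exact_mod_cast hU0
  have hqN' : (q : ℝ) * U ^ 3 ≤ N := by exact_mod_cast hqN
  rw [le_div_iff₀ (Real.sqrt_pos.mpr (by positivity))]
  calc
    U * U * q * Real.sqrt U ≤ U * U * q * U := by
      gcongr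
      exact Real.sqrt_le_iff.mpr ⟨by positivity, by nlinarith⟩
    _ ≤ N * 1 := by linarith
    _ ≤ N * (1 + Real.log N) ^ 3 := by
      gcongr
      exact one_le_pow₀ (by linarith [Real.log_natCast_nonneg N])

section Diophantine

variable {a : ℤ} {q : ℕ} (haq : IsCoprime a (q : ℤ)) (ht : |t - a / q| ≤ 1 / (q : ℝ) ^ 2)
include haq ht

lemma norm_expSum_mul_zeta_le {D : ℕ} (hq : 0 < q) (hD : 2 * D ≤ q) (hf : ∀ n, D < n → f n = 0) :
    ‖expSum (f * (ζ : ArithmeticFunction ℂ)) N t‖ ≤ (∑ n ∈ Ioc 0 N, ‖f n‖) * q := by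
  rw [expSum_mul, sum_mul]
  refine norm_sum_le_of_le _ fun b hb ↦ ?_
  rcases lt_or_ge D b with hDb | hbD
  · simp [hf b hDb]
  have hb0 := (mem_Ioc.mp hb).1
  have hinner : ∑ k ∈ Ioc 0 (N / b), f b * (ζ : ArithmeticFunction ℂ) k * 𝐞 ((b * k : ℕ) * t) =
      f b * ∑ k ∈ Ioc 0 (N / b), (𝐞 (k * (b * t)) : ℂ) := by
    rw [mul_sum]
    refine sum_congr rfl fun k hk ↦ ?_
    rw [natCoe_apply, zeta_apply_ne (mem_Ioc.mp hk).1.ne', Nat.cast_one, mul_one]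
    push_cast
    ring_nf
  have hsep := inv_two_mul_le_norm_intCast_mul hq haq ht (h := b) (by omega)
    (by rw [Nat.abs_cast]; omega)
  rw [Int.cast_natCast] at hsep
  rw [hinner, norm_mul]
  gcongr
  have hgeom := norm_sum_Ioc_fourierChar_mul_norm_le (b * t) (N / b)
  rw [← le_div_iff₀ ((by positivity : (0 : ℝ) < 1 / (2 * q : ℕ)).trans_le hsep)] at hgeom
  calc
    ‖∑ k ∈ Ioc 0 (N / b), (𝐞 (k * (b * t)) : ℂ)‖ ≤ 1 / 2 / (1 / (2 * q : ℕ)) :=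
      hgeom.trans (by gcongr)
    _ = q := by
      push_cast
      field_simp

lemma sum_range_geomBound_le_of_dyadic (hU0 : 0 < U) (hUq : U ≤ q) (hqN : q * U ≤ N) {M : ℕ}
    (hUM : U ≤ 2 * M) (hMN : M * U ≤ N) :
    ∑ h ∈ range M, geomBound (N / M) ‖((h * t : ℝ) : UnitAddCircle)‖ ≤
      40 * (1 + Real.log N) * (N / U) := by
  have hq : 0 < q := hU0.trans_le hUq
  have hM : 0 < M := by omega
  have hU : (0 : ℝ) < U := by exact_mod_cast hU0
  have hqN' : q ≤ N := (Nat.le_mul_of_pos_right q hU0).trans hqN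
  have hlogN : 0 ≤ Real.log N := Real.log_natCast_nonneg N
  have hlogq : 1 + Real.log (2 * q) ≤ 2 * (1 + Real.log N) := by
    have : Real.log q ≤ Real.log N := by gcongr
    rw [Real.log_mul (by norm_num) (by positivity)]
    linarith [Real.log_two_lt_d9]
  have hNq : (N : ℝ) / q ≤ N / U := by gcongr
  have hM' : (M : ℝ) ≤ N / U := by
    rw [le_div_iff₀ hU]
    exact_mod_cast hMN
  have hq' : (q : ℝ) ≤ N / U := by
    rw [le_div_iff₀ hU]
    exact_mod_cast hqN
  have hNM : (N : ℝ) / M ≤ 2 * (N / U) := by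
    have : (U : ℝ) ≤ 2 * M := by exact_mod_cast hUM
    rw [← mul_div_assoc, div_le_div_iff₀ (by positivity) hU]
    nlinarith [Nat.cast_nonneg (α := ℝ) N]
  calc
    ∑ h ∈ range M, geomBound (N / M) ‖((h * t : ℝ) : UnitAddCircle)‖ ≤
        (2 * M / q + 1) * (2 * (N / M) + 2 * q * (1 + Real.log (2 * q))) :=
      sum_range_geomBound_le hq haq ht (by positivity) M
    _ ≤ (2 * M / q + 1) * (2 * (N / M) + 2 * q * (2 * (1 + Real.log N))) := by gcongr
    _ = 4 * (N / q) + 2 * (N / M) + (1 + Real.log N) * (8 * M + 4 * q) := by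
      field_simp
      ring
    _ ≤ 4 * (N / U) + 2 * (2 * (N / U)) + (1 + Real.log N) * (8 * (N / U) + 4 * (N / U)) := by
      gcongr
    _ ≤ 40 * (1 + Real.log N) * (N / U) := by
      have : 0 ≤ (N : ℝ) / U := by positivity
      nlinarith [mul_nonneg hlogN this]

omit haq ht in
lemma sum_Ioc_div_norm_sq_le (hg : ∀ n, ‖g n‖ ≤ σ 0 n) (M : ℕ) :
    ∑ k ∈ Ioc 0 (N / M), ‖g k‖ ^ 2 ≤ N / M * (1 + Real.log N) ^ 3 := by
  rcases Nat.eq_zero_or_pos (N / M) with h | h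
  · have := one_add_log_natCast_nonneg N
    rw [h, Ioc_self, sum_empty]
    positivity
  · have : 0 ≤ 1 + Real.log (N / M : ℕ) := one_add_log_natCast_nonneg _
    calc
      ∑ k ∈ Ioc 0 (N / M), ‖g k‖ ^ 2 ≤ ∑ k ∈ Ioc 0 (N / M), (σ 0 k : ℝ) ^ 2 := by
        gcongr with k
        exact hg k
      _ ≤ (N / M : ℕ) * (1 + Real.log (N / M : ℕ)) ^ 3 := sum_Ioc_sigma_zero_sq_le _
      _ ≤ N / M * (1 + Real.log N) ^ 3 := by
        gcongr
        · exact Nat.cast_div_le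
        · exact Nat.div_le_self N M

lemma norm_bilinear_block_le (hU0 : 0 < U) (hUq : U ≤ q) (hqN : q * U ≤ N)
    (hf : ∀ n, ‖f n‖ ≤ 1) (hfU : ∀ n ≤ U, f n = 0) (hg : ∀ n, ‖g n‖ ≤ σ 0 n)
    (hgU : ∀ n ≤ U, g n = 0) {M : ℕ} (hM : 0 < M) :
    ‖∑ b ∈ Ico M (2 * M), ∑ k ∈ Ioc 0 (N / b), f b * g k * 𝐞 ((b * k : ℕ) * t)‖ ≤
      9 * N * (1 + Real.log N) ^ 2 / Real.sqrt U := by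
  have : 0 ≤ 1 + Real.log N := one_add_log_natCast_nonneg N
  rcases le_or_gt (2 * M) U with hMU | hUM
  · rw [sum_eq_zero fun b hb ↦ sum_eq_zero fun k _ ↦ ?_, norm_zero]
    · positivity
    · rw [hfU b (by grind), zero_mul, zero_mul]
  rcases lt_or_ge N (M * U) with hNM | hMN
  · rw [sum_eq_zero fun b hb ↦ sum_eq_zero fun k hk ↦ ?_, norm_zero]
    · positivity
    · have hkU : k ≤ U := by
        by_contra! h
        have hb' := (mem_Ico.mp hb).1
        have hk' := (Nat.le_div_iff_mul_le (hM.trans_le hb')).mp (mem_Ioc.mp hk).2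
        nlinarith
      rw [hgU k hkU, mul_zero, zero_mul]
  refine le_of_sq_le_sq ?_ (by positivity)
  calc
    _ ≤ (∑ k ∈ Ioc 0 (N / M), ‖g k‖ ^ 2) *
        (2 * M * ∑ h ∈ range M, geomBound (N / M) ‖((h * t : ℝ) : UnitAddCircle)‖) :=
      norm_bilinear_sum_sq_le t hM N hf g
    _ ≤ N / M * (1 + Real.log N) ^ 3 * (2 * M * (40 * (1 + Real.log N) * (N / U))) := by
      gcongr
      · exact mul_nonneg (by positivity) (sum_nonneg fun h _ ↦ geomBound_nonneg (by positivity))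
      · exact sum_Ioc_div_norm_sq_le hg M
      · exact sum_range_geomBound_le_of_dyadic haq ht hU0 hUq hqN hUM.le hMN
    _ = 80 * (N ^ 2 * (1 + Real.log N) ^ 4 / U) := by
      field_simp
      ring
    _ ≤ 81 * (N ^ 2 * (1 + Real.log N) ^ 4 / U) := by
      gcongr
      norm_num
    _ = (9 * N * (1 + Real.log N) ^ 2 / Real.sqrt U) ^ 2 := by
      rw [div_pow, Real.sq_sqrt (Nat.cast_nonneg U)]
      ring

omit haq ht in
lemma sum_Ico_one_two_pow {M : Type*} [AddCommMonoid M] (F : ℕ → M) (J : ℕ) :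
    ∑ b ∈ Ico 1 (2 ^ J), F b = ∑ j ∈ range J, ∑ b ∈ Ico (2 ^ j) (2 * 2 ^ j), F b := by
  induction J with
  | zero => simp
  | succ n ih =>
    rw [sum_range_succ, ← ih, pow_succ', sum_Ico_consecutive]
    · exact Nat.one_le_two_pow
    · omega

omit haq ht in
lemma natLog_two_add_one_le (N : ℕ) : (Nat.log 2 N + 1 : ℝ) ≤ 2 * (1 + Real.log N) := by
  have hlog : (Nat.log 2 N : ℝ) ≤ Real.log N / Real.log 2 := Real.natLog_le_logb N 2
  rw [le_div_iff₀ (Real.log_pos one_lt_two)] at hlog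
  nlinarith [Real.log_two_gt_d9, Nat.cast_nonneg (α := ℝ) (Nat.log 2 N)]

lemma norm_expSum_mul_le (hU0 : 0 < U) (hUq : U ≤ q) (hqN : q * U ≤ N)
    (hf : ∀ n, ‖f n‖ ≤ 1) (hfU : ∀ n ≤ U, f n = 0) (hg : ∀ n, ‖g n‖ ≤ σ 0 n)
    (hgU : ∀ n ≤ U, g n = 0) :
    ‖expSum (f * g) N t‖ ≤ 18 * N * (1 + Real.log N) ^ 3 / Real.sqrt U := by
  have : 0 ≤ 1 + Real.log N := one_add_log_natCast_nonneg N
  have hdyadic : Ioc 0 N ⊆ Ico 1 (2 ^ (Nat.log 2 N + 1)) := fun b hb ↦ by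
    have := Nat.lt_pow_succ_log_self one_lt_two N
    grind
  rw [expSum_mul, sum_subset hdyadic fun b _ hb ↦ ?_, sum_Ico_one_two_pow]
  · calc
      _ ≤ ∑ _j ∈ range (Nat.log 2 N + 1), 9 * N * (1 + Real.log N) ^ 2 / Real.sqrt U :=
        norm_sum_le_of_le _ fun j _ ↦
          norm_bilinear_block_le haq ht hU0 hUq hqN hf hfU hg hgU (Nat.two_pow_pos j)
      _ = (Nat.log 2 N + 1) * (9 * N * (1 + Real.log N) ^ 2 / Real.sqrt U) := by simp
      _ ≤ 2 * (1 + Real.log N) * (9 * N * (1 + Real.log N) ^ 2 / Real.sqrt U) := by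
        gcongr
        exact natLog_two_add_one_le N
      _ = 18 * N * (1 + Real.log N) ^ 3 / Real.sqrt U := by ring
  · rw [Nat.div_eq_zero_iff.mpr (by grind), Ioc_self, sum_empty]

lemma norm_expSum_moebius_le_of_sq_le (hU0 : 0 < U) (hUq : 2 * U ^ 2 ≤ q) (hqN : q * U ^ 3 ≤ N) :
    ‖expSum ((μ : ArithmeticFunction ℤ) : ArithmeticFunction ℂ) N t‖ ≤
      21 * N * (1 + Real.log N) ^ 3 / Real.sqrt U := by
  have hq : 0 < q := by nlinarith
  set f : ArithmeticFunction ℂ := ((μ : ArithmeticFunction ℤ) : ArithmeticFunction ℂ) with hf_def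
  have hf : ∀ n, ‖f n‖ ≤ 1 := fun n ↦ by
    rw [hf_def, intCoe_apply]
    exact norm_moebius_le_one n
  have hsmall : ‖expSum (truncate f U) N t‖ ≤ U := norm_expSum_le.trans (sum_norm_truncate_le hf)
  have hI : ‖expSum (truncate f U * truncate f U * (ζ : ArithmeticFunction ℂ)) N t‖ ≤
      U * U * q := by
    refine (norm_expSum_mul_zeta_le haq ht hq hUq fun n ↦ truncate_mul_truncate_eq_zero).trans ?_
    gcongr
    refine sum_norm_mul_le.trans ?_
    gcongr <;> exact sum_norm_truncate_le hf
  have hII := norm_expSum_mul_le haq ht hU0 (U := U) (by nlinarith)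
    ((Nat.mul_le_mul_left q (Nat.le_self_pow (by norm_num) U)).trans hqN)
    (norm_sub_truncate_le hf) (fun _ ↦ sub_truncate_eq_zero)
    (norm_mul_zeta_le (norm_sub_truncate_le hf))
    (fun _ ↦ mul_zeta_eq_zero fun _ ↦ sub_truncate_eq_zero)
  have hfζ : f * (ζ : ArithmeticFunction ℂ) = 1 := coe_moebius_mul_coe_zeta
  have hUq' : (U : ℝ) ≤ U * U * q := by exact_mod_cast (by nlinarith : U ≤ U * U * q)
  have hUqN := mul_mul_le_mul_log_pow_div_sqrt hU0 hqN
  rw [vaughan_identity hfζ (truncate f U), expSum_add, expSum_sub, expSum_add]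
  calc
    _ ≤ U + U + U * U * q + 18 * N * (1 + Real.log N) ^ 3 / Real.sqrt U :=
      norm_add_le_of_le (norm_sub_le_of_le (norm_add_le_of_le hsmall hsmall) hI) hII
    _ ≤ 3 * (N * (1 + Real.log N) ^ 3 / Real.sqrt U) +
        18 * N * (1 + Real.log N) ^ 3 / Real.sqrt U := by linarith
    _ = 21 * N * (1 + Real.log N) ^ 3 / Real.sqrt U := by ring

end Diophantine

end Vaughan

section PeriodicSums

open Finset

variable {q : ℕ} [NeZero q]

lemma sum_range_zmod_natCast {M : Type*} [AddCommMonoid M] (F : ZMod q → M) :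
    ∑ i ∈ range q, F (i : ZMod q) = ∑ a, F a := by
  have hinj : Set.InjOn (fun i : ℕ ↦ (i : ZMod q)) (range q : Finset ℕ) := by
    simpa only [coe_range] using CharP.natCast_injOn_Iio (ZMod q) q
  rw [← sum_image (f := F) hinj]
  congr 1
  exact eq_univ_of_card _ (by rw [card_image_of_injOn hinj, card_range, ZMod.card])

lemma sum_Ioc_zmod_natCast {M : Type*} [AddCommMonoid M] (F : ZMod q → M) (Y : ℕ) :
    ∑ n ∈ Ioc Y (Y + q), F (n : ZMod q) = ∑ a, F a := by
  rw [← Ico_add_one_add_one_eq_Ioc, add_right_comm, sum_Ico_eq_sum_range,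
    add_tsub_cancel_left,
    ← Equiv.sum_comp (Equiv.addLeft ((Y + 1 : ℕ) : ZMod q)) F, ← sum_range_zmod_natCast]
  simp [add_assoc]

lemma norm_sum_zmod_div_le {F : ZMod q → ℂ} (hF : ∀ a, ‖F a‖ ≤ 1) : ‖(∑ a, F a) / q‖ ≤ 1 := by
  rw [norm_div, Complex.norm_natCast, div_le_one (by exact_mod_cast NeZero.pos q)]
  simpa [ZMod.card] using norm_sum_le_of_le univ fun a _ ↦ hF a

lemma norm_sum_Ioc_zmod_sub_le {F : ZMod q → ℂ} (hF : ∀ a, ‖F a‖ ≤ 1) {Y N : ℕ} (hYN : Y ≤ N) :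
    ‖∑ k ∈ Ioc Y N, F (k : ZMod q) - (∑ a, F a) / q * (N - Y)‖ ≤ 2 * q := by
  have hq : (q : ℂ) ≠ 0 := by exact_mod_cast NeZero.ne q
  obtain ⟨d, rfl⟩ := Nat.exists_eq_add_of_le hYN
  clear hYN
  induction d using Nat.strong_induction_on generalizing Y with
  | _ d ih =>
    rcases lt_or_ge d q with hd | hd
    · have hsum : ‖∑ k ∈ Ioc Y (Y + d), F (k : ZMod q)‖ ≤ d := by
        simpa using norm_sum_le_of_le (Ioc Y (Y + d)) fun k _ ↦ hF k
      have hmean : ‖(∑ a, F a) / q * ((Y + d : ℕ) - Y)‖ ≤ 1 * d := by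
        rw [Nat.cast_add, add_sub_cancel_left, norm_mul, Complex.norm_natCast]
        gcongr
        exact norm_sum_zmod_div_le hF
      have hdq : (d : ℝ) ≤ q := by exact_mod_cast hd.le
      linarith [norm_sub_le_of_le hsum hmean]
    · have hrec := ih (d - q) (Nat.sub_lt_self (NeZero.pos q) hd) (Y := Y + q)
      rw [← sum_Ioc_consecutive _ (Nat.le_add_right Y q) (by omega), sum_Ioc_zmod_natCast]
      convert hrec using 2
      push_cast [Nat.cast_sub hd]
      rw [show Y + q + (d - q) = Y + d by omega]
      field_simp
      ring

end PeriodicSums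

section MeanValueContinuation

open Finset Set MeasureTheory

/-- The error `∑_{Y < k ≤ u} f k - c * (u - Y)` made when `f` is replaced by its mean value `c`
on `(Y, u]`, extended by `0` to `u ≤ Y`. -/
noncomputable def meanError (f : ℕ → ℂ) (c : ℂ) (Y : ℕ) (u : ℝ) : ℂ :=
  if (Y : ℝ) < u then ∑ k ∈ Finset.Ioc Y ⌊u⌋₊, f k - c * (u - Y) else 0

/-- The analytic continuation of `LSeries f s - c * Y ^ (1 - s) / (s - 1)` to `0 < re s` obtained
by partial summation, for `f` of mean value `c`. -/
noncomputable def regularizedLSeries (f : ℕ → ℂ) (c : ℂ) (Y : ℕ) (s : ℂ) : ℂ :=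
  ∑ n ∈ Finset.Ioc 0 Y, LSeries.term f s n + s * mellin (meanError f c Y) (-s)

/-- The bound for `regularizedLSeries f c Y s` when `‖f n‖ ≤ 1` and `f` has mean value `c`
up to an error `K`. -/
noncomputable def regularizedLSeriesBound (K : ℝ) (Y : ℕ) (s : ℂ) : ℝ :=
  ∑ n ∈ Finset.Ioc 0 Y, (n : ℝ) ^ (-s.re) + ‖s‖ * ((K + 1) * ((Y : ℝ) ^ (-s.re) / s.re))

variable {f : ℕ → ℂ} {c s : ℂ} {K : ℝ} {Y : ℕ}

lemma measurable_meanError : Measurable (meanError f c Y) := by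
  refine Measurable.ite measurableSet_Ioi ?_ measurable_const
  exact ((measurable_from_nat (f := fun n ↦ ∑ k ∈ Finset.Ioc Y n, f k)).comp
    Nat.measurable_floor).sub (by fun_prop)

lemma mellin_meanError_neg :
    mellin (meanError f c Y) (-s) = ∫ t in Ioi (Y : ℝ), (t : ℂ) ^ (-s - 1) * meanError f c Y t := by
  simp only [mellin, smul_eq_mul]
  refine setIntegral_eq_of_subset_of_forall_sdiff_eq_zero measurableSet_Ioi
    (Ioi_subset_Ioi (Nat.cast_nonneg Y)) fun x hx ↦ ?_
  rw [meanError, if_neg (not_lt.mpr (not_lt.mp hx.2)), mul_zero]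

lemma summable_LSeries_of_norm_le_one (hf : ∀ n, ‖f n‖ ≤ 1) (hs : 1 < s.re) :
    LSeriesSummable f s :=
  LSeriesSummable_of_bounded_of_one_lt_re (fun n _ ↦ hf n) hs

lemma LSeries_eq_sum_add_integral (hf : ∀ n, ‖f n‖ ≤ 1) (hY : 0 < Y) (hs : 1 < s.re) :
    LSeries f s = ∑ n ∈ Finset.Ioc 0 Y, LSeries.term f s n +
      s * ∫ t in Ioi (Y : ℝ), (∑ k ∈ Finset.Ioc Y ⌊t⌋₊, f k) * (t : ℂ) ^ (-s - 1) := by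
  set g : ℕ → ℂ := (Set.Ioi Y).indicator f with hg
  have hg1 : ∀ n, ‖g n‖ ≤ 1 := fun n ↦ (norm_indicator_le_norm_self f n).trans (hf n)
  have htail : LSeries f s = ∑ n ∈ Finset.Ioc 0 Y, LSeries.term f s n + LSeries g s := by
    rw [LSeries, ← (summable_LSeries_of_norm_le_one hf hs).sum_add_tsum_compl (s := range (Y + 1)),
      _root_.tsum_subtype, range_eq_Ico, sum_eq_sum_Ico_succ_bot (Nat.succ_pos Y),
      LSeries.term_zero, zero_add, ← Finset.Ico_add_one_add_one_eq_Ioc, zero_add]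
    congr 1
    refine tsum_congr fun n ↦ ?_
    by_cases hn : Y < n <;> simp [hg, LSeries.term_def, indicator, hn]
  have hsum (u : ℝ) : ∑ k ∈ Finset.Icc 1 ⌊u⌋₊, g k = ∑ k ∈ Finset.Ioc Y ⌊u⌋₊, f k := by
    rw [hg, sum_indicator_eq_sum_filter]
    exact sum_congr (by ext; simp; omega) fun _ _ ↦ rfl
  have hint : LSeries g s = s * ∫ t in Ioi (1 : ℝ), (∑ k ∈ Finset.Icc 1 ⌊t⌋₊, g k) *
      (t : ℂ) ^ (-(s + 1)) := by
    refine LSeries_eq_mul_integral' g zero_le_one hs ?_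
    refine Asymptotics.IsBigO.of_bound 1 (Eventually.of_forall fun n ↦ ?_)
    rw [Real.norm_of_nonneg (sum_nonneg fun i _ ↦ norm_nonneg _)]
    simpa using sum_le_card_nsmul (Finset.Icc 1 n) _ 1 fun i _ ↦ hg1 i
  rw [htail, hint, neg_add']
  simp only [hsum]
  congr 2
  refine setIntegral_eq_of_subset_of_forall_sdiff_eq_zero measurableSet_Ioi
    (Ioi_subset_Ioi (by exact_mod_cast hY)) fun x hx ↦ ?_
  rw [Finset.Ioc_eq_empty_of_le (Nat.floor_le_of_le (not_lt.mp hx.2)), sum_empty, zero_mul]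

section Bounds

variable (hc : ‖c‖ ≤ 1)
  (hK : ∀ Y N : ℕ, Y ≤ N → ‖∑ k ∈ Finset.Ioc Y N, f k - c * (N - Y)‖ ≤ K)
include hc hK

lemma norm_meanError_le (u : ℝ) : ‖meanError f c Y u‖ ≤ K + 1 := by
  have hK0 : 0 ≤ K := (norm_nonneg _).trans (hK 0 0 le_rfl)
  rw [meanError]
  split_ifs with h
  · have hu : (0 : ℝ) ≤ u := (Nat.cast_nonneg _).trans h.le
    have hfloor : 0 ≤ u - ⌊u⌋₊ := sub_nonneg.mpr (Nat.floor_le hu)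
    have hfract : ‖c * (u - ⌊u⌋₊ : ℝ)‖ ≤ 1 := by
      rw [norm_mul, Complex.norm_real, Real.norm_of_nonneg hfloor]
      exact mul_le_one₀ hc hfloor (by linarith [Nat.lt_floor_add_one u])
    have hsub : ∑ k ∈ Finset.Ioc Y ⌊u⌋₊, f k - c * (u - Y) =
        ∑ k ∈ Finset.Ioc Y ⌊u⌋₊, f k - c * (⌊u⌋₊ - Y) - c * (u - ⌊u⌋₊ : ℝ) := by
      push_cast
      ring
    rw [hsub]
    exact norm_sub_le_of_le (hK Y ⌊u⌋₊ (Nat.le_floor h.le)) hfract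
  · rw [norm_zero]
    positivity

lemma mellinConvergent_and_differentiableAt_meanError (hY : 0 < Y) (hs : s.re < 0) :
    MellinConvergent (meanError f c Y) s ∧ DifferentiableAt ℂ (mellin (meanError f c Y)) s := by
  have hloc : LocallyIntegrableOn (meanError f c Y) (Ioi 0) :=
    ((locallyIntegrable_const (K + 1)).mono measurable_meanError.aestronglyMeasurable
      (Eventually.of_forall fun u ↦
        (norm_meanError_le hc hK u).trans (le_abs_self _))).locallyIntegrableOn _
  have htop : meanError f c Y =O[atTop] fun x : ℝ ↦ x ^ (-(0 : ℝ)) :=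
    Asymptotics.IsBigO.of_bound (K + 1) (Eventually.of_forall fun x ↦ by
      simpa using norm_meanError_le hc hK x)
  have hzero : meanError f c Y =O[𝓝[>] 0] fun x : ℝ ↦ x ^ (-(s.re - 1)) := by
    refine Asymptotics.IsBigO.of_bound 0 ?_
    filter_upwards [Ioo_mem_nhdsGT (by exact_mod_cast hY : (0 : ℝ) < Y)] with x hx
    rw [meanError, if_neg hx.2.not_gt, norm_zero, zero_mul]
  exact ⟨mellinConvergent_of_isBigO_rpow hloc htop hs hzero (by linarith),
    mellin_differentiableAt_of_isBigO_rpow hloc htop hs hzero (by linarith)⟩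

lemma norm_mellin_meanError_neg_le (hY : 0 < Y) (hs : 0 < s.re) :
    ‖mellin (meanError f c Y) (-s)‖ ≤ (K + 1) * ((Y : ℝ) ^ (-s.re) / s.re) := by
  have hY' : (0 : ℝ) < Y := by exact_mod_cast hY
  have hint : ∫ t in Ioi (Y : ℝ), t ^ (-s.re - 1) = (Y : ℝ) ^ (-s.re) / s.re := by
    rw [integral_Ioi_rpow_of_lt (by linarith) hY', sub_add_cancel, neg_div_neg_eq]
  rw [mellin_meanError_neg, ← hint, ← integral_const_mul]
  refine norm_integral_le_of_norm_le
    ((integrableOn_Ioi_rpow_of_lt (by linarith) hY').const_mul _) ?_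
  refine (ae_restrict_iff' measurableSet_Ioi).mpr (Eventually.of_forall fun t ht ↦ ?_)
  have ht0 : 0 < t := hY'.trans ht
  rw [norm_mul, Complex.norm_cpow_eq_rpow_re_of_pos ht0, mul_comm, Complex.sub_re, Complex.neg_re,
    Complex.one_re]
  gcongr
  exact norm_meanError_le hc hK t

lemma integral_sum_mul_cpow (hY : 0 < Y) (hs : 1 < s.re) :
    s * ∫ t in Ioi (Y : ℝ), (∑ k ∈ Finset.Ioc Y ⌊t⌋₊, f k) * (t : ℂ) ^ (-s - 1) =
      s * mellin (meanError f c Y) (-s) + c * (Y : ℂ) ^ (1 - s) / (s - 1) := by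
  have hY' : (0 : ℝ) < Y := by exact_mod_cast hY
  have herror : IntegrableOn (fun t : ℝ ↦ (t : ℂ) ^ (-s - 1) * meanError f c Y t) (Ioi (Y : ℝ)) :=
    (mellinConvergent_and_differentiableAt_meanError hc hK hY (s := -s)
      (by rw [Complex.neg_re]; linarith)).1.mono_set (Ioi_subset_Ioi hY'.le)
  have hre : (-s - 1).re < -1 := by
    rw [Complex.sub_re, Complex.neg_re, Complex.one_re]
    linarith
  have hre' : (-s).re < -1 := by
    rw [Complex.neg_re]
    linarith
  have hmain := (integrableOn_Ioi_cpow_of_lt hre' hY').const_mul c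
  have hmain' := (integrableOn_Ioi_cpow_of_lt hre hY').const_mul (c * Y)
  have hdiff : IntegrableOn (fun t : ℝ ↦ c * (t : ℂ) ^ (-s) - c * Y * (t : ℂ) ^ (-s - 1))
      (Ioi (Y : ℝ)) := hmain.sub hmain'
  have hsplit : ∀ t ∈ Ioi (Y : ℝ), (∑ k ∈ Finset.Ioc Y ⌊t⌋₊, f k) * (t : ℂ) ^ (-s - 1) =
      (t : ℂ) ^ (-s - 1) * meanError f c Y t +
        (c * (t : ℂ) ^ (-s) - c * Y * (t : ℂ) ^ (-s - 1)) := fun t ht ↦ by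
    have ht0 : (t : ℂ) ≠ 0 := by exact_mod_cast (hY'.trans ht).ne'
    rw [meanError, if_pos (mem_Ioi.mp ht), ← sub_add_cancel (-s) 1, Complex.cpow_add _ _ ht0,
      Complex.cpow_one]
    ring_nf
  have hs0 : s ≠ 0 := Complex.ne_zero_of_one_lt_re hs
  have hs1 : s - 1 ≠ 0 := sub_ne_zero.mpr (by rintro rfl; simp at hs)
  have hs1' : -s + 1 ≠ 0 := by rwa [← neg_ne_zero, neg_add', neg_neg]
  rw [setIntegral_congr_fun measurableSet_Ioi hsplit, integral_add herror hdiff,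
    integral_sub hmain hmain', integral_const_mul, integral_const_mul, ← mellin_meanError_neg,
    integral_Ioi_cpow_of_lt hre' hY', integral_Ioi_cpow_of_lt hre hY', sub_add_cancel,
    sub_eq_neg_add 1 s, Complex.cpow_add _ _ (by exact_mod_cast hY'.ne'), Complex.cpow_one,
    Complex.ofReal_natCast, Complex.cpow_add _ _ (by exact_mod_cast hY'.ne'), Complex.cpow_one]
  field_simp
  ring

lemma LSeries_eq_regularizedLSeries_add (hf : ∀ n, ‖f n‖ ≤ 1) (hY : 0 < Y) (hs : 1 < s.re) :
    LSeries f s = regularizedLSeries f c Y s + c * (Y : ℂ) ^ (1 - s) / (s - 1) := by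
  rw [LSeries_eq_sum_add_integral hf hY hs, integral_sum_mul_cpow hc hK hY hs, regularizedLSeries,
    add_assoc]

lemma differentiableOn_regularizedLSeries (hY : 0 < Y) :
    DifferentiableOn ℂ (regularizedLSeries f c Y) {s | 0 < s.re} := fun s hs ↦ by
  have hmellin := (mellinConvergent_and_differentiableAt_meanError hc hK hY (s := -s)
    (by simpa using hs)).2
  refine DifferentiableAt.differentiableWithinAt (.add (.fun_sum fun n _ ↦ ?_) ?_)
  · exact (LSeries.hasDerivAt_term f n s).differentiableAt
  · exact differentiableAt_id.mul (hmellin.comp s differentiableAt_id.neg)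

lemma norm_regularizedLSeries_le (hf : ∀ n, ‖f n‖ ≤ 1) (hY : 0 < Y) (hs : 0 < s.re) :
    ‖regularizedLSeries f c Y s‖ ≤ regularizedLSeriesBound K Y s := by
  refine norm_add_le_of_le (norm_sum_le_of_le _ fun n hn ↦ ?_) ?_
  · have hn0 := (Finset.mem_Ioc.mp hn).1
    rw [LSeries.norm_term_eq, if_neg hn0.ne', Real.rpow_neg (Nat.cast_nonneg n), ← one_div]
    gcongr
    exact hf n
  · rw [norm_mul]
    gcongr
    exact norm_mellin_meanError_neg_le hc hK hY hs

end Bounds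

end MeanValueContinuation

section NormalizedLFunction

open Finset Set DirichletCharacter

lemma eqOn_of_differentiable_of_eqOn_one_lt_re {F G : ℂ → ℂ} (hF : Differentiable ℂ F)
    (hG : DifferentiableOn ℂ G {s | 0 < s.re}) (h : EqOn F G {s | 1 < s.re}) :
    EqOn F G {s | 0 < s.re} := by
  have hopen (x : ℝ) : IsOpen {s : ℂ | x < s.re} := isOpen_lt continuous_const Complex.continuous_re
  refine (hF.differentiableOn.analyticOnNhd (hopen 0)).eqOn_of_preconnected_of_eventuallyEq
    (hG.analyticOnNhd (hopen 0)) (convex_halfSpace_re_gt 0).isPreconnected (z₀ := 2) (by simp) ?_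
  filter_upwards [(hopen 1).mem_nhds (by simp : (2 : ℂ) ∈ _)] with z hz using h hz

lemma two_mul_rpow_le {T δ : ℝ} (hT : 0 ≤ T) (hδ : δ ≤ 1) : (2 * T) ^ δ ≤ 2 * T ^ δ := by
  rw [Real.mul_rpow zero_le_two hT]
  gcongr
  simpa using Real.rpow_le_rpow_of_exponent_le one_le_two hδ

lemma sum_rpow_neg_le_rpow_mul_tsum {ε σ : ℝ} (hε : 0 < ε) (hσ : 1 - ε ≤ σ) (Y : ℕ) :
    ∑ n ∈ Finset.Ioc 0 Y, (n : ℝ) ^ (-σ) ≤ (Y : ℝ) ^ (2 * ε) * ∑' n : ℕ, (n : ℝ) ^ (-1 - ε) := by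
  have hsummable : Summable fun n : ℕ ↦ (n : ℝ) ^ (-1 - ε) :=
    Real.summable_nat_rpow.mpr (by linarith)
  calc ∑ n ∈ Finset.Ioc 0 Y, (n : ℝ) ^ (-σ)
      ≤ ∑ n ∈ Finset.Ioc 0 Y, (Y : ℝ) ^ (2 * ε) * (n : ℝ) ^ (-1 - ε) := by
        refine sum_le_sum fun n hn ↦ ?_
        obtain ⟨hn0, hnY⟩ := Finset.mem_Ioc.mp hn
        have hn1 : (1 : ℝ) ≤ n := by exact_mod_cast hn0
        calc (n : ℝ) ^ (-σ) ≤ (n : ℝ) ^ (2 * ε + (-1 - ε)) :=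
              Real.rpow_le_rpow_of_exponent_le hn1 (by linarith)
          _ = (n : ℝ) ^ (2 * ε) * (n : ℝ) ^ (-1 - ε) := Real.rpow_add (by linarith) _ _
          _ ≤ (Y : ℝ) ^ (2 * ε) * (n : ℝ) ^ (-1 - ε) := by gcongr
    _ ≤ (Y : ℝ) ^ (2 * ε) * ∑' n : ℕ, (n : ℝ) ^ (-1 - ε) := by
        rw [← mul_sum]
        gcongr
        exact hsummable.sum_le_tsum _ fun n _ ↦ by positivity

variable {q : ℕ} {s : ℂ}

/-- The size of the conductor of an `L`-function modulo `q` at height `im s`. -/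
noncomputable def analyticConductor (q : ℕ) (s : ℂ) : ℝ := q * (|s.im| + 4)

lemma four_le_analyticConductor [NeZero q] : 4 ≤ analyticConductor q s := by
  have hq : (1 : ℝ) ≤ q := by exact_mod_cast NeZero.one_le
  rw [analyticConductor]
  nlinarith [abs_nonneg s.im]

lemma analyticConductor_le_two_mul {z : ℂ} (h : ‖z - s‖ ≤ 1) :
    analyticConductor q z ≤ 2 * analyticConductor q s := by
  have him : |z.im - s.im| ≤ 1 := (Complex.abs_im_le_norm (z - s)).trans h
  rw [analyticConductor, analyticConductor, mul_left_comm]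
  gcongr
  linarith [abs_sub_abs_le_abs_sub z.im s.im, abs_nonneg s.im]

lemma analyticConductor_rpow_le_two_mul [NeZero q] {z : ℂ} {δ : ℝ} (hδ : 0 ≤ δ) (hδ1 : δ ≤ 1)
    (h : ‖z - s‖ ≤ 1) : analyticConductor q z ^ δ ≤ 2 * analyticConductor q s ^ δ := by
  have hz : 0 ≤ analyticConductor q z := by linarith [four_le_analyticConductor (q := q) (s := z)]
  have hs : 0 ≤ analyticConductor q s := by linarith [four_le_analyticConductor (q := q) (s := s)]
  calc analyticConductor q z ^ δ ≤ (2 * analyticConductor q s) ^ δ :=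
        Real.rpow_le_rpow hz (analyticConductor_le_two_mul h) hδ
    _ ≤ 2 * analyticConductor q s ^ δ := two_mul_rpow_le hs hδ1

lemma regularizedLSeriesBound_le_of_analyticConductor_le [NeZero q] {ε : ℝ} {Y : ℕ} (hε : 0 < ε)
    (hε' : ε ≤ 1 / 3) (hs : 1 - ε ≤ s.re) (hs4 : s.re ≤ 4) (hY : analyticConductor q s ≤ Y) :
    regularizedLSeriesBound (2 * q) Y s ≤
      (∑' n : ℕ, (n : ℝ) ^ (-1 - ε) + 5) * (Y : ℝ) ^ (2 * ε) := by
  have hq : (1 : ℝ) ≤ q := by exact_mod_cast NeZero.one_le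
  have hY1 : (1 : ℝ) ≤ Y := by linarith [four_le_analyticConductor (q := q) (s := s)]
  have hs0 : 0 < s.re := by linarith
  have hnorm : ‖s‖ ≤ |s.im| + 4 := by
    linarith [Complex.norm_le_abs_re_add_abs_im s, abs_of_pos hs0]
  have hdiv : (Y : ℝ) ^ (-s.re) / s.re ≤ 3 / 2 * (Y : ℝ) ^ (-s.re) := by
    rw [div_le_iff₀ hs0]
    nlinarith [Real.rpow_nonneg (zero_le_one.trans hY1) (-s.re)]
  have htail : ‖s‖ * ((2 * q + 1) * ((Y : ℝ) ^ (-s.re) / s.re)) ≤ 5 * (Y : ℝ) ^ (2 * ε) :=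
    calc ‖s‖ * ((2 * q + 1) * ((Y : ℝ) ^ (-s.re) / s.re))
        ≤ (|s.im| + 4) * (3 * q * (3 / 2 * (Y : ℝ) ^ (-s.re))) := by
          gcongr
          linarith
      _ = 9 / 2 * (analyticConductor q s * (Y : ℝ) ^ (-s.re)) := by
          rw [analyticConductor]
          ring
      _ ≤ 5 * (Y * (Y : ℝ) ^ (-s.re)) := by
          have : 0 ≤ analyticConductor q s := by
            linarith [four_le_analyticConductor (q := q) (s := s)]
          gcongr
          norm_num
      _ = 5 * (Y : ℝ) ^ (1 - s.re) := by
          rw [sub_eq_add_neg, Real.rpow_add (by linarith), Real.rpow_one]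
      _ ≤ 5 * (Y : ℝ) ^ (2 * ε) := by
          gcongr
          linarith
  rw [regularizedLSeriesBound, add_mul _ _ ((Y : ℝ) ^ (2 * ε)), mul_comm (tsum _ _)]
  exact add_le_add (sum_rpow_neg_le_rpow_mul_tsum hε hs Y) htail

variable [NeZero q] (χ : DirichletCharacter ℂ q)

lemma norm_sum_Ioc_dirichletCharacter_sub_le (Y N : ℕ) (hYN : Y ≤ N) :
    ‖∑ k ∈ Finset.Ioc Y N, χ (k : ZMod q) - (∑ a, χ a) / q * (N - Y)‖ ≤ 2 * q :=
  norm_sum_Ioc_zmod_sub_le χ.norm_le_one hYN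

variable {χ} in
lemma LFunction_eq_regularizedLSeries (hχ : χ ≠ 1) {Y : ℕ} (hY : 0 < Y) (hs : 0 < s.re) :
    LFunction χ s = regularizedLSeries (fun n ↦ χ n) ((∑ a, χ a) / q) Y s := by
  have hc := norm_sum_zmod_div_le χ.norm_le_one
  have hK := norm_sum_Ioc_dirichletCharacter_sub_le χ
  refine eqOn_of_differentiable_of_eqOn_one_lt_re (differentiable_LFunction hχ)
    (differentiableOn_regularizedLSeries hc hK hY) (fun z hz ↦ ?_) hs
  rw [LFunction_eq_LSeries χ hz,
    LSeries_eq_regularizedLSeries_add hc hK (fun n ↦ χ.norm_le_one n) hY hz,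
    χ.sum_eq_zero_of_ne_one hχ]
  simp

variable {χ} in
lemma norm_LFunction_le_regularizedLSeriesBound (hχ : χ ≠ 1) {Y : ℕ} (hY : 0 < Y)
    (hs : 0 < s.re) : ‖LFunction χ s‖ ≤ regularizedLSeriesBound (2 * q) Y s := by
  rw [LFunction_eq_regularizedLSeries hχ hY hs]
  exact norm_regularizedLSeries_le (norm_sum_zmod_div_le χ.norm_le_one)
    (norm_sum_Ioc_dirichletCharacter_sub_le χ) (fun n ↦ χ.norm_le_one n) hY hs

lemma LFunctionTrivChar₁_eq_regularizedLSeries {Y : ℕ} (hY : 0 < Y) (hs : 0 < s.re) :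
    LFunctionTrivChar₁ q s =
      (s - 1) * regularizedLSeries (fun n ↦ (1 : DirichletCharacter ℂ q) n)
        ((∑ a, (1 : DirichletCharacter ℂ q) a) / q) Y s +
      (∑ a, (1 : DirichletCharacter ℂ q) a) / q * (Y : ℂ) ^ (1 - s) := by
  set χ : DirichletCharacter ℂ q := 1
  have hc := norm_sum_zmod_div_le χ.norm_le_one
  have hK := norm_sum_Ioc_dirichletCharacter_sub_le χ
  have hY0 : (Y : ℂ) ≠ 0 := by exact_mod_cast hY.ne'
  refine eqOn_of_differentiable_of_eqOn_one_lt_re (differentiable_LFunctionTrivChar₁ q)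
    (((differentiableOn_id.sub_const 1).mul (differentiableOn_regularizedLSeries hc hK hY)).add
      (((differentiableOn_id.const_sub 1).const_cpow (.inl hY0)).const_mul _)) (fun z hz ↦ ?_) hs
  have hz1 : z ≠ 1 := by
    rintro rfl
    simp at hz
  have hz0 : z - 1 ≠ 0 := sub_ne_zero.mpr hz1
  rw [LFunctionTrivChar₁, Function.update_of_ne hz1,
    LFunctionTrivChar, LFunction_eq_LSeries χ hz,
    LSeries_eq_regularizedLSeries_add hc hK (fun n ↦ χ.norm_le_one n) hY hz]
  field_simp
  rfl

lemma norm_LFunctionTrivChar₁_le {Y : ℕ} (hY : 0 < Y) (hs : 0 < s.re) :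
    ‖LFunctionTrivChar₁ q s‖ ≤
      ‖s - 1‖ * regularizedLSeriesBound (2 * q) Y s + (Y : ℝ) ^ (1 - s.re) := by
  set χ : DirichletCharacter ℂ q := 1
  have hc := norm_sum_zmod_div_le χ.norm_le_one
  rw [LFunctionTrivChar₁_eq_regularizedLSeries hY hs]
  refine norm_add_le_of_le ?_ ?_
  · rw [norm_mul]
    gcongr
    exact norm_regularizedLSeries_le hc (norm_sum_Ioc_dirichletCharacter_sub_le χ)
      (fun n ↦ χ.norm_le_one n) hY hs
  · rw [norm_mul, Complex.norm_natCast_cpow_of_pos hY, Complex.sub_re, Complex.one_re]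
    exact mul_le_of_le_one_left (by positivity) hc

open Classical in
/-- The Dirichlet `L`-function with the pole of the trivial character at `s = 1` removed. The
denominator `s + 1` keeps the growth in `im s` independent of the character. -/
noncomputable def normalizedLFunction (s : ℂ) : ℂ :=
  if χ = 1 then LFunctionTrivChar₁ q s / (s + 1) else LFunction χ s

variable {χ} in
lemma normalizedLFunction_of_ne_one (hχ : χ ≠ 1) : normalizedLFunction χ = LFunction χ :=
  funext fun _ ↦ if_neg hχ

lemma normalizedLFunction_one :
    normalizedLFunction (1 : DirichletCharacter ℂ q) = fun s ↦ LFunctionTrivChar₁ q s / (s + 1) :=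
  funext fun _ ↦ if_pos rfl

lemma add_one_ne_zero_of_re_pos (hs : 0 < s.re) : s + 1 ≠ 0 := fun h ↦ by
  have hre := congrArg Complex.re h
  rw [Complex.add_re, Complex.one_re, Complex.zero_re] at hre
  linarith

lemma norm_le_norm_of_abs_re_le_of_abs_im_le {z w : ℂ} (hre : |z.re| ≤ |w.re|)
    (him : |z.im| ≤ |w.im|) : ‖z‖ ≤ ‖w‖ := by
  rw [Complex.norm_eq_sqrt_sq_add_sq, Complex.norm_eq_sqrt_sq_add_sq]
  gcongr Real.sqrt (?_ + ?_)
  exacts [sq_le_sq.mpr hre, sq_le_sq.mpr him]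

lemma norm_sub_one_le_norm_add_one (hs : 0 < s.re) : ‖s - 1‖ ≤ ‖s + 1‖ := by
  refine norm_le_norm_of_abs_re_le_of_abs_im_le ?_ (by simp)
  rw [Complex.sub_re, Complex.add_re, Complex.one_re, ← sq_le_sq]
  nlinarith

lemma differentiableAt_normalizedLFunction (hs : 0 < s.re) :
    DifferentiableAt ℂ (normalizedLFunction χ) s := by
  by_cases hχ : χ = 1
  · subst hχ
    rw [normalizedLFunction_one]
    exact (differentiable_LFunctionTrivChar₁ q s).div (by fun_prop) (add_one_ne_zero_of_re_pos hs)
  · rw [normalizedLFunction_of_ne_one hχ]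
    exact differentiable_LFunction hχ s

lemma norm_normalizedLFunction_le {Y : ℕ} (hY : 0 < Y) (hs : 0 < s.re) :
    ‖normalizedLFunction χ s‖ ≤ regularizedLSeriesBound (2 * q) Y s + (Y : ℝ) ^ (1 - s.re) := by
  have hbound : 0 ≤ regularizedLSeriesBound (2 * q) Y s := by
    rw [regularizedLSeriesBound]
    positivity
  by_cases hχ : χ = 1
  · subst hχ
    have hadd : 1 ≤ ‖s + 1‖ := by
      refine le_trans ?_ (Complex.re_le_norm (s + 1))
      simpa using hs.le
    rw [normalizedLFunction_one, norm_div, div_le_iff₀ (zero_lt_one.trans_le hadd), add_mul,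
      mul_comm (regularizedLSeriesBound _ _ _)]
    refine (norm_LFunctionTrivChar₁_le hY hs).trans ?_
    gcongr
    · exact norm_sub_one_le_norm_add_one hs
    · exact le_mul_of_one_le_right (by positivity) hadd
  · rw [normalizedLFunction_of_ne_one hχ]
    exact (norm_LFunction_le_regularizedLSeriesBound hχ hY hs).trans
      (le_add_of_nonneg_right (by positivity))

lemma exists_norm_normalizedLFunction_le {ε : ℝ} (hε : 0 < ε) (hε' : ε ≤ 1 / 3) :
    ∃ C : ℝ, 1 ≤ C ∧ ∀ (q : ℕ) [NeZero q] (χ : DirichletCharacter ℂ q) (s : ℂ),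
      1 - ε ≤ s.re → s.re ≤ 4 →
        ‖normalizedLFunction χ s‖ ≤ C * analyticConductor q s ^ (2 * ε) := by
  set Z := ∑' n : ℕ, (n : ℝ) ^ (-1 - ε)
  have hZ : 0 ≤ Z := tsum_nonneg fun n ↦ by positivity
  refine ⟨(Z + 6) * 2, by linarith, fun q _ χ s hs hs4 ↦ ?_⟩
  have hT := four_le_analyticConductor (q := q) (s := s)
  set T := analyticConductor q s
  have hY : 0 < ⌈T⌉₊ := Nat.ceil_pos.mpr (by linarith)
  calc ‖normalizedLFunction χ s‖
      ≤ regularizedLSeriesBound (2 * q) ⌈T⌉₊ s + (⌈T⌉₊ : ℝ) ^ (1 - s.re) :=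
        norm_normalizedLFunction_le χ hY (by linarith)
    _ ≤ (Z + 5) * (⌈T⌉₊ : ℝ) ^ (2 * ε) + (⌈T⌉₊ : ℝ) ^ (2 * ε) := by
        gcongr
        · exact regularizedLSeriesBound_le_of_analyticConductor_le hε hε' hs hs4 (Nat.le_ceil T)
        · exact_mod_cast hY
        · linarith
    _ = (Z + 6) * (⌈T⌉₊ : ℝ) ^ (2 * ε) := by ring
    _ ≤ (Z + 6) * (2 * T ^ (2 * ε)) := by
        gcongr
        refine le_trans ?_ (two_mul_rpow_le (by linarith : 0 ≤ T) (by linarith))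
        gcongr
        exact Nat.ceil_le_two_mul (by linarith)
    _ = (Z + 6) * 2 * T ^ (2 * ε) := by ring

lemma exists_norm_deriv_normalizedLFunction_le {ε : ℝ} (hε : 0 < ε) (hε' : ε ≤ 1 / 3) :
    ∃ C : ℝ, 1 ≤ C ∧ ∀ (q : ℕ) [NeZero q] (χ : DirichletCharacter ℂ q) (s : ℂ),
      1 - ε / 2 ≤ s.re → s.re ≤ 3 →
        ‖deriv (normalizedLFunction χ) s‖ ≤ C * analyticConductor q s ^ (2 * ε) := by
  obtain ⟨C, hC, hbound⟩ := exists_norm_normalizedLFunction_le hε hε'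
  have hr : 0 < ε / 2 := by linarith
  refine ⟨C * 2 / (ε / 2), by rw [le_div_iff₀ hr]; linarith, fun q _ χ s hs hs3 ↦ ?_⟩
  have hre {z : ℂ} (hz : ‖z - s‖ ≤ ε / 2) : |z.re - s.re| ≤ ε / 2 :=
    (Complex.abs_re_le_norm (z - s)).trans hz
  rw [mul_div_right_comm, mul_assoc, mul_comm_div, ← mul_div_assoc]
  refine Complex.norm_deriv_le_of_forall_mem_sphere_norm_le hr
    (DifferentiableOn.diffContOnCl fun z hz ↦ ?_) fun z hz ↦ ?_
  · rw [closure_ball _ hr.ne', mem_closedBall_iff_norm] at hz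
    have := abs_le.mp (hre hz)
    exact (differentiableAt_normalizedLFunction χ (by linarith)).differentiableWithinAt
  · rw [mem_sphere_iff_norm] at hz
    have := abs_le.mp (hre hz.le)
    refine (hbound q χ z (by linarith) (by linarith)).trans ?_
    gcongr
    exact analyticConductor_rpow_le_two_mul (by linarith) (by linarith) (by linarith)

lemma exists_norm_normalizedLFunction_sub_le {ε : ℝ} (hε : 0 < ε) (hε' : ε ≤ 1 / 3) :
    ∃ C : ℝ, 1 ≤ C ∧ ∀ (q : ℕ) [NeZero q] (χ : DirichletCharacter ℂ q) (s z : ℂ),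
      s.re ∈ Set.Icc (1 - ε / 2) 3 → z.re ∈ Set.Icc (1 - ε / 2) 3 → ‖z - s‖ ≤ 1 →
        ‖normalizedLFunction χ z - normalizedLFunction χ s‖ ≤
          C * analyticConductor q s ^ (2 * ε) * ‖z - s‖ := by
  obtain ⟨C, hC, hderiv⟩ := exists_norm_deriv_normalizedLFunction_le hε hε'
  refine ⟨C * 2, by linarith, fun q _ χ s z hs hz hzs ↦ ?_⟩
  have hconv : Convex ℝ
      (({w : ℂ | 1 - ε / 2 ≤ w.re} ∩ {w : ℂ | w.re ≤ 3}) ∩ Metric.closedBall s 1) :=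
    ((convex_halfSpace_re_ge _).inter (convex_halfSpace_re_le _)).inter (convex_closedBall _ _)
  refine hconv.norm_image_sub_le_of_norm_deriv_le (fun w hw ↦ ?_) (fun w hw ↦ ?_)
    ⟨hs, by simp⟩ ⟨hz, mem_closedBall_iff_norm.mpr hzs⟩
  · have hre : 1 - ε / 2 ≤ w.re := hw.1.1
    exact differentiableAt_normalizedLFunction χ (by linarith)
  · refine (hderiv q χ w hw.1.1 hw.1.2).trans ?_
    rw [mul_assoc]
    gcongr
    exact analyticConductor_rpow_le_two_mul (by linarith) (by linarith)
      (mem_closedBall_iff_norm.mp hw.2)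

end NormalizedLFunction

section Estermann

open Finset Set DirichletCharacter
open scoped ComplexOrder Nat

variable {a : ℕ → ℂ} {P : ℂ → ℂ} {B β : ℝ}

/-- The setting of Estermann's method: a Dirichlet series `∑ aₙ n⁻ˢ = ζ(s) P(s)` with nonnegative
coefficients and `a₁ = 1`, where `P` is entire and bounded by `B` on the disc `|s - 2| ≤ 4 / 3`. -/
structure IsZetaProduct (a : ℕ → ℂ) (P : ℂ → ℂ) (B : ℝ) : Prop where
  coeff_nonneg (n : ℕ) : 0 ≤ a n
  coeff_one : a 1 = 1
  summable (s : ℂ) (hs : 1 < s.re) : LSeriesSummable a s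
  LSeries_eq (s : ℂ) (hs : 1 < s.re) : LSeries a s = riemannZeta s * P s
  differentiable : Differentiable ℂ P
  norm_le (s : ℂ) (hs : s ∈ Metric.closedBall (2 : ℂ) (4 / 3)) : ‖P s‖ ≤ B
  one_le_bound : 1 ≤ B

lemma LFunctionTrivChar₁_modOne_apply_one : LFunctionTrivChar₁ 1 1 = 1 := by
  simp [LFunctionTrivChar₁]

lemma LFunctionTrivChar₁_modOne_of_ne_one {s : ℂ} (hs : s ≠ 1) :
    LFunctionTrivChar₁ 1 s = (s - 1) * riemannZeta s := by
  simp [LFunctionTrivChar₁, Function.update_of_ne hs, LFunctionTrivChar, LFunction_modOne_eq]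

/-- The function `ζ(s) P(s) - P(1) / (s - 1)` with its removable singularity at `s = 1` filled in;
it is entire when `P` is. -/
noncomputable def zetaMulSubPole (P : ℂ → ℂ) : ℂ → ℂ :=
  dslope (fun s ↦ LFunctionTrivChar₁ 1 s * P s) 1

lemma differentiable_zetaMulSubPole (hP : Differentiable ℂ P) :
    Differentiable ℂ (zetaMulSubPole P) := by
  rw [← differentiableOn_univ]
  exact (Complex.differentiableOn_dslope (by simp)).mpr
    ((differentiable_LFunctionTrivChar₁ 1).mul hP).differentiableOn

lemma zetaMulSubPole_of_ne_one {s : ℂ} (hs : s ≠ 1) :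
    zetaMulSubPole P s = (LFunctionTrivChar₁ 1 s * P s - P 1) / (s - 1) := by
  rw [zetaMulSubPole, dslope_of_ne _ hs, slope_def_field, LFunctionTrivChar₁_modOne_apply_one,
    one_mul]

lemma zetaMulSubPole_eq {s : ℂ} (hs : s ≠ 1) :
    zetaMulSubPole P s = riemannZeta s * P s - P 1 * (s - 1)⁻¹ := by
  have : s - 1 ≠ 0 := sub_ne_zero.mpr hs
  rw [zetaMulSubPole_of_ne_one hs, LFunctionTrivChar₁_modOne_of_ne_one hs]
  field_simp

lemma exists_norm_zetaMulSubPole_le : ∃ C : ℝ, 1 ≤ C ∧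
    ∀ {P : ℂ → ℂ} {B : ℝ}, (∀ s ∈ Metric.closedBall (2 : ℂ) (4 / 3), ‖P s‖ ≤ B) →
      ∀ s ∈ Metric.sphere (2 : ℂ) (4 / 3), ‖zetaMulSubPole P s‖ ≤ C * B := by
  obtain ⟨C, hC⟩ := (isCompact_closedBall (2 : ℂ) (4 / 3)).exists_bound_of_continuousOn
    (differentiable_LFunctionTrivChar₁ 1).continuous.continuousOn
  have hone : (1 : ℂ) ∈ Metric.closedBall (2 : ℂ) (4 / 3) := by
    rw [mem_closedBall_iff_norm]
    norm_num
  have hC0 : 0 ≤ C := (norm_nonneg _).trans (hC 1 hone)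
  refine ⟨3 * (C + 1), by linarith, fun {P B} hP s hs ↦ ?_⟩
  have hmem := Metric.sphere_subset_closedBall hs
  have hdist : 1 / 3 ≤ ‖s - 1‖ := by
    have := norm_sub_norm_le (s - 2) (-1)
    rw [mem_sphere_iff_norm.mp hs, norm_neg, norm_one, sub_neg_eq_add,
      show s - 2 + 1 = s - 1 by ring] at this
    linarith
  have hs1 : s ≠ 1 := by
    rintro rfl
    norm_num at hdist
  rw [zetaMulSubPole_of_ne_one hs1, norm_div, div_le_iff₀ (by linarith)]
  have hB : 0 ≤ B := (norm_nonneg _).trans (hP 1 hone)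
  calc ‖LFunctionTrivChar₁ 1 s * P s - P 1‖
      ≤ ‖LFunctionTrivChar₁ 1 s‖ * ‖P s‖ + ‖P 1‖ := by
        rw [← norm_mul]
        exact norm_sub_le _ _
    _ ≤ C * B + B := by
        gcongr
        exacts [hC s hmem, hP s hmem, hP 1 hone]
    _ = 3 * (C + 1) * B * (1 / 3) := by ring
    _ ≤ 3 * (C + 1) * B * ‖s - 1‖ := by gcongr

lemma norm_sum_range_taylor_sub_le {g : ℂ → ℂ} (hg : Differentiable ℂ g) {c z : ℂ} {R C : ℝ}
    (hC : ∀ s ∈ Metric.sphere c R, ‖g s‖ ≤ C) (hz : ‖z - c‖ < R) (M : ℕ) :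
    ‖∑ n ∈ range M, (n ! : ℂ)⁻¹ • (z - c) ^ n • iteratedDeriv n g c - g z‖ ≤
      C * (‖z - c‖ / R) ^ M / (1 - ‖z - c‖ / R) := by
  have hR : 0 < R := (norm_nonneg _).trans_lt hz
  refine norm_sub_le_of_geometric_bound_of_hasSum ((div_lt_one hR).mpr hz) (fun n ↦ ?_)
    (Complex.hasSum_taylorSeries_of_entire hg c z) M
  rw [norm_smul, norm_smul, norm_inv, Complex.norm_natCast, norm_pow]
  calc (n ! : ℝ)⁻¹ * (‖z - c‖ ^ n * ‖iteratedDeriv n g c‖)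
      ≤ (n ! : ℝ)⁻¹ * (‖z - c‖ ^ n * (n ! * C / R ^ n)) := by
        gcongr
        exact Complex.norm_iteratedDeriv_le_of_forall_mem_sphere_norm_le n hR hg.diffContOnCl hC
    _ = C * (‖z - c‖ / R) ^ n := by
        rw [div_pow]
        field_simp

lemma iteratedDeriv_sub_one_inv_two (n : ℕ) :
    iteratedDeriv n (fun s : ℂ ↦ (s - 1)⁻¹) 2 = (-1) ^ n * n ! := by
  have := congrFun (iter_deriv_inv_linear_sub n (1 : ℂ) 1) 2
  simp only [one_mul, one_pow] at this
  rw [iteratedDeriv_eq_iterate, this]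
  norm_num

lemma one_le_re_LSeries (ha : ∀ n, 0 ≤ a n) (ha1 : a 1 = 1) {x : ℝ} (hx : LSeriesSummable a x) :
    1 ≤ (LSeries a x).re := by
  have hterm := hx.le_tsum 1 fun n _ ↦ LSeries.term_nonneg (ha n) x
  rw [LSeries.term_of_ne_zero one_ne_zero, ha1, Nat.cast_one, Complex.one_cpow, div_one] at hterm
  exact (Complex.le_def.mp hterm).1

namespace IsZetaProduct

variable (h : IsZetaProduct a P B)
include h

lemma abscissaOfAbsConv_lt_two : LSeries.abscissaOfAbsConv a < ((2 : ℝ) : EReal) := by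
  refine (LSeries.abscissaOfAbsConv_le_of_forall_lt_LSeriesSummable (x := 1) fun y hy ↦
    h.summable y (by simpa using hy)).trans_lt ?_
  norm_cast

lemma iteratedDeriv_zetaMulSubPole_two (n : ℕ) :
    iteratedDeriv n (zetaMulSubPole P) 2 =
      (-1) ^ n * ((-1) ^ n * iteratedDeriv n (LSeries a) 2 - n ! * P 1) := by
  have heq : zetaMulSubPole P =ᶠ[𝓝 2] fun s ↦ LSeries a s - P 1 * (s - 1)⁻¹ := by
    have hnhds : {s : ℂ | 1 < s.re} ∈ 𝓝 (2 : ℂ) :=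
      (isOpen_lt continuous_const Complex.continuous_re).mem_nhds (by simp)
    filter_upwards [hnhds] with s hs
    rw [zetaMulSubPole_eq (by rintro rfl; simp at hs), h.LSeries_eq s hs]
  have hL : AnalyticAt ℂ (LSeries a) 2 :=
    LSeries_analyticOnNhd a 2 (by simpa using h.abscissaOfAbsConv_lt_two)
  have hpole : ContDiffAt ℂ n (fun s : ℂ ↦ P 1 * (s - 1)⁻¹) 2 :=
    contDiffAt_const.mul (ContDiffAt.inv (by fun_prop) (by norm_num))
  rw [heq.iteratedDeriv_eq, iteratedDeriv_fun_sub hL.contDiffAt hpole,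
    iteratedDeriv_const_mul_field, iteratedDeriv_sub_one_inv_two, mul_sub,
    ← mul_assoc ((-1) ^ n) ((-1) ^ n), ← mul_pow, neg_one_mul, neg_neg, one_pow]
  ring

lemma sub_le_re_taylor_term (hβ : β ≤ 2) (n : ℕ) :
    (if n = 0 then 1 else 0) - (P 1).re * (2 - β) ^ n ≤
      ((n ! : ℂ)⁻¹ • ((β : ℂ) - 2) ^ n • iteratedDeriv n (zetaMulSubPole P) 2).re := by
  have hfact : (n ! : ℂ) ≠ 0 := by exact_mod_cast n.factorial_ne_zero
  have hterm : (n ! : ℂ)⁻¹ • ((β : ℂ) - 2) ^ n • iteratedDeriv n (zetaMulSubPole P) 2 =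
      (((2 - β) ^ n / n ! : ℝ) : ℂ) * ((-1) ^ n * iteratedDeriv n (LSeries a) 2) -
        (((2 - β) ^ n : ℝ) : ℂ) * P 1 := by
    rw [h.iteratedDeriv_zetaMulSubPole_two, smul_eq_mul, smul_eq_mul, ← mul_assoc (_ ^ n),
      ← mul_pow, mul_neg_one, neg_sub]
    push_cast
    field_simp
  rw [hterm, Complex.sub_re, Complex.re_ofReal_mul, Complex.re_ofReal_mul, mul_comm (P 1).re]
  gcongr
  have : 0 ≤ 2 - β := by linarith
  split_ifs with hn
  · subst hn
    simpa using one_le_re_LSeries h.coeff_nonneg h.coeff_one (x := 2) (h.summable _ (by simp))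
  · have := (Complex.nonneg_iff.mp (LSeries.iteratedDeriv_alternating (a := a) h.coeff_nonneg
      h.abscissaOfAbsConv_lt_two n)).1
    rw [Complex.ofReal_ofNat] at this
    positivity

lemma sub_le_re_sum_taylor (hβ : β < 1) {M : ℕ} (hM : M ≠ 0) :
    1 - (P 1).re * (((2 - β) ^ M - 1) / (1 - β)) ≤
      (∑ n ∈ range M, (n ! : ℂ)⁻¹ • ((β : ℂ) - 2) ^ n •
        iteratedDeriv n (zetaMulSubPole P) 2).re := by
  have hgeom : ∑ n ∈ range M, (2 - β) ^ n = ((2 - β) ^ M - 1) / (1 - β) := by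
    rw [geom_sum_eq (by linarith)]
    ring
  rw [Complex.re_sum, ← hgeom, mul_sum]
  calc (1 : ℝ) - ∑ n ∈ range M, (P 1).re * (2 - β) ^ n
      = ∑ n ∈ range M, ((if n = 0 then 1 else 0) - (P 1).re * (2 - β) ^ n) := by
        rw [sum_sub_distrib, sum_ite_eq' (range M) 0 fun _ ↦ (1 : ℝ),
          if_pos (mem_range.mpr (Nat.pos_of_ne_zero hM))]
    _ ≤ _ := sum_le_sum fun n _ ↦ h.sub_le_re_taylor_term (by linarith) n

end IsZetaProduct

lemma exists_sub_le_re_zeta_mul : ∃ C : ℝ, 1 ≤ C ∧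
    ∀ {a : ℕ → ℂ} {P : ℂ → ℂ} {B β : ℝ}, IsZetaProduct a P B → 7 / 8 ≤ β → β < 1 →
      ∀ M : ℕ, M ≠ 0 →
        1 - (P 1).re * ((2 - β) ^ M / (1 - β)) - C * B * (27 / 32) ^ M ≤
          (riemannZeta β * P β).re := by
  obtain ⟨C, hC, hbound⟩ := exists_norm_zetaMulSubPole_le
  refine ⟨C * 7, by linarith, fun {a P B β} h hβ hβ1 M hM ↦ ?_⟩
  have hnorm : ‖(β : ℂ) - 2‖ = 2 - β := by
    rw [← Complex.ofReal_ofNat, ← Complex.ofReal_sub, Complex.norm_real, Real.norm_eq_abs,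
      abs_sub_comm, abs_of_nonneg (by linarith)]
  have htail := norm_sum_range_taylor_sub_le (differentiable_zetaMulSubPole h.differentiable)
    (hbound h.norm_le) (z := β) (by rw [hnorm]; linarith) M
  rw [hnorm] at htail
  have hratio : (2 - β) / (4 / 3) ≤ 27 / 32 := by
    rw [div_le_iff₀ (by norm_num)]
    linarith
  have htail' : C * B * ((2 - β) / (4 / 3)) ^ M / (1 - (2 - β) / (4 / 3)) ≤
      C * 7 * B * (27 / 32) ^ M := by
    have := h.one_le_bound
    rw [div_le_iff₀ (by linarith)]
    calc C * B * ((2 - β) / (4 / 3)) ^ M ≤ C * B * (27 / 32) ^ M := by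
          gcongr
          exact div_nonneg (by linarith) (by norm_num)
      _ ≤ C * B * (27 / 32) ^ M * (7 * (1 - (2 - β) / (4 / 3))) :=
          le_mul_of_one_le_right (by positivity) (by linarith)
      _ = C * 7 * B * (27 / 32) ^ M * (1 - (2 - β) / (4 / 3)) := by ring
  have hre := (Complex.re_le_norm _).trans (htail.trans htail')
  have hpole : (zetaMulSubPole P β).re = (riemannZeta β * P β).re + (P 1).re / (1 - β) := by
    rw [zetaMulSubPole_eq (by exact_mod_cast hβ1.ne), Complex.sub_re, sub_eq_add_neg,
      ← Complex.neg_re, ← mul_neg, ← inv_neg, neg_sub, ← Complex.ofReal_one, ← Complex.ofReal_sub,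
      ← Complex.ofReal_inv, Complex.re_mul_ofReal, div_eq_mul_inv]
  rw [Complex.sub_re, hpole] at hre
  have hhead := h.sub_le_re_sum_taylor hβ1 hM
  rw [sub_div, mul_sub, mul_one_div] at hhead
  linarith

lemma pow_le_inv_of_log_le {X : ℝ} (hX : 0 < X) {M : ℕ} (hM : 32 / 5 * Real.log X ≤ M) :
    (27 / 32 : ℝ) ^ M ≤ X⁻¹ := by
  calc (27 / 32 : ℝ) ^ M ≤ Real.exp (-5 / 32) ^ M := by
        gcongr
        have := Real.add_one_le_exp (-5 / 32)
        norm_num at this ⊢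
        linarith
    _ = Real.exp (M * (-5 / 32)) := (Real.exp_nat_mul _ _).symm
    _ ≤ Real.exp (-Real.log X) := by
        gcongr
        linarith
    _ = X⁻¹ := by rw [Real.exp_neg, Real.exp_log hX]

lemma pow_two_sub_le {X : ℝ} (hX : 0 < X) (hβ0 : 0 ≤ β) (hβ1 : β ≤ 1) {M : ℕ}
    (hM : M ≤ 32 / 5 * Real.log X + 2) :
    (2 - β) ^ M ≤ Real.exp 2 * X ^ (32 / 5 * (1 - β)) := by
  have h1β : 0 ≤ 1 - β := by linarith
  calc (2 - β) ^ M ≤ Real.exp (1 - β) ^ M := by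
        gcongr
        · linarith
        · have := Real.add_one_le_exp (1 - β)
          linarith
    _ = Real.exp (M * (1 - β)) := (Real.exp_nat_mul _ _).symm
    _ ≤ Real.exp (2 + Real.log X * (32 / 5 * (1 - β))) := by
        gcongr
        have := mul_le_mul_of_nonneg_right hM h1β
        linarith
    _ = Real.exp 2 * X ^ (32 / 5 * (1 - β)) := by
        rw [Real.exp_add, Real.rpow_def_of_pos hX]

-- The number `M` of Taylor coefficients is chosen so that the remainder is at most `1 / 2`.
lemma exists_le_re_of_re_zeta_mul_nonpos : ∃ D : ℝ, 1 ≤ D ∧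
    ∀ {a : ℕ → ℂ} {P : ℂ → ℂ} {B β δ : ℝ}, IsZetaProduct a P B → 7 / 8 ≤ β → β < 1 →
      32 / 5 * (1 - β) ≤ δ → (riemannZeta β * P β).re ≤ 0 →
        1 / 2 * Real.exp (-2) * (1 - β) * (D * B) ^ (-δ) ≤ (P 1).re := by
  obtain ⟨C, hC, hlower⟩ := exists_sub_le_re_zeta_mul
  refine ⟨2 * C, by linarith, fun {a P B β δ} h hβ hβ1 hδ hneg ↦ ?_⟩
  have hX : 1 ≤ 2 * C * B := by nlinarith [h.one_le_bound]
  set X := 2 * C * B with hXdef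
  have hX0 : 0 < X := by linarith
  have hlog : 0 ≤ 32 / 5 * Real.log X := mul_nonneg (by norm_num) (Real.log_nonneg hX)
  set M := ⌈32 / 5 * Real.log X⌉₊ + 1 with hM
  have hMle : (M : ℝ) ≤ 32 / 5 * Real.log X + 2 := by
    rw [hM, Nat.cast_add_one]
    linarith [Nat.ceil_lt_add_one hlog]
  have hleM : 32 / 5 * Real.log X ≤ M := by
    rw [hM, Nat.cast_add_one]
    linarith [Nat.le_ceil (32 / 5 * Real.log X)]
  have hremainder : C * B * (27 / 32) ^ M ≤ 1 / 2 := by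
    calc C * B * (27 / 32) ^ M = X * (27 / 32) ^ M / 2 := by rw [hXdef]; ring
      _ ≤ X * X⁻¹ / 2 := by gcongr; exact pow_le_inv_of_log_le hX0 hleM
      _ = 1 / 2 := by rw [mul_inv_cancel₀ hX0.ne']
  have hhalf : 1 / 2 ≤ (P 1).re * ((2 - β) ^ M / (1 - β)) := by
    linarith [hlower h hβ hβ1 M (Nat.succ_ne_zero _)]
  have h1β : 0 < 1 - β := by linarith
  have h2β : 0 < 2 - β := by linarith
  have hP : 0 < (P 1).re := pos_of_mul_pos_left (by linarith) (by positivity)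
  rw [← mul_div_assoc, le_div_iff₀ h1β] at hhalf
  rw [Real.rpow_neg hX0.le, Real.exp_neg]
  calc 1 / 2 * (Real.exp 2)⁻¹ * (1 - β) * (X ^ δ)⁻¹
      = 1 / 2 * (1 - β) / (Real.exp 2 * X ^ δ) := by field_simp
    _ ≤ (P 1).re := by
        rw [div_le_iff₀ (by positivity)]
        refine hhalf.trans ?_
        gcongr
        refine (pow_two_sub_le hX0 (by linarith) hβ1.le hMle).trans ?_
        gcongr

end Estermann

section QuadraticCharacters

open DirichletCharacter
open scoped ComplexOrder ArithmeticFunction.zeta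

variable {q r : ℕ} (χ : DirichletCharacter ℂ q) (ψ : DirichletCharacter ℂ r)

/-- A Dirichlet character as an arithmetic function, so with value `0` at `0` in every level. -/
noncomputable def characterFunction : ArithmeticFunction ℂ :=
  toArithmeticFunction fun n ↦ χ n

lemma characterFunction_apply {n : ℕ} (hn : n ≠ 0) : characterFunction χ n = χ n :=
  if_neg hn

lemma characterFunction_prime_pow {p : ℕ} (hp : p.Prime) (k : ℕ) :
    characterFunction χ (p ^ k) = χ p ^ k := by
  rw [characterFunction_apply χ (pow_ne_zero k hp.ne_zero), Nat.cast_pow, map_pow]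

lemma isMultiplicative_characterFunction : (characterFunction χ).IsMultiplicative :=
  isMultiplicative_toArithmeticFunction χ

lemma zetaMul_eq_mul_characterFunction :
    zetaMul χ = (ζ : ArithmeticFunction ℂ) * characterFunction χ :=
  rfl

lemma zetaMul_apply_one : zetaMul χ 1 = 1 :=
  (isMultiplicative_zetaMul χ).map_one

lemma arithmeticFunction_mul_prime_pow (f g : ArithmeticFunction ℂ) {p : ℕ} (hp : p.Prime)
    (k : ℕ) : (f * g) (p ^ k) = ∑ i ∈ Finset.range (k + 1), f (p ^ i) * g (p ^ (k - i)) := by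
  rw [ArithmeticFunction.mul_apply, Nat.sum_divisorsAntidiagonal (f := fun i j ↦ f i * g j),
    Nat.sum_divisors_prime_pow hp]
  refine Finset.sum_congr rfl fun i hi ↦ ?_
  rw [Nat.pow_div (Finset.mem_range_succ_iff.mp hi) hp.pos]

lemma zetaMul_prime_pow {p : ℕ} (hp : p.Prime) (k : ℕ) :
    zetaMul χ (p ^ k) = ∑ i ∈ Finset.range (k + 1), χ p ^ (k - i) := by
  rw [zetaMul_eq_mul_characterFunction, arithmeticFunction_mul_prime_pow _ _ hp]
  refine Finset.sum_congr rfl fun i _ ↦ ?_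
  rw [characterFunction_prime_pow χ hp, ArithmeticFunction.natCoe_apply,
    ArithmeticFunction.zeta_apply_ne (pow_ne_zero i hp.ne_zero), Nat.cast_one, one_mul]

lemma mul_apply_natCast (n : ℕ) : χ.mul ψ n = χ n * ψ n := by
  by_cases h : n.Coprime (q.lcm r)
  · have hcast := Nat.isCoprime_iff_coprime.mpr h
    have hχ := changeLevel_eq_cast_of_dvd' χ (Nat.dvd_lcm_left q r) hcast
    have hψ := changeLevel_eq_cast_of_dvd' ψ (Nat.dvd_lcm_right q r) hcast
    rw [Int.cast_natCast, Int.cast_natCast] at hχ hψ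
    rw [DirichletCharacter.mul, MulChar.mul_apply, hχ, hψ]
  · have hzero {m : ℕ} (φ : DirichletCharacter ℂ m) (hm : ¬ n.Coprime m) : φ n = 0 :=
      φ.map_nonunit (by rwa [ZMod.isUnit_iff_coprime])
    rw [hzero _ h, zero_eq_mul]
    by_contra! hne
    exact h (((Nat.Coprime.mul_right (not_not.mp (mt (hzero χ) hne.1))
      (not_not.mp (mt (hzero ψ) hne.2)))).coprime_dvd_right (Nat.lcm_dvd_mul q r))

/-- The Dirichlet convolution `1 * χ * ψ * χψ`. Its Dirichlet series is
`ζ(s) L(s, χ) L(s, ψ) L(s, χψ)`, and for quadratic `χ` and `ψ` it is nonnegative. -/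
noncomputable def quadraticConvolution : ArithmeticFunction ℂ :=
  zetaMul χ * (characterFunction ψ * characterFunction (χ.mul ψ))

lemma isMultiplicative_quadraticConvolution : (quadraticConvolution χ ψ).IsMultiplicative :=
  (isMultiplicative_zetaMul χ).mul
    ((isMultiplicative_characterFunction ψ).mul (isMultiplicative_characterFunction _))

lemma quadraticConvolution_comm : quadraticConvolution χ ψ = quadraticConvolution ψ χ := by
  have hmul : characterFunction (χ.mul ψ) = characterFunction (ψ.mul χ) := by
    ext n
    rcases eq_or_ne n 0 with rfl | hn
    · rw [ArithmeticFunction.map_zero, ArithmeticFunction.map_zero]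
    · rw [characterFunction_apply _ hn, characterFunction_apply _ hn, mul_apply_natCast,
        mul_apply_natCast, mul_comm]
  rw [quadraticConvolution, quadraticConvolution, hmul, zetaMul_eq_mul_characterFunction,
    zetaMul_eq_mul_characterFunction]
  ring

variable {χ ψ}

lemma quadraticConvolution_prime_pow_nonneg (hχ : χ ^ 2 = 1) {p : ℕ} (hp : p.Prime) (k : ℕ)
    (h : 0 ≤ ψ p ∨ χ p = -1 ∧ ψ p = -1) : 0 ≤ quadraticConvolution χ ψ (p ^ k) := by
  rw [quadraticConvolution, arithmeticFunction_mul_prime_pow _ _ hp]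
  refine Finset.sum_nonneg fun i _ ↦ mul_nonneg (zetaMul_prime_pow_nonneg hχ hp i) ?_
  generalize k - i = j
  rw [arithmeticFunction_mul_prime_pow _ _ hp]
  simp only [characterFunction_prime_pow _ hp, mul_apply_natCast]
  rcases h with hψ | ⟨hχp, hψp⟩
  · calc (0 : ℂ) ≤ ψ p ^ j * zetaMul χ (p ^ j) :=
          mul_nonneg (pow_nonneg hψ j) (zetaMul_prime_pow_nonneg hχ hp j)
      _ = ∑ i ∈ Finset.range (j + 1), ψ p ^ i * (χ p * ψ p) ^ (j - i) := by
          rw [zetaMul_prime_pow χ hp, Finset.mul_sum]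
          refine Finset.sum_congr rfl fun i hi ↦ ?_
          rw [← pow_mul_pow_sub (ψ p) (Finset.mem_range_succ_iff.mp hi), mul_pow]
          ring
  · simp only [hχp, hψp, neg_mul_neg, one_pow, mul_one, neg_one_geom_sum]
    split_ifs
    exacts [le_rfl, zero_le_one]

lemma quadraticConvolution_nonneg (hχ : χ ^ 2 = 1) (hψ : ψ ^ 2 = 1) (n : ℕ) :
    0 ≤ quadraticConvolution χ ψ n := by
  rcases eq_or_ne n 0 with rfl | hn
  · rw [ArithmeticFunction.map_zero]
  rw [(isMultiplicative_quadraticConvolution χ ψ).multiplicative_factorization _ hn]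
  refine Finset.prod_nonneg fun p hp ↦ ?_
  have hp' := Nat.prime_of_mem_primeFactors hp
  rcases MulChar.isQuadratic_iff_sq_eq_one.mpr hψ p with h | h | h
  · exact quadraticConvolution_prime_pow_nonneg hχ hp' _ (.inl h.ge)
  · exact quadraticConvolution_prime_pow_nonneg hχ hp' _ (.inl (h ▸ zero_le_one))
  rcases MulChar.isQuadratic_iff_sq_eq_one.mpr hχ p with h' | h' | h'
  · rw [quadraticConvolution_comm]
    exact quadraticConvolution_prime_pow_nonneg hψ hp' _ (.inl h'.ge)
  · rw [quadraticConvolution_comm]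
    exact quadraticConvolution_prime_pow_nonneg hψ hp' _ (.inl (h' ▸ zero_le_one))
  · exact quadraticConvolution_prime_pow_nonneg hχ hp' _ (.inr ⟨h', h⟩)

variable {s : ℂ}

lemma LSeriesSummable_characterFunction (hs : 1 < s.re) :
    LSeriesSummable (characterFunction χ) s :=
  (LSeriesSummable_congr s fun hn ↦ characterFunction_apply χ hn).mpr
    (LSeriesSummable_of_one_lt_re χ hs)

lemma LSeriesSummable_quadraticConvolution (hs : 1 < s.re) :
    LSeriesSummable (quadraticConvolution χ ψ) s :=
  ArithmeticFunction.LSeriesSummable_mul (LSeriesSummable_zetaMul χ hs)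
    (ArithmeticFunction.LSeriesSummable_mul (LSeriesSummable_characterFunction hs)
      (LSeriesSummable_characterFunction hs))

variable [NeZero q] [NeZero r]

lemma LSeries_characterFunction (hs : 1 < s.re) :
    LSeries (characterFunction χ) s = LFunction χ s := by
  rw [LFunction_eq_LSeries χ hs]
  exact LSeries_congr (fun hn ↦ characterFunction_apply χ hn) s

lemma LSeries_zetaMul (hs : 1 < s.re) :
    LSeries (zetaMul χ) s = riemannZeta s * LFunction χ s := by
  have hζ : LSeriesSummable (fun n ↦ (ζ : ArithmeticFunction ℂ) n) s :=
    ArithmeticFunction.LSeriesSummable_zeta_iff.mpr hs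
  rw [zetaMul_eq_mul_characterFunction,
    ArithmeticFunction.LSeries_mul' hζ (LSeriesSummable_characterFunction hs),
    LSeries_characterFunction hs]
  congr 1
  exact ArithmeticFunction.LSeries_zeta_eq_riemannZeta hs

instance neZero_lcm : NeZero (q.lcm r) :=
  ⟨Nat.lcm_ne_zero (NeZero.ne q) (NeZero.ne r)⟩

lemma LSeries_quadraticConvolution (hs : 1 < s.re) :
    LSeries (quadraticConvolution χ ψ) s =
      riemannZeta s * (LFunction χ s * (LFunction ψ s * LFunction (χ.mul ψ) s)) := by
  have hψ := LSeriesSummable_characterFunction (χ := ψ) hs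
  have hχψ := LSeriesSummable_characterFunction (χ := χ.mul ψ) hs
  rw [quadraticConvolution, ArithmeticFunction.LSeries_mul' (LSeriesSummable_zetaMul χ hs)
    (ArithmeticFunction.LSeriesSummable_mul hψ hχψ), ArithmeticFunction.LSeries_mul' hψ hχψ,
    LSeries_characterFunction hs, LSeries_characterFunction hs, LSeries_zetaMul hs, mul_assoc]

lemma norm_LFunction_le_of_mem_closedBall (hχ : χ ≠ 1)
    (hs : s ∈ Metric.closedBall (2 : ℂ) (4 / 3)) : ‖LFunction χ s‖ ≤ 16 * q := by
  rw [mem_closedBall_iff_norm] at hs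
  have hre : 2 / 3 ≤ s.re := by
    have := (abs_le.mp ((Complex.abs_re_le_norm (s - 2)).trans hs)).1
    rw [Complex.sub_re, Complex.re_ofNat] at this
    linarith
  have hnorm : ‖s‖ ≤ 10 / 3 := by
    have := norm_le_norm_sub_add s 2
    rw [Complex.norm_ofNat] at this
    linarith
  have hq : (1 : ℝ) ≤ q := Nat.one_le_cast.mpr NeZero.one_le
  have hinv : 1 / s.re ≤ 3 / 2 := by
    rw [div_le_iff₀ (by linarith)]
    linarith
  calc ‖LFunction χ s‖ ≤ regularizedLSeriesBound (2 * q) 1 s :=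
        norm_LFunction_le_regularizedLSeriesBound hχ one_pos (by linarith)
    _ = 1 + ‖s‖ * ((2 * q + 1) * (1 / s.re)) := by simp [regularizedLSeriesBound]
    _ ≤ q + 10 / 3 * ((2 * q + q) * (3 / 2)) := by gcongr
    _ = 16 * q := by ring

lemma isZetaProduct_zetaMul (hχ : χ ≠ 1) (hχ2 : χ ^ 2 = 1) :
    IsZetaProduct (zetaMul χ) (LFunction χ) (16 * q) where
  coeff_nonneg := zetaMul_nonneg hχ2
  coeff_one := zetaMul_apply_one χ
  summable _ hs := LSeriesSummable_zetaMul χ hs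
  LSeries_eq _ hs := LSeries_zetaMul hs
  differentiable := differentiable_LFunction hχ
  norm_le _ hs := norm_LFunction_le_of_mem_closedBall hχ hs
  one_le_bound := by
    have : (1 : ℝ) ≤ q := Nat.one_le_cast.mpr NeZero.one_le
    linarith

lemma isZetaProduct_quadraticConvolution (hχ : χ ≠ 1) (hχ2 : χ ^ 2 = 1) (hψ : ψ ≠ 1)
    (hψ2 : ψ ^ 2 = 1) (hχψ : χ.mul ψ ≠ 1) :
    IsZetaProduct (quadraticConvolution χ ψ)
      (fun s ↦ LFunction χ s * (LFunction ψ s * LFunction (χ.mul ψ) s))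
      (4096 * (q * r) ^ 2) where
  coeff_nonneg := quadraticConvolution_nonneg hχ2 hψ2
  coeff_one := (isMultiplicative_quadraticConvolution χ ψ).map_one
  summable _ hs := LSeriesSummable_quadraticConvolution hs
  LSeries_eq _ hs := LSeries_quadraticConvolution hs
  differentiable := (differentiable_LFunction hχ).mul
    ((differentiable_LFunction hψ).mul (differentiable_LFunction hχψ))
  norm_le s hs := by
    have hlcm : (q.lcm r : ℝ) ≤ q * r := by
      exact_mod_cast Nat.le_of_dvd (Nat.mul_pos NeZero.one_le NeZero.one_le) (Nat.lcm_dvd_mul q r)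
    rw [norm_mul, norm_mul]
    calc _ ≤ (16 * q : ℝ) * ((16 * r) * (16 * q.lcm r)) := by
          gcongr
          exacts [norm_LFunction_le_of_mem_closedBall hχ hs,
            norm_LFunction_le_of_mem_closedBall hψ hs, norm_LFunction_le_of_mem_closedBall hχψ hs]
      _ ≤ (16 * q : ℝ) * ((16 * r) * (16 * (q * r))) := by gcongr
      _ = 4096 * (q * r) ^ 2 := by ring
  one_le_bound := by
    have : (1 : ℝ) ≤ q * r := by exact_mod_cast Nat.mul_pos (NeZero.one_le (n := q)) NeZero.one_le
    nlinarith

end QuadraticCharacters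

section Siegel

open DirichletCharacter
open scoped ComplexConjugate

variable {q r : ℕ} [NeZero q] [NeZero r] {χ : DirichletCharacter ℂ q} {ψ : DirichletCharacter ℂ r}
  {β δ : ℝ}

lemma LFunction_eq_conj (hχ : χ ≠ 1) (hχ2 : χ ^ 2 = 1) {s : ℂ} (hs : 0 < s.re) :
    LFunction χ s = conj (LFunction χ (conj s)) := by
  have hval (a : ZMod q) : conj (χ a) = χ a := by
    rcases MulChar.isQuadratic_iff_sq_eq_one.mpr hχ2 a with h | h | h <;> simp [h]
  refine eqOn_of_differentiable_of_eqOn_one_lt_re (G := fun s ↦ conj (LFunction χ (conj s)))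
    (differentiable_LFunction hχ) (fun z _ ↦ ?_) (fun z hz ↦ ?_) hs
  · have := (differentiable_LFunction hχ (conj z)).conj_conj
    rw [Complex.conj_conj] at this
    exact this.differentiableWithinAt
  · have hz : 1 < z.re := hz
    simp only [LFunction_eq_LSeries χ hz,
      LFunction_eq_LSeries χ (hz.trans_eq (Complex.conj_re z).symm)]
    rw [LSeries, LSeries, Complex.conj_tsum]
    refine tsum_congr fun n ↦ ?_
    rcases eq_or_ne n 0 with rfl | hn
    · rw [LSeries.term_zero, LSeries.term_zero, map_zero]
    · rw [LSeries.term_of_ne_zero hn, LSeries.term_of_ne_zero hn, map_div₀, hval,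
        Complex.cpow_conj _ _ (by rw [Complex.natCast_arg]; exact Real.pi_pos.ne),
        Complex.conj_conj, Complex.conj_natCast]

lemma LFunction_ofReal_eq_re (hχ : χ ≠ 1) (hχ2 : χ ^ 2 = 1) {x : ℝ} (hx : 0 < x) :
    LFunction χ x = ((LFunction χ x).re : ℂ) := by
  have := LFunction_eq_conj hχ hχ2 (s := x) (by simpa using hx)
  rw [Complex.conj_ofReal] at this
  exact (Complex.conj_eq_iff_re.mp this.symm).symm

lemma re_LFunction_two_pos (hχ2 : χ ^ 2 = 1) : 0 < (LFunction χ 2).re := by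
  have h := one_le_re_LSeries (x := 2) (zetaMul_nonneg hχ2) (zetaMul_apply_one χ)
    (LSeriesSummable_zetaMul χ (by simp))
  rw [Complex.ofReal_ofNat, LSeries_zetaMul (by simp), riemannZeta_two,
    show (Real.pi : ℂ) ^ 2 / 6 = ((Real.pi ^ 2 / 6 : ℝ) : ℂ) by push_cast; rfl,
    Complex.re_ofReal_mul] at h
  exact pos_of_mul_pos_right (zero_lt_one.trans_le h) (by positivity)

lemma re_LFunction_pos_of_forall_ne_zero (hχ : χ ≠ 1) (hχ2 : χ ^ 2 = 1) (hβ : 0 < β) (hβ1 : β ≤ 1)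
    (hne : ∀ x : ℝ, β ≤ x → x < 1 → LFunction χ x ≠ 0) : 0 < (LFunction χ β).re := by
  by_contra! hneg
  have hcont : ContinuousOn (fun x : ℝ ↦ (LFunction χ x).re) (Set.Icc β 2) :=
    (Complex.continuous_re.comp ((differentiable_LFunction hχ).continuous.comp
      Complex.continuous_ofReal)).continuousOn
  obtain ⟨x, hx, hx0 : (LFunction χ x).re = 0⟩ := intermediate_value_Icc (by linarith) hcont
    ⟨hneg, by simpa using (re_LFunction_two_pos hχ2).le⟩
  have hL : LFunction χ x = 0 := by
    rw [LFunction_ofReal_eq_re hχ hχ2 (hβ.trans_le hx.1), hx0, Complex.ofReal_zero]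
  rcases lt_or_ge x 1 with hx1 | hx1
  · exact hne x hx.1 hx1 hL
  · exact LFunction_ne_zero_of_one_le_re χ (.inl hχ) (by simpa using hx1) hL

lemma exists_re_riemannZeta_nonpos :
    ∃ η : ℝ, 0 < η ∧ ∀ β : ℝ, 1 - η ≤ β → β < 1 → (riemannZeta β).re ≤ 0 := by
  have hcont : ContinuousAt (fun x : ℝ ↦ (LFunctionTrivChar₁ 1 x).re) 1 :=
    (Complex.continuous_re.comp ((differentiable_LFunctionTrivChar₁ 1).continuous.comp
      Complex.continuous_ofReal)).continuousAt
  have hpos : ∀ᶠ x : ℝ in 𝓝 1, 0 < (LFunctionTrivChar₁ 1 x).re :=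
    hcont.eventually (lt_mem_nhds (by simp))
  obtain ⟨η, hη, hball⟩ := Metric.eventually_nhds_iff.mp hpos
  refine ⟨η / 2, by positivity, fun β hβ hβ1 ↦ ?_⟩
  have h := hball (y := β) (by rw [Real.dist_eq, abs_lt]; constructor <;> linarith)
  rw [LFunctionTrivChar₁_modOne_of_ne_one (by exact_mod_cast hβ1.ne), ← Complex.ofReal_one,
    ← Complex.ofReal_sub, Complex.re_ofReal_mul] at h
  exact (neg_of_mul_pos_right h (by linarith)).le

lemma exists_le_norm_LFunction_one_of_re_nonpos (hβ : 7 / 8 ≤ β) (hβ1 : β < 1)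
    (hβδ : 32 / 5 * (1 - β) ≤ δ) : ∃ c : ℝ, 0 < c ∧
      ∀ {q : ℕ} [NeZero q] {χ : DirichletCharacter ℂ q}, χ ≠ 1 → χ ^ 2 = 1 →
        (riemannZeta β * LFunction χ β).re ≤ 0 → c * (q : ℝ) ^ (-δ) ≤ ‖LFunction χ 1‖ := by
  obtain ⟨D, hD, hlower⟩ := exists_le_re_of_re_zeta_mul_nonpos
  have : 0 < 1 - β := by linarith
  refine ⟨1 / 2 * Real.exp (-2) * (1 - β) * (D * 16) ^ (-δ), by positivity,
    fun {q _ χ} hχ hχ2 hneg ↦ ?_⟩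
  rw [mul_assoc _ ((D * 16) ^ (-δ)), ← Real.mul_rpow (by linarith) (by positivity), mul_assoc D]
  exact (hlower (isZetaProduct_zetaMul hχ hχ2) hβ hβ1 hβδ hneg).trans (Complex.re_le_norm _)

lemma exists_le_norm_LFunction_one_mul_of_eq_zero : ∃ D : ℝ, 1 ≤ D ∧
    ∀ {q r : ℕ} [NeZero q] [NeZero r] {χ : DirichletCharacter ℂ q} {ψ : DirichletCharacter ℂ r}
      {β δ : ℝ}, χ ≠ 1 → χ ^ 2 = 1 → ψ ≠ 1 → ψ ^ 2 = 1 → χ.mul ψ ≠ 1 → 7 / 8 ≤ β → β < 1 →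
        32 / 5 * (1 - β) ≤ δ → LFunction χ β = 0 →
          1 / 2 * Real.exp (-2) * (1 - β) * (D * (q * r) ^ 2) ^ (-δ) ≤
            ‖LFunction χ 1‖ * (‖LFunction ψ 1‖ * ‖LFunction (χ.mul ψ) 1‖) := by
  obtain ⟨D, hD, hlower⟩ := exists_le_re_of_re_zeta_mul_nonpos
  refine ⟨D * 4096, by linarith, fun {q r _ _ χ ψ β δ} hχ hχ2 hψ hψ2 hχψ hβ hβ1 hδ hzero ↦ ?_⟩
  rw [mul_assoc D, ← norm_mul, ← norm_mul]
  exact (hlower (isZetaProduct_quadraticConvolution hχ hχ2 hψ hψ2 hχψ) hβ hβ1 hδ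
    (by simp [hzero])).trans (Complex.re_le_norm _)

lemma exists_norm_LFunction_one_le (hδ : 0 < δ) : ∃ C : ℝ, 0 < C ∧
    ∀ {q : ℕ} [NeZero q] {χ : DirichletCharacter ℂ q}, χ ≠ 1 →
      ‖LFunction χ 1‖ ≤ C * (q : ℝ) ^ δ := by
  have hε : 0 < min (1 / 3) (δ / 2) := by positivity
  obtain ⟨C, hC, hupper⟩ := exists_norm_normalizedLFunction_le hε (min_le_left _ _)
  refine ⟨C * 4 ^ δ, by positivity, fun {q _ χ} hχ ↦ ?_⟩
  have h := hupper q χ 1 (by rw [Complex.one_re]; linarith) (by norm_num)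
  rw [normalizedLFunction_of_ne_one hχ] at h
  have hT : analyticConductor q 1 = 4 * q := by simp [analyticConductor, mul_comm]
  have hone : 1 ≤ analyticConductor q 1 := by linarith [four_le_analyticConductor (q := q) (s := 1)]
  calc ‖LFunction χ 1‖ ≤ C * analyticConductor q 1 ^ (2 * min (1 / 3) (δ / 2)) := h
    _ ≤ C * analyticConductor q 1 ^ δ := by
        gcongr
        linarith [min_le_right (1 / 3) (δ / 2)]
    _ = C * 4 ^ δ * (q : ℝ) ^ δ := by
        rw [hT, Real.mul_rpow (by norm_num) (by positivity), mul_assoc]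

omit [NeZero q] in
lemma one_sub_mul_natCast_cpow_ne_zero {p : ℕ} (hp : p.Prime) {s : ℂ} (hs : 0 < s.re) :
    1 - χ p * (p : ℂ) ^ (-s) ≠ 0 := by
  intro h
  have hlt : ‖χ p * (p : ℂ) ^ (-s)‖ < 1 := by
    rw [norm_mul, Complex.norm_natCast_cpow_of_pos hp.pos, Complex.neg_re]
    exact (mul_le_of_le_one_left (by positivity) (norm_le_one χ p)).trans_lt
      (Real.rpow_lt_one_of_one_lt_of_neg (by exact_mod_cast hp.one_lt) (by linarith))
  rw [← sub_eq_zero.mp h, norm_one] at hlt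
  exact hlt.false

lemma LFunction_eq_zero_of_mul_eq_one (hχ : χ ≠ 1) (hχ2 : χ ^ 2 = 1) (hψ : ψ ≠ 1)
    (hχψ : χ.mul ψ = 1) {s : ℂ} (hs : 0 < s.re) (hzero : LFunction χ s = 0) :
    LFunction ψ s = 0 := by
  have hχψ' : changeLevel (Nat.dvd_lcm_left q r) χ = changeLevel (Nat.dvd_lcm_right q r) ψ := by
    rw [DirichletCharacter.mul, mul_eq_one_iff_eq_inv] at hχψ
    rw [← inv_inv (changeLevel _ ψ), ← hχψ, eq_inv_iff_mul_eq_one, ← sq, ← map_pow, hχ2, map_one]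
  have h := LFunction_changeLevel (Nat.dvd_lcm_right q r) ψ (s := s) (.inl hψ)
  rw [← hχψ', LFunction_changeLevel _ χ (.inl hχ), hzero, zero_mul, zero_eq_mul] at h
  refine h.resolve_right (Finset.prod_ne_zero_iff.mpr fun p hp ↦ ?_)
  exact one_sub_mul_natCast_cpow_ne_zero (Nat.prime_of_mem_primeFactors hp) hs

lemma exists_le_norm_LFunction_one_of_eq_zero (hδ : 0 < δ) (hχ : χ ≠ 1) (hχ2 : χ ^ 2 = 1)
    (hβ : 7 / 8 ≤ β) (hβ1 : β < 1) (hβδ : 32 / 5 * (1 - β) ≤ δ / 4) (hzero : LFunction χ β = 0) :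
    ∃ c : ℝ, 0 < c ∧ ∀ {r : ℕ} [NeZero r] {ψ : DirichletCharacter ℂ r}, ψ ≠ 1 → ψ ^ 2 = 1 →
      χ.mul ψ ≠ 1 → c * (r : ℝ) ^ (-δ) ≤ ‖LFunction ψ 1‖ := by
  obtain ⟨D, hD, hlower⟩ := exists_le_norm_LFunction_one_mul_of_eq_zero
  obtain ⟨C, hC, hupper⟩ := exists_norm_LFunction_one_le (half_pos hδ)
  have hL : 0 < ‖LFunction χ 1‖ :=
    norm_pos_iff.mpr (LFunction_ne_zero_of_one_le_re χ (.inl hχ) le_rfl)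
  have hq : (0 : ℝ) < q := Nat.cast_pos.mpr NeZero.one_le
  have : 0 < 1 - β := by linarith
  set κ := 1 / 2 * Real.exp (-2) * (1 - β)
  refine ⟨κ * D ^ (-(δ / 4)) * (q : ℝ) ^ (-δ) / (‖LFunction χ 1‖ * C), by positivity,
    fun {r _ ψ} hψ hψ2 hχψ ↦ ?_⟩
  have hr : (0 : ℝ) < r := Nat.cast_pos.mpr NeZero.one_le
  have hlcm : (q.lcm r : ℝ) ≤ q * r := by
    exact_mod_cast Nat.le_of_dvd (Nat.mul_pos NeZero.one_le NeZero.one_le) (Nat.lcm_dvd_mul q r)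
  have hsplit : (D * ((q : ℝ) * r) ^ 2) ^ (-(δ / 4)) =
      D ^ (-(δ / 4)) * (((q : ℝ) * r) ^ (-δ) * ((q : ℝ) * r) ^ (δ / 2)) := by
    rw [Real.mul_rpow (by linarith) (by positivity), ← Real.rpow_natCast,
      ← Real.rpow_mul (by positivity), ← Real.rpow_add (by positivity)]
    congr 2
    push_cast
    ring
  have hbound : κ * (D ^ (-(δ / 4)) * (((q : ℝ) * r) ^ (-δ) * ((q : ℝ) * r) ^ (δ / 2))) ≤
      ‖LFunction χ 1‖ * C * ‖LFunction ψ 1‖ * ((q : ℝ) * r) ^ (δ / 2) := by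
    rw [← hsplit]
    calc κ * (D * ((q : ℝ) * r) ^ 2) ^ (-(δ / 4))
        ≤ ‖LFunction χ 1‖ * (‖LFunction ψ 1‖ * ‖LFunction (χ.mul ψ) 1‖) :=
          hlower hχ hχ2 hψ hψ2 hχψ hβ hβ1 hβδ hzero
      _ ≤ ‖LFunction χ 1‖ * (‖LFunction ψ 1‖ * (C * ((q : ℝ) * r) ^ (δ / 2))) := by
          gcongr
          exact (hupper hχψ).trans (by gcongr)
      _ = ‖LFunction χ 1‖ * C * ‖LFunction ψ 1‖ * ((q : ℝ) * r) ^ (δ / 2) := by ring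
  rw [← mul_assoc (D ^ _), ← mul_assoc κ] at hbound
  have := le_of_mul_le_mul_right hbound (by positivity)
  rw [Real.mul_rpow hq.le hr.le] at this
  rw [div_mul_eq_mul_div, div_le_iff₀ (by positivity)]
  linarith

-- Siegel's theorem: either no quadratic `L`-function vanishes close to `1`, and one argues with a
-- fixed `β` close to `1`, or one exceptional zero serves as `β` for all the other characters.
theorem exists_le_norm_LFunction_one (hδ : 0 < δ) : ∃ c : ℝ, 0 < c ∧
    ∀ (q : ℕ) [NeZero q] (χ : DirichletCharacter ℂ q), χ ≠ 1 → χ ^ 2 = 1 →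
      c * (q : ℝ) ^ (-δ) ≤ ‖LFunction χ 1‖ := by
  obtain ⟨η₀, hη₀, hζ⟩ := exists_re_riemannZeta_nonpos
  set η := min η₀ (min (1 / 8) (δ / 4 / (32 / 5)))
  have hη : 0 < η := by positivity
  have hη₀' : η ≤ η₀ := min_le_left _ _
  have hη8 : η ≤ 1 / 8 := (min_le_right _ _).trans (min_le_left _ _)
  have hηδ : 32 / 5 * η ≤ δ / 4 := by
    rw [mul_comm, ← le_div_iff₀ (by norm_num)]
    exact (min_le_right _ _).trans (min_le_right _ _)
  by_cases! hexc : ∃ (q : ℕ) (_ : NeZero q) (χ : DirichletCharacter ℂ q) (β : ℝ),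
    χ ≠ 1 ∧ χ ^ 2 = 1 ∧ 1 - η < β ∧ β < 1 ∧ LFunction χ β = 0
  · obtain ⟨q₁, _, χ₁, β, hχ₁, hχ₁2, hβη, hβ1, hzero⟩ := hexc
    obtain ⟨c, hc, hlower⟩ := exists_le_norm_LFunction_one_of_eq_zero hδ hχ₁ hχ₁2
      (by linarith) hβ1 (by linarith) hzero
    obtain ⟨c', hc', hlower'⟩ := exists_le_norm_LFunction_one_of_re_nonpos (β := β) (δ := δ)
      (by linarith) hβ1 (by linarith)
    refine ⟨min c c', lt_min hc hc', fun q _ χ hχ hχ2 ↦ ?_⟩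
    by_cases hmul : χ₁.mul χ = 1
    · have hzero' := LFunction_eq_zero_of_mul_eq_one hχ₁ hχ₁2 hχ hmul
        (by rw [Complex.ofReal_re]; linarith) hzero
      refine le_trans ?_ (hlower' hχ hχ2 (by simp [hzero']))
      gcongr
      exact min_le_right _ _
    · refine le_trans ?_ (hlower hχ hχ2 hmul)
      gcongr
      exact min_le_left _ _
  · obtain ⟨c, hc, hlower⟩ := exists_le_norm_LFunction_one_of_re_nonpos (β := 1 - η / 2) (δ := δ)
      (by linarith) (by linarith) (by linarith)
    refine ⟨c, hc, fun q _ χ hχ hχ2 ↦ hlower hχ hχ2 ?_⟩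
    have hL := re_LFunction_pos_of_forall_ne_zero (β := 1 - η / 2) hχ hχ2 (by linarith)
      (by linarith) fun x hx hx1 ↦ hexc q inferInstance χ x hχ hχ2 (by linarith) hx1
    rw [LFunction_ofReal_eq_re hχ hχ2 (by linarith), Complex.re_mul_ofReal]
    exact mul_nonpos_of_nonpos_of_nonneg (hζ _ (by linarith) (by linarith)) hL.le

end Siegel

section LowerBounds

open DirichletCharacter

variable {q : ℕ} {χ : DirichletCharacter ℂ q} {s : ℂ} {ε δ : ℝ}

lemma rpow_ofNat_mul {x : ℝ} (hx : 0 ≤ x) (n : ℕ) [n.AtLeastTwo] (y : ℝ) :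
    x ^ ((OfNat.ofNat n : ℝ) * y) = (x ^ y) ^ (OfNat.ofNat n : ℕ) := by
  rw [mul_comm, Real.rpow_mul hx, Real.rpow_ofNat]

lemma one_div_card_add_one_le_prod_one_sub_inv (S : Finset ℕ) (hS : ∀ p ∈ S, 2 ≤ p) :
    (1 : ℝ) / (S.card + 1) ≤ ∏ p ∈ S, (1 - (p : ℝ)⁻¹) := by
  induction S using Finset.induction_on_max with
  | empty => simp
  | insert a S hmax ih =>
    have ha : a ∉ S := fun h ↦ (hmax a h).false
    have hcard : S.card + 2 ≤ a := by
      have hsub : S ⊆ Finset.Ico 2 a := fun p hp ↦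
        Finset.mem_Ico.mpr ⟨hS p (Finset.mem_insert_of_mem hp), hmax p hp⟩
      have := Finset.card_le_card hsub
      have := hS a (Finset.mem_insert_self _ _)
      rw [Nat.card_Ico] at *
      omega
    rw [Finset.prod_insert ha, Finset.card_insert_of_notMem ha]
    calc (1 : ℝ) / ((S.card + 1 : ℕ) + 1)
        = (1 - ((S.card : ℝ) + 2)⁻¹) * (1 / (S.card + 1)) := by
          push_cast
          field_simp
          ring
      _ ≤ (1 - (a : ℝ)⁻¹) * ∏ p ∈ S, (1 - (p : ℝ)⁻¹) := by
          gcongr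
          · rw [sub_nonneg]
            exact inv_le_one_of_one_le₀ (by exact_mod_cast (by omega : 1 ≤ a))
          · exact_mod_cast hcard
          · exact ih fun p hp ↦ hS p (Finset.mem_insert_of_mem hp)

lemma exists_le_prod_primeFactors_one_sub_inv (hδ : 0 < δ) : ∃ c : ℝ, 0 < c ∧
    ∀ (q : ℕ) [NeZero q], c * (q : ℝ) ^ (-δ) ≤ ∏ p ∈ q.primeFactors, (1 - (p : ℝ)⁻¹) := by
  refine ⟨(1 + 2 / δ)⁻¹, by positivity, fun q _ ↦ ?_⟩
  have hq : (1 : ℝ) ≤ q := by exact_mod_cast NeZero.one_le (n := q)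
  have htwo {p : ℕ} (hp : p ∈ q.primeFactors) : 2 ≤ p := (Nat.prime_of_mem_primeFactors hp).two_le
  have hcard : (q.primeFactors.card : ℝ) ≤ 2 / δ * (q : ℝ) ^ δ := by
    have hpow : (2 : ℝ) ^ q.primeFactors.card ≤ q := by
      exact_mod_cast (Finset.pow_card_le_prod _ _ _ fun p hp ↦ htwo hp).trans
        (Nat.le_of_dvd NeZero.one_le (Nat.prod_primeFactors_dvd q))
    have hlog : q.primeFactors.card * Real.log 2 ≤ (q : ℝ) ^ δ / δ := by
      rw [← Real.log_pow]
      exact (Real.log_le_log (by positivity) hpow).trans (Real.log_le_rpow_div (by positivity) hδ)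
    have : (0 : ℝ) ≤ q.primeFactors.card := by positivity
    rw [div_mul_eq_mul_div, mul_div_assoc]
    nlinarith [Real.log_two_gt_d9]
  refine le_trans ?_ (one_div_card_add_one_le_prod_one_sub_inv _ fun p hp ↦ htwo hp)
  rw [Real.rpow_neg (by positivity), ← mul_inv, ← one_div]
  gcongr
  linarith [Real.one_le_rpow hq hδ.le]

lemma norm_normalizedLFunction_one_one [NeZero q] :
    ‖normalizedLFunction (1 : DirichletCharacter ℂ q) 1‖ =
      (∏ p ∈ q.primeFactors, (1 - (p : ℝ)⁻¹)) / 2 := by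
  have hprod : 0 ≤ ∏ p ∈ q.primeFactors, (1 - (p : ℝ)⁻¹) := Finset.prod_nonneg fun p hp ↦
    sub_nonneg.mpr (inv_le_one_of_one_le₀
      (by exact_mod_cast (Nat.prime_of_mem_primeFactors hp).one_le))
  have hcast : ∏ p ∈ q.primeFactors, (1 - (p : ℂ)⁻¹) =
      ((∏ p ∈ q.primeFactors, (1 - (p : ℝ)⁻¹) : ℝ) : ℂ) := by
    push_cast
    rfl
  simp only [normalizedLFunction_one, LFunctionTrivChar₁, Function.update_self, norm_div, hcast,
    Complex.norm_of_nonneg hprod, one_add_one_eq_two, Complex.norm_ofNat]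

lemma exists_le_norm_normalizedLFunction_one (hδ : 0 < δ) : ∃ c : ℝ, 0 < c ∧
    ∀ (q : ℕ) [NeZero q] (χ : DirichletCharacter ℂ q), χ ^ 2 = 1 →
      c * (q : ℝ) ^ (-δ) ≤ ‖normalizedLFunction χ 1‖ := by
  obtain ⟨c₁, hc₁, hsiegel⟩ := exists_le_norm_LFunction_one hδ
  obtain ⟨c₂, hc₂, htriv⟩ := exists_le_prod_primeFactors_one_sub_inv hδ
  refine ⟨min c₁ (c₂ / 2), by positivity, fun q _ χ hχ2 ↦ ?_⟩
  by_cases hχ : χ = 1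
  · rw [hχ, norm_normalizedLFunction_one_one]
    calc min c₁ (c₂ / 2) * (q : ℝ) ^ (-δ) ≤ c₂ / 2 * (q : ℝ) ^ (-δ) := by
          gcongr
          exact min_le_right _ _
      _ = c₂ * (q : ℝ) ^ (-δ) / 2 := by ring
      _ ≤ (∏ p ∈ q.primeFactors, (1 - (p : ℝ)⁻¹)) / 2 := by
          gcongr
          exact htriv q
  · rw [normalizedLFunction_of_ne_one hχ]
    refine le_trans ?_ (hsiegel q χ hχ hχ2)
    gcongr
    exact min_le_left _ _

open Classical in
/-- The factor `r(χ, s)` with `r(χ, s) L(χ, s) = normalizedLFunction χ s`: it removes the pole at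
`1` of the trivial character. -/
noncomputable def poleFactor (χ : DirichletCharacter ℂ q) (s : ℂ) : ℂ :=
  if χ = 1 then (s - 1) / (s + 1) else 1

lemma poleFactor_mul_LFunction [NeZero q] (χ : DirichletCharacter ℂ q) (hs : 1 < s.re) :
    poleFactor χ s * LFunction χ s = normalizedLFunction χ s := by
  by_cases hχ : χ = 1
  · subst hχ
    have hs1 : s ≠ 1 := by
      rintro rfl
      simp at hs
    simp only [poleFactor, if_true, normalizedLFunction_one, LFunctionTrivChar₁,
      Function.update_of_ne hs1, LFunctionTrivChar]
    ring
  · rw [poleFactor, if_neg hχ, one_mul, normalizedLFunction_of_ne_one hχ]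

lemma differentiableAt_poleFactor (χ : DirichletCharacter ℂ q) (hs : 0 < s.re) :
    DifferentiableAt ℂ (poleFactor χ) s := by
  unfold poleFactor
  split_ifs
  · exact DifferentiableAt.div (by fun_prop) (by fun_prop) (add_one_ne_zero_of_re_pos hs)
  · fun_prop

lemma norm_poleFactor_le_one (χ : DirichletCharacter ℂ q) (hs : 0 < s.re) :
    ‖poleFactor χ s‖ ≤ 1 := by
  rw [poleFactor]
  split_ifs
  · rw [norm_div]
    exact div_le_one_of_le₀ (norm_sub_one_le_norm_add_one hs) (norm_nonneg _)
  · rw [norm_one]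

lemma div_three_le_norm_poleFactor {τ : ℝ} (hτ : 0 < τ) (hτ1 : τ ≤ 1) (hs : 0 < s.re)
    (h : χ ≠ 1 ∨ τ ≤ ‖s - 1‖) : τ / 3 ≤ ‖poleFactor χ s‖ := by
  rw [poleFactor]
  split_ifs with hχ
  · have hτs : τ ≤ ‖s - 1‖ := h.resolve_left (· hχ)
    have hadd : ‖s + 1‖ ≤ ‖s - 1‖ + 2 := by
      have := norm_add_le (s - 1) 2
      rwa [Complex.norm_ofNat, show s - 1 + 2 = s + 1 by ring] at this
    rw [norm_div, le_div_iff₀ (norm_pos_iff.mpr (add_one_ne_zero_of_re_pos hs))]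
    nlinarith [norm_nonneg (s + 1)]
  · rw [norm_one]
    linarith

lemma norm_LFunction_le_normalizedLFunction_mul [NeZero q] {τ : ℝ} (hτ : 0 < τ) (hτ1 : τ ≤ 1)
    (hs : 1 < s.re) (h : χ ≠ 1 ∨ τ ≤ ‖s - 1‖) :
    ‖LFunction χ s‖ ≤ ‖normalizedLFunction χ s‖ * (3 / τ) := by
  have hlower := div_three_le_norm_poleFactor hτ hτ1 (by linarith) h
  rw [← poleFactor_mul_LFunction χ hs, norm_mul, ← div_le_iff₀ (by positivity), div_div_eq_mul_div,
    mul_div_assoc, mul_comm]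
  gcongr

lemma exists_norm_LFunction_le_div (hε : 0 < ε) (hε' : ε ≤ 1 / 3) : ∃ C : ℝ, 1 ≤ C ∧
    ∀ (q : ℕ) [NeZero q] (χ : DirichletCharacter ℂ q) (s : ℂ) (τ : ℝ), 1 < s.re → s.re ≤ 4 →
      0 < τ → τ ≤ 1 → (χ ≠ 1 ∨ τ ≤ ‖s - 1‖) →
        ‖LFunction χ s‖ ≤ C * analyticConductor q s ^ (2 * ε) / τ := by
  obtain ⟨C, hC, hupper⟩ := exists_norm_normalizedLFunction_le hε hε'
  refine ⟨C * 3, by linarith, fun q _ χ s τ hs hs4 hτ hτ1 h ↦ ?_⟩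
  calc ‖LFunction χ s‖ ≤ ‖normalizedLFunction χ s‖ * (3 / τ) :=
        norm_LFunction_le_normalizedLFunction_mul hτ hτ1 hs h
    _ ≤ C * analyticConductor q s ^ (2 * ε) * (3 / τ) := by
        gcongr
        exact hupper q χ s (by linarith) hs4
    _ = C * 3 * analyticConductor q s ^ (2 * ε) / τ := by ring

lemma analyticConductor_rpow_le_of_abs_im_le [NeZero q] {z : ℂ} (hδ : 0 ≤ δ) (hδ1 : δ ≤ 1)
    (h : |z.im| ≤ 2 * |s.im|) : analyticConductor q z ^ δ ≤ 2 * analyticConductor q s ^ δ := by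
  have hz := four_le_analyticConductor (q := q) (s := z)
  have hs := four_le_analyticConductor (q := q) (s := s)
  refine (Real.rpow_le_rpow (by linarith) ?_ hδ).trans (two_mul_rpow_le (by linarith) hδ1)
  rw [analyticConductor, analyticConductor, mul_left_comm]
  gcongr
  linarith

lemma one_le_norm_LFunction_mul [NeZero q] (χ : DirichletCharacter ℂ q) (hs : 1 < s.re) :
    1 ≤ ‖LFunction (1 : DirichletCharacter ℂ q) s.re‖ ^ 3 * ‖LFunction χ s‖ ^ 4 *
      ‖LFunction (χ ^ 2) (s + Complex.I * s.im)‖ := by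
  have hproduct := norm_LFunction_product_ge_one χ (sub_pos.mpr hs) s.im
  have hre : 1 + ((s.re - 1 : ℝ) : ℂ) = s.re := by
    push_cast
    ring
  rwa [mul_assoc 2, two_mul, ← add_assoc, hre, mul_comm Complex.I, Complex.re_add_im,
    mul_comm _ Complex.I, norm_mul, norm_mul, norm_pow, norm_pow] at hproduct

-- The inequality `3 + 4 cos θ + cos 2θ ≥ 0`, away from the possible pole of `L(χ², ·)`.
lemma exists_le_norm_normalizedLFunction_pow_four (hε : 0 < ε) (hε' : ε ≤ 1 / 3) {κ : ℝ}
    (hκ : 0 < κ) (hκ1 : κ ≤ 1) : ∃ d : ℝ, 0 < d ∧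
      ∀ (q : ℕ) [NeZero q] (χ : DirichletCharacter ℂ q) (s : ℂ), 1 < s.re → s.re ≤ 2 →
        (χ ^ 2 ≠ 1 ∨ κ * analyticConductor q s ^ (-(3 * ε)) ≤ ‖s - 1‖) →
          d * (s.re - 1) ^ 3 * analyticConductor q s ^ (-(23 * ε)) ≤
            ‖normalizedLFunction χ s‖ ^ 4 := by
  obtain ⟨C, hC, hupper⟩ := exists_norm_LFunction_le_div hε hε'
  refine ⟨κ ^ 5 / (1296 * C ^ 4), by positivity, fun q _ χ s hs hs2 h ↦ ?_⟩
  have hT := four_le_analyticConductor (q := q) (s := s)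
  have hupper' {ψ : DirichletCharacter ℂ q} {z : ℂ} {τ : ℝ} (hre : z.re = s.re)
      (him : |z.im| ≤ 2 * |s.im|) (hτ : 0 < τ) (hτ1 : τ ≤ 1) (h : ψ ≠ 1 ∨ τ ≤ ‖z - 1‖) :
      ‖LFunction ψ z‖ ≤ C * (2 * analyticConductor q s ^ (2 * ε)) / τ := by
    refine (hupper q ψ z τ (by linarith) (by linarith) hτ hτ1 h).trans ?_
    gcongr
    exact analyticConductor_rpow_le_of_abs_im_le (by linarith) (by linarith) him
  have hx : 0 < s.re - 1 := by linarith
  set τ := κ * analyticConductor q s ^ (-(3 * ε))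
  have hτ : 0 < τ := by positivity
  have hτ1 : τ ≤ 1 := mul_le_one₀ hκ1 (by positivity)
    (Real.rpow_le_one_of_one_le_of_nonpos (by linarith) (by linarith))
  have hbound : 1 ≤ (C * (2 * analyticConductor q s ^ (2 * ε)) / (s.re - 1)) ^ 3 *
      (‖normalizedLFunction χ s‖ * (3 / τ)) ^ 4 *
        (C * (2 * analyticConductor q s ^ (2 * ε)) / τ) := by
    refine (one_le_norm_LFunction_mul χ hs).trans ?_
    gcongr
    · refine hupper' (by simp) (by simp) hx (by linarith) (.inr ?_)
      exact (le_abs_self _).trans (Complex.abs_re_le_norm (s.re - 1))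
    · refine norm_LFunction_le_normalizedLFunction_mul hτ hτ1 hs (h.imp_left ?_)
      rintro hχ2 rfl
      exact hχ2 (one_pow 2)
    · refine hupper' (by simp) (by simp [← two_mul, abs_mul]) hτ hτ1 (h.imp_right fun h ↦ ?_)
      exact h.trans <| norm_le_norm_of_abs_re_le_of_abs_im_le (by simp)
        (by simp [← two_mul, abs_mul, le_mul_of_one_le_left])
  have hT0 : 0 ≤ analyticConductor q s := by linarith
  have hA : 0 < analyticConductor q s ^ ε := by positivity
  simp only [τ, Real.rpow_neg hT0, rpow_ofNat_mul hT0] at hbound ⊢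
  generalize analyticConductor q s ^ ε = A at hA hbound
  field_simp at hbound ⊢
  linarith

lemma exists_le_norm_normalizedLFunction_of_norm_sub_one_lt (hε : 0 < ε) (hε' : ε ≤ 1 / 3) :
    ∃ κ : ℝ, 0 < κ ∧ κ ≤ 1 ∧ ∃ c : ℝ, 0 < c ∧
      ∀ (q : ℕ) [NeZero q] (χ : DirichletCharacter ℂ q) (s : ℂ), 1 < s.re → s.re ≤ 2 →
        χ ^ 2 = 1 → ‖s - 1‖ < κ * analyticConductor q s ^ (-(3 * ε)) →
          c * analyticConductor q s ^ (-ε) ≤ ‖normalizedLFunction χ s‖ := by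
  obtain ⟨C, hC, hlip⟩ := exists_norm_normalizedLFunction_sub_le hε hε'
  obtain ⟨c, hc, hone⟩ := exists_le_norm_normalizedLFunction_one hε
  refine ⟨min 1 (c / (2 * C)), by positivity, min_le_left _ _, c / 2, by positivity,
    fun q _ χ s hs hs2 hχ2 hnear ↦ ?_⟩
  have hT := four_le_analyticConductor (q := q) (s := s)
  have hqT : (q : ℝ) ≤ analyticConductor q s := by
    rw [analyticConductor]
    exact le_mul_of_one_le_right (by positivity) (by linarith [abs_nonneg s.im])
  have hnear1 : ‖s - 1‖ ≤ 1 := hnear.le.trans (mul_le_one₀ (min_le_left _ _) (by positivity)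
    (Real.rpow_le_one_of_one_le_of_nonpos (by linarith) (by linarith)))
  have hdiff : ‖normalizedLFunction χ 1 - normalizedLFunction χ s‖ ≤
      c / 2 * analyticConductor q s ^ (-ε) := calc
    _ ≤ C * analyticConductor q s ^ (2 * ε) * ‖s - 1‖ := by
        rw [norm_sub_rev s]
        exact hlip q χ s 1 ⟨by linarith, by linarith⟩
          ⟨by rw [Complex.one_re]; linarith, by norm_num⟩ (by rwa [norm_sub_rev])
    _ ≤ C * analyticConductor q s ^ (2 * ε) *
        (c / (2 * C) * analyticConductor q s ^ (-(3 * ε))) := by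
        gcongr
        refine hnear.le.trans ?_
        gcongr
        exact min_le_right _ _
    _ = c / 2 * (analyticConductor q s ^ (2 * ε) * analyticConductor q s ^ (-(3 * ε))) := by
        field_simp
    _ = c / 2 * analyticConductor q s ^ (-ε) := by
        rw [← Real.rpow_add (by linarith)]
        ring_nf
  have hone' : c * analyticConductor q s ^ (-ε) ≤ ‖normalizedLFunction χ 1‖ := by
    refine le_trans ?_ (hone q χ hχ2)
    gcongr ?_ * ?_
    exact Real.rpow_le_rpow_of_nonpos (Nat.cast_pos.mpr NeZero.one_le) hqT (by linarith)
  linarith [norm_sub_norm_le (normalizedLFunction χ 1) (normalizedLFunction χ s)]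

lemma exists_le_norm_normalizedLFunction_of_pow_four_le (hε : 0 < ε) (hε' : ε ≤ 1 / 3) {κ : ℝ}
    (hκ : 0 < κ) (hκ1 : κ ≤ 1) : ∃ b : ℝ, 0 < b ∧
      ∀ (q : ℕ) [NeZero q] (χ : DirichletCharacter ℂ q) (s : ℂ) (w : ℝ), 0 < w →
        w ^ 4 ≤ s.re - 1 → s.re ≤ 2 →
          (χ ^ 2 ≠ 1 ∨ κ * analyticConductor q s ^ (-(3 * ε)) ≤ ‖s - 1‖) →
            b * w ^ 3 * analyticConductor q s ^ (-(6 * ε)) ≤ ‖normalizedLFunction χ s‖ := by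
  obtain ⟨d, hd, h341⟩ := exists_le_norm_normalizedLFunction_pow_four hε hε' hκ hκ1
  refine ⟨min 1 d, by positivity, fun q _ χ s w hw hws hs2 h ↦ ?_⟩
  have hd4 : min 1 d ^ 4 ≤ d :=
    (pow_le_of_le_one (by positivity) (min_le_left _ _) four_ne_zero).trans (min_le_right _ _)
  have hT := four_le_analyticConductor (q := q) (s := s)
  have hT0 : 0 ≤ analyticConductor q s := by linarith
  have hx : 0 < s.re - 1 := (pow_pos hw 4).trans_le hws
  refine le_of_pow_le_pow_left₀ four_ne_zero (norm_nonneg _) ?_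
  calc (min 1 d * w ^ 3 * analyticConductor q s ^ (-(6 * ε))) ^ 4
      = min 1 d ^ 4 * (w ^ 4) ^ 3 * analyticConductor q s ^ (-(24 * ε)) := by
        simp only [Real.rpow_neg hT0, rpow_ofNat_mul hT0]
        ring
    _ ≤ d * (s.re - 1) ^ 3 * analyticConductor q s ^ (-(23 * ε)) := by
        gcongr <;> linarith
    _ ≤ ‖normalizedLFunction χ s‖ ^ 4 := h341 q χ s (by linarith) hs2 h

lemma exists_le_norm_normalizedLFunction_add (hε : 0 < ε) (hε' : ε ≤ 1 / 3) {κ : ℝ}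
    (hκ : 0 < κ) (hκ1 : κ ≤ 1) : ∃ b : ℝ, 0 < b ∧
      ∀ (q : ℕ) [NeZero q] (χ : DirichletCharacter ℂ q) (s : ℂ) (w : ℝ), 0 < w → w ≤ 1 →
        1 < s.re → s.re ≤ 2 →
          (χ ^ 2 ≠ 1 ∨ κ * analyticConductor q s ^ (-(3 * ε)) ≤ ‖s - 1‖) →
            ∃ t : ℝ, 0 ≤ t ∧ t ≤ w ^ 4 ∧ s.re + t ≤ 2 ∧
              b * w ^ 3 * analyticConductor q s ^ (-(6 * ε)) ≤
                ‖normalizedLFunction χ (s + t)‖ := by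
  obtain ⟨b, hb, hlower⟩ := exists_le_norm_normalizedLFunction_of_pow_four_le hε hε' hκ hκ1
  refine ⟨b, hb, fun q _ χ s w hw hw1 hs hs2 h ↦ ?_⟩
  have hw4 : w ^ 4 ≤ 1 := pow_le_one₀ hw.le hw1
  obtain ⟨t, ht⟩ : ∃ t, t = max 0 (1 + w ^ 4 - s.re) := ⟨_, rfl⟩
  have ht0 : 0 ≤ t := ht ▸ le_max_left _ _
  have htw : 1 + w ^ 4 - s.re ≤ t := ht ▸ le_max_right _ _
  have ht2 : t ≤ 2 - s.re := ht ▸ max_le (by linarith) (by linarith)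
  have hre : (s + t).re = s.re + t := by simp
  have hconductor : analyticConductor q (s + t) = analyticConductor q s := by
    simp [analyticConductor]
  refine ⟨t, ht0, ht ▸ max_le (by positivity) (by linarith), by linarith, ?_⟩
  rw [← hconductor]
  refine hlower q χ (s + t) w hw (by linarith) (by linarith) (h.imp_right fun h ↦ ?_)
  rw [hconductor]
  refine h.trans (norm_le_norm_of_abs_re_le_of_abs_im_le ?_ (by simp))
  rw [Complex.sub_re, Complex.sub_re, Complex.one_re, hre]
  exact abs_le_abs_of_nonneg (by linarith) (by linarith)

-- Far from `1` the 3-4-1 bound is used at a point slightly to the right of `s`.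
lemma exists_le_norm_normalizedLFunction_of_le_norm_sub_one (hε : 0 < ε) (hε' : ε ≤ 1 / 3) {κ : ℝ}
    (hκ : 0 < κ) (hκ1 : κ ≤ 1) : ∃ c : ℝ, 0 < c ∧
      ∀ (q : ℕ) [NeZero q] (χ : DirichletCharacter ℂ q) (s : ℂ), 1 < s.re → s.re ≤ 2 →
        (χ ^ 2 ≠ 1 ∨ κ * analyticConductor q s ^ (-(3 * ε)) ≤ ‖s - 1‖) →
          c * analyticConductor q s ^ (-(30 * ε)) ≤ ‖normalizedLFunction χ s‖ := by
  obtain ⟨C, hC, hlip⟩ := exists_norm_normalizedLFunction_sub_le hε hε'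
  obtain ⟨b, hb, hlower⟩ := exists_le_norm_normalizedLFunction_add hε hε' hκ hκ1
  set w₀ := min 1 (b / (2 * C))
  refine ⟨b * w₀ ^ 3 / 2, by positivity, fun q _ χ s hs hs2 h ↦ ?_⟩
  have hT := four_le_analyticConductor (q := q) (s := s)
  have hT0 : 0 ≤ analyticConductor q s := by linarith
  set w := w₀ * analyticConductor q s ^ (-(8 * ε))
  have hw : 0 < w := by positivity
  have hw1 : w ≤ 1 := mul_le_one₀ (min_le_left _ _) (by positivity)
    (Real.rpow_le_one_of_one_le_of_nonpos (by linarith) (by linarith))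
  obtain ⟨t, ht0, htw, ht2, hz⟩ := hlower q χ s w hw hw1 hs hs2 h
  have hre : (s + t).re = s.re + t := by simp
  have hdiff : ‖normalizedLFunction χ (s + t) - normalizedLFunction χ s‖ ≤
      b * w ^ 3 * analyticConductor q s ^ (-(6 * ε)) / 2 := calc
    _ ≤ C * analyticConductor q s ^ (2 * ε) * ‖s + t - s‖ := by
        refine hlip q χ s (s + t) ⟨by linarith, by linarith⟩ ⟨by linarith, by linarith⟩ ?_
        simpa [abs_of_nonneg ht0] using htw.trans (pow_le_one₀ hw.le hw1)
    _ ≤ C * analyticConductor q s ^ (2 * ε) * (w ^ 3 * (b / (2 * C) *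
          analyticConductor q s ^ (-(8 * ε)))) := by
        rw [add_sub_cancel_left, Complex.norm_of_nonneg ht0]
        gcongr
        refine htw.trans ?_
        rw [pow_succ]
        exact mul_le_mul_of_nonneg_left
          (mul_le_mul_of_nonneg_right (min_le_right _ _) (by positivity)) (by positivity)
    _ = b * w ^ 3 * analyticConductor q s ^ (-(6 * ε)) / 2 := by
        have : 0 < analyticConductor q s ^ ε := by positivity
        simp only [Real.rpow_neg hT0, rpow_ofNat_mul hT0]
        field_simp
  calc b * w₀ ^ 3 / 2 * analyticConductor q s ^ (-(30 * ε))
      = b * w ^ 3 * analyticConductor q s ^ (-(6 * ε)) / 2 := by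
        simp only [w, Real.rpow_neg hT0, rpow_ofNat_mul hT0]
        ring
    _ ≤ ‖normalizedLFunction χ s‖ := by
        linarith [norm_sub_norm_le (normalizedLFunction χ (s + t)) (normalizedLFunction χ s)]

theorem exists_le_norm_normalizedLFunction (hε : 0 < ε) (hε' : ε ≤ 1 / 3) : ∃ c : ℝ, 0 < c ∧
    ∀ (q : ℕ) [NeZero q] (χ : DirichletCharacter ℂ q) (s : ℂ), 1 < s.re → s.re ≤ 2 →
      c * analyticConductor q s ^ (-(30 * ε)) ≤ ‖normalizedLFunction χ s‖ := by
  obtain ⟨κ, hκ, hκ1, c₁, hc₁, hnear⟩ :=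
    exists_le_norm_normalizedLFunction_of_norm_sub_one_lt hε hε'
  obtain ⟨c₂, hc₂, hfar⟩ := exists_le_norm_normalizedLFunction_of_le_norm_sub_one hε hε' hκ hκ1
  refine ⟨min c₁ c₂, lt_min hc₁ hc₂, fun q _ χ s hs hs2 ↦ ?_⟩
  have hT := four_le_analyticConductor (q := q) (s := s)
  by_cases! h : χ ^ 2 ≠ 1 ∨ κ * analyticConductor q s ^ (-(3 * ε)) ≤ ‖s - 1‖
  · refine le_trans ?_ (hfar q χ s hs hs2 h)
    gcongr
    exact min_le_right _ _
  · refine le_trans ?_ (hnear q χ s hs hs2 h.1 h.2)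
    gcongr
    · exact min_le_left _ _
    · linarith
    · linarith

end LowerBounds

section TwistedMoebius

open DirichletCharacter
open scoped ArithmeticFunction.Moebius

variable {q : ℕ} {χ : DirichletCharacter ℂ q} {s : ℂ} {ε : ℝ}

/-- The twist `n ↦ χ n * μ n` of the Möbius function, whose Dirichlet series is `1 / L(χ, s)`. -/
noncomputable def moebiusTwist (χ : DirichletCharacter ℂ q) (n : ℕ) : ℂ :=
  χ n * ((μ n : ℤ) : ℂ)

lemma norm_moebiusTwist_le_one (χ : DirichletCharacter ℂ q) (n : ℕ) : ‖moebiusTwist χ n‖ ≤ 1 := by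
  rw [moebiusTwist, norm_mul]
  exact mul_le_one₀ (χ.norm_le_one _) (norm_nonneg _) (norm_moebius_le_one n)

lemma logMul_iterate_apply (f : ℕ → ℂ) (k n : ℕ) :
    LSeries.logMul^[k] f n = (Real.log n : ℂ) ^ k * f n := by
  induction k with
  | zero => simp
  | succ k ih =>
    rw [Function.iterate_succ_apply', LSeries.logMul, ih, Complex.natCast_log]
    ring

lemma norm_logMul_iterate_moebiusTwist_le (χ : DirichletCharacter ℂ q) (k n : ℕ) :
    ‖LSeries.logMul^[k] (moebiusTwist χ) n‖ ≤ Real.log n ^ k := by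
  rw [logMul_iterate_apply, norm_mul, norm_pow, Complex.norm_of_nonneg (Real.log_natCast_nonneg n)]
  exact mul_le_of_le_one_right (pow_nonneg (Real.log_natCast_nonneg n) k)
    (norm_moebiusTwist_le_one χ n)

lemma abscissaOfAbsConv_moebiusTwist_lt (χ : DirichletCharacter ℂ q) (hs : 1 < s.re) :
    LSeries.abscissaOfAbsConv (moebiusTwist χ) < s.re := by
  refine lt_of_le_of_lt (LSeries.abscissaOfAbsConv_le_of_forall_lt_LSeriesSummable (x := 1)
    fun y hy ↦ ?_) (by exact_mod_cast hs)
  exact summable_LSeries_of_norm_le_one (norm_moebiusTwist_le_one χ) (by simpa using hy)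

lemma LSeriesSummable_logMul_iterate_moebiusTwist (χ : DirichletCharacter ℂ q) (k : ℕ)
    (hs : 1 < s.re) : LSeriesSummable (LSeries.logMul^[k] (moebiusTwist χ)) s := by
  apply LSeriesSummable_of_abscissaOfAbsConv_lt_re
  rw [LSeries.absicssaOfAbsConv_logPowMul]
  exact abscissaOfAbsConv_moebiusTwist_lt χ hs

lemma LSeries_moebiusTwist [NeZero q] (χ : DirichletCharacter ℂ q) (hs : 1 < s.re) :
    LSeries (moebiusTwist χ) s = poleFactor χ s / normalizedLFunction χ s := by
  have hmul : LFunction χ s * LSeries (moebiusTwist χ) s = 1 := by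
    rw [LFunction_eq_LSeries χ hs]
    exact LSeries.mul_mu_eq_one χ hs
  have hfactor : poleFactor χ s ≠ 0 := by
    rw [poleFactor]
    split_ifs
    · refine div_ne_zero (sub_ne_zero.mpr ?_) (add_one_ne_zero_of_re_pos (by linarith))
      rintro rfl
      simp at hs
    · exact one_ne_zero
  rw [← poleFactor_mul_LFunction χ hs, div_mul_cancel_left₀ hfactor]
  exact eq_inv_of_mul_eq_one_right hmul

lemma exists_le_norm_normalizedLFunction_of_norm_sub_le (hε : 0 < ε) (hε' : ε ≤ 1 / 3) :
    ∃ r m : ℝ, 0 < r ∧ r ≤ ε / 2 ∧ 0 < m ∧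
      ∀ (q : ℕ) [NeZero q] (χ : DirichletCharacter ℂ q) (s z : ℂ), 1 < s.re → s.re ≤ 2 →
        ‖z - s‖ ≤ r * analyticConductor q s ^ (-(32 * ε)) →
          m * analyticConductor q s ^ (-(30 * ε)) ≤ ‖normalizedLFunction χ z‖ := by
  obtain ⟨C, hC, hlip⟩ := exists_norm_normalizedLFunction_sub_le hε hε'
  obtain ⟨c, hc, hlower⟩ := exists_le_norm_normalizedLFunction hε hε'
  refine ⟨min (ε / 2) (c / (2 * C)), c / 2, by positivity, min_le_left _ _, by positivity,
    fun q _ χ s z hs hs2 hz ↦ ?_⟩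
  have hT := four_le_analyticConductor (q := q) (s := s)
  have hT0 : 0 ≤ analyticConductor q s := by linarith
  have hzε : ‖z - s‖ ≤ ε / 2 := hz.trans <| (mul_le_of_le_one_right (by positivity)
    (Real.rpow_le_one_of_one_le_of_nonpos (by linarith) (by linarith))).trans (min_le_left _ _)
  have hre := abs_le.mp ((Complex.abs_re_le_norm _).trans hzε)
  rw [Complex.sub_re] at hre
  have hdiff : ‖normalizedLFunction χ z - normalizedLFunction χ s‖ ≤
      c / 2 * analyticConductor q s ^ (-(30 * ε)) := calc
    _ ≤ C * analyticConductor q s ^ (2 * ε) * ‖z - s‖ :=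
        hlip q χ s z ⟨by linarith, by linarith⟩ ⟨by linarith, by linarith⟩ (by linarith)
    _ ≤ C * analyticConductor q s ^ (2 * ε) *
          (c / (2 * C) * analyticConductor q s ^ (-(32 * ε))) := by
        gcongr
        refine hz.trans ?_
        gcongr
        exact min_le_right _ _
    _ = c / 2 * analyticConductor q s ^ (-(30 * ε)) := by
        have : 0 < analyticConductor q s ^ ε := by positivity
        simp only [Real.rpow_neg hT0, rpow_ofNat_mul hT0]
        field_simp
  have htri := norm_sub_norm_le (normalizedLFunction χ s) (normalizedLFunction χ z)
  rw [norm_sub_rev] at htri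
  linarith [hlower q χ s hs hs2]

-- Cauchy's estimate on a disc on which the lower bound for `normalizedLFunction χ` persists.
lemma exists_norm_iteratedDeriv_poleFactor_div_le (k : ℕ) (hε : 0 < ε) (hε' : ε ≤ 1 / 3) :
    ∃ C : ℝ, 0 < C ∧ ∀ (q : ℕ) [NeZero q] (χ : DirichletCharacter ℂ q) (s : ℂ),
      1 < s.re → s.re ≤ 2 →
        ‖iteratedDeriv k (fun z ↦ poleFactor χ z / normalizedLFunction χ z) s‖ ≤
          C * analyticConductor q s ^ ((30 + 32 * k) * ε) := by
  obtain ⟨r, m, hr, hrε, hm, hlower⟩ := exists_le_norm_normalizedLFunction_of_norm_sub_le hε hε'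
  refine ⟨k.factorial * (1 / m) / r ^ k, by positivity, fun q _ χ s hs hs2 ↦ ?_⟩
  have hT := four_le_analyticConductor (q := q) (s := s)
  have hTε : analyticConductor q s ^ (-(32 * ε)) ≤ 1 :=
    Real.rpow_le_one_of_one_le_of_nonpos (by linarith) (by linarith)
  set ρ := r * analyticConductor q s ^ (-(32 * ε)) with hρ
  have hρ0 : 0 < ρ := by positivity
  have hρ1 : ρ ≤ ε / 2 := (mul_le_of_le_one_right hr.le hTε).trans hrε
  have hre {z : ℂ} (hz : ‖z - s‖ ≤ ρ) : 0 < z.re := by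
    have := abs_le.mp ((Complex.abs_re_le_norm _).trans hz)
    rw [Complex.sub_re] at this
    linarith
  refine (Complex.norm_iteratedDeriv_le_of_forall_mem_sphere_norm_le (R := ρ)
    (C := 1 / (m * analyticConductor q s ^ (-(30 * ε)))) k hρ0
    (DifferentiableOn.diffContOnCl fun z hz ↦ ?_) fun z hz ↦ ?_).trans_eq ?_
  · rw [closure_ball _ hρ0.ne', mem_closedBall_iff_norm] at hz
    refine ((differentiableAt_poleFactor χ (hre hz)).div
      (differentiableAt_normalizedLFunction χ (hre hz)) ?_).differentiableWithinAt
    refine norm_pos_iff.mp (lt_of_lt_of_le ?_ (hlower q χ s z hs hs2 hz))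
    positivity
  · rw [mem_sphere_iff_norm] at hz
    rw [norm_div]
    gcongr
    · exact norm_poleFactor_le_one χ (hre hz.le)
    · exact hlower q χ s z hs hs2 hz.le
  · rw [hρ, mul_pow, ← Real.rpow_mul_natCast (by linarith),
      show (30 + 32 * k) * ε = 30 * ε + 32 * ε * k by ring, Real.rpow_add (by linarith),
      neg_mul, Real.rpow_neg (by linarith), Real.rpow_neg (by linarith)]
    have : 0 < analyticConductor q s ^ (30 * ε) := by positivity
    have : 0 < analyticConductor q s ^ (32 * ε * k) := by positivity
    field_simp

theorem exists_norm_LSeries_logMul_iterate_moebiusTwist_le (k : ℕ) : ∃ C : ℝ, 0 < C ∧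
    ∀ (q : ℕ) [NeZero q] (χ : DirichletCharacter ℂ q) (s : ℂ), 1 < s.re → s.re ≤ 2 →
      ‖LSeries (LSeries.logMul^[k] (moebiusTwist χ)) s‖ ≤
        C * analyticConductor q s ^ (1 / 2 : ℝ) := by
  obtain ⟨ε, hε⟩ : ∃ ε : ℝ, ε = 1 / (64 * (k + 1)) := ⟨_, rfl⟩
  have hε0 : 0 < ε := hε ▸ by positivity
  have hεk : (30 + 32 * k) * ε ≤ 1 / 2 := by
    rw [hε, mul_one_div, div_le_iff₀ (by positivity)]
    linarith
  have hε3 : ε ≤ 1 / 3 := by nlinarith [(k.cast_nonneg : (0 : ℝ) ≤ k)]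
  obtain ⟨C, hC, hderiv⟩ := exists_norm_iteratedDeriv_poleFactor_div_le k hε0 hε3
  refine ⟨C, hC, fun q _ χ s hs hs2 ↦ ?_⟩
  have hT := four_le_analyticConductor (q := q) (s := s)
  have heq : LSeries (moebiusTwist χ) =ᶠ[𝓝 s] fun z ↦ poleFactor χ z / normalizedLFunction χ z :=
    ((isOpen_lt continuous_const Complex.continuous_re).eventually_mem hs).mono
      fun z hz ↦ LSeries_moebiusTwist χ hz
  calc ‖LSeries (LSeries.logMul^[k] (moebiusTwist χ)) s‖
      = ‖iteratedDeriv k (fun z ↦ poleFactor χ z / normalizedLFunction χ z) s‖ := by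
        rw [← heq.iteratedDeriv_eq,
          LSeries_iteratedDeriv k (abscissaOfAbsConv_moebiusTwist_lt χ hs),
          norm_mul, norm_pow, norm_neg, norm_one, one_pow, one_mul]
    _ ≤ C * analyticConductor q s ^ ((30 + 32 * k) * ε) := hderiv q χ s hs hs2
    _ ≤ C * analyticConductor q s ^ (1 / 2 : ℝ) := by
        gcongr
        linarith

end TwistedMoebius

section RieszMeans

open Finset MeasureTheory

variable {a : ℕ → ℂ} {s : ℂ} {σ x y B : ℝ}

/-- The weight `max (1 - u) 0` of first-order Riesz means. Its Mellin transform `1 / (s * (s + 1))`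
decays fast enough for Perron's formula to converge absolutely. -/
noncomputable def rieszKernel (u : ℝ) : ℂ :=
  (max (1 - u) 0 : ℝ)

/-- The integrand `x ^ s / (s * (s + 1))` of Perron's formula for first-order Riesz means. -/
noncomputable def perronKernel (x : ℝ) (s : ℂ) : ℂ :=
  (x : ℂ) ^ s * (1 / (s * (s + 1)))

lemma hasMellin_rieszKernel (hs : 0 < s.re) : HasMellin rieszKernel s (1 / (s * (s + 1))) := by
  have hone := hasMellin_one_Ioc hs
  have hid := hasMellin_cpow_Ioc 1 (s := s) (by rw [Complex.one_re]; linarith)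
  have hsub := hasMellin_sub hone.1 hid.1
  have heq : Set.EqOn
      (fun t : ℝ ↦ (t : ℂ) ^ (s - 1) • ((Set.Ioc 0 1).indicator (fun _ ↦ (1 : ℂ)) t -
        (Set.Ioc 0 1).indicator (fun t : ℝ ↦ (t : ℂ) ^ (1 : ℂ)) t))
      (fun t : ℝ ↦ (t : ℂ) ^ (s - 1) • rieszKernel t) (Set.Ioi 0) := fun t (ht : 0 < t) ↦ by
    by_cases h : t ≤ 1
    · simp [rieszKernel, ht, h]
    · simp [rieszKernel, h, max_eq_right (by linarith : 1 - t ≤ 0)]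
  refine ⟨(integrableOn_congr_fun heq measurableSet_Ioi).mp hsub.1, ?_⟩
  rw [mellin, ← setIntegral_congr_fun measurableSet_Ioi heq]
  refine hsub.2.trans ?_
  have hs0 : s ≠ 0 := by
    rintro rfl
    simp at hs
  have hs1 := add_one_ne_zero_of_re_pos hs
  rw [hone.2, hid.2]
  field_simp
  ring

lemma one_add_sq_le_norm_mul_add_one (hσ : 1 ≤ σ) (y : ℝ) :
    1 + y ^ 2 ≤ ‖((σ : ℂ) + y * Complex.I) * ((σ : ℂ) + y * Complex.I + 1)‖ := by
  have hsq : 1 + y ^ 2 ≤ ‖(σ : ℂ) + y * Complex.I‖ ^ 2 := by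
    rw [Complex.sq_norm, Complex.normSq_add_mul_I]
    nlinarith
  have hle : ‖(σ : ℂ) + y * Complex.I‖ ≤ ‖(σ : ℂ) + y * Complex.I + 1‖ := by
    refine norm_le_norm_of_abs_re_le_of_abs_im_le ?_ (by simp)
    simpa using abs_le_abs_of_nonneg (by linarith) (by linarith : σ ≤ σ + 1)
  rw [norm_mul]
  nlinarith [norm_nonneg ((σ : ℂ) + y * Complex.I)]

lemma norm_perronKernel_le (hx : 0 < x) (hσ : 1 ≤ σ) (y : ℝ) :
    ‖perronKernel x (σ + y * Complex.I)‖ ≤ x ^ σ * (1 + y ^ 2)⁻¹ := by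
  have hre : ((σ : ℂ) + y * Complex.I).re = σ := by simp
  rw [perronKernel, norm_mul, Complex.norm_cpow_eq_rpow_re_of_pos hx, hre, norm_div, norm_one,
    one_div]
  gcongr
  exact one_add_sq_le_norm_mul_add_one hσ y

lemma continuous_perronKernel (hx : 0 < x) (hσ : 1 ≤ σ) :
    Continuous fun y : ℝ ↦ perronKernel x (σ + y * Complex.I) := by
  refine Continuous.mul (Continuous.const_cpow (by fun_prop) (Or.inl ?_))
    (Continuous.div (by fun_prop) (by fun_prop) fun y ↦ ?_)
  · exact_mod_cast hx.ne'
  · exact norm_pos_iff.mp (lt_of_lt_of_le (by positivity) (one_add_sq_le_norm_mul_add_one hσ y))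

lemma integrable_perronKernel (hx : 0 < x) (hσ : 1 ≤ σ) :
    Integrable fun y : ℝ ↦ perronKernel x (σ + y * Complex.I) :=
  (integrable_inv_one_add_sq.const_mul (x ^ σ)).mono'
    (continuous_perronKernel hx hσ).aestronglyMeasurable
    (.of_forall (norm_perronKernel_le hx hσ))

lemma integral_perronKernel (hx : 0 < x) (hσ : 1 ≤ σ) :
    (1 / (2 * Real.pi)) • ∫ y : ℝ, perronKernel x (σ + y * Complex.I) = rieszKernel x⁻¹ := by
  have hmellin (y : ℝ) := hasMellin_rieszKernel (s := σ + y * Complex.I) (by simp; linarith)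
  have hinv := mellinInv_mellin_eq σ rieszKernel (inv_pos.mpr hx)
    (hasMellin_rieszKernel (by simp; linarith)).1 ?_ ?_
  · rw [← hinv, mellinInv]
    congr 2 with y
    rw [(hmellin y).2, perronKernel, smul_eq_mul, Complex.ofReal_inv, Complex.cpow_neg,
      Complex.inv_cpow _ _ (by simp [Complex.arg_ofReal_of_nonneg hx.le, Real.pi_ne_zero.symm]),
      inv_inv]
  · simp_rw [Complex.VerticalIntegrable, (hmellin _).2]
    simpa [perronKernel] using integrable_perronKernel one_pos hσ
  · unfold rieszKernel
    fun_prop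

lemma sum_Ioc_mul_one_sub_div_eq_tsum (a : ℕ → ℂ) (hx : 0 < x) :
    ∑ n ∈ Ioc 0 ⌊x⌋₊, a n * (1 - n / x) =
      ∑' n : ℕ, if n = 0 then 0 else a n * rieszKernel (n / x) := by
  rw [tsum_eq_sum (s := Ioc 0 ⌊x⌋₊)]
  · refine sum_congr rfl fun n hn ↦ ?_
    rw [mem_Ioc, Nat.le_floor_iff hx.le] at hn
    rw [if_neg hn.1.ne', rieszKernel, max_eq_left (sub_nonneg.mpr ((div_le_one hx).mpr hn.2))]
    push_cast
    rfl
  · intro n hn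
    rw [mem_Ioc, Nat.le_floor_iff hx.le, not_and, not_le] at hn
    split_ifs with h0
    · rfl
    · have := (one_lt_div hx).mpr (hn (Nat.pos_of_ne_zero h0))
      rw [rieszKernel, max_eq_right (by linarith), Complex.ofReal_zero, mul_zero]

lemma term_mul_perronKernel (a : ℕ → ℂ) {n : ℕ} (hn : n ≠ 0) (hx : 0 < x) (s : ℂ) :
    LSeries.term a s n * perronKernel x s = a n * perronKernel (x / n) s := by
  rw [LSeries.term_of_ne_zero hn, perronKernel, perronKernel, Complex.ofReal_div,
    Complex.div_cpow_ofReal_nonneg hx.le n.cast_nonneg, Complex.ofReal_natCast]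
  ring

-- Perron's formula: integrate the Dirichlet series termwise.
lemma sum_Ioc_mul_one_sub_div_eq_integral (hσ : 1 ≤ σ) (ha : LSeriesSummable a σ) (hx : 0 < x) :
    ∑ n ∈ Ioc 0 ⌊x⌋₊, a n * (1 - n / x) = (1 / (2 * Real.pi)) •
      ∫ y : ℝ, LSeries a (σ + y * Complex.I) * perronKernel x (σ + y * Complex.I) := by
  set F : ℕ → ℝ → ℂ := fun n y ↦
    LSeries.term a (σ + y * Complex.I) n * perronKernel x (σ + y * Complex.I)
  have hF {n : ℕ} (hn : n ≠ 0) : F n = fun y : ℝ ↦ a n * perronKernel (x / n) (σ + y * Complex.I) :=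
    funext fun y ↦ term_mul_perronKernel a hn hx _
  have hF0 : F 0 = 0 := funext fun y ↦ by simp [F]
  have hint (n : ℕ) : Integrable (F n) := by
    rcases eq_or_ne n 0 with rfl | hn
    · exact hF0 ▸ integrable_zero _ _ _
    · rw [hF hn]
      exact (integrable_perronKernel (by positivity) hσ).const_mul _
  have hnorm (n : ℕ) : ∫ y, ‖F n y‖ =
      ‖LSeries.term a σ n‖ * ∫ y : ℝ, ‖perronKernel x (σ + y * Complex.I)‖ := by
    rw [← integral_const_mul]
    simp [F, LSeries.norm_term_eq]
  have hswap := integral_tsum_of_summable_integral_norm hint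
    (by simpa only [hnorm] using ha.norm.mul_right _)
  calc ∑ n ∈ Ioc 0 ⌊x⌋₊, a n * (1 - n / x)
      = ∑' n : ℕ, (1 / (2 * Real.pi)) • ∫ y, F n y := by
        rw [sum_Ioc_mul_one_sub_div_eq_tsum a hx]
        refine tsum_congr fun n ↦ ?_
        split_ifs with hn
        · simp [hn, hF0]
        · rw [hF hn, integral_const_mul, ← mul_smul_comm,
            integral_perronKernel (by positivity) hσ, inv_div]
    _ = (1 / (2 * Real.pi)) • ∫ y, ∑' n, F n y := by rw [tsum_const_smul'', hswap]
    _ = _ := by simp only [F, tsum_mul_right, LSeries]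

lemma integrable_one_add_sq_rpow : Integrable fun y : ℝ ↦ (1 + y ^ 2) ^ (-(3 / 4) : ℝ) := by
  have := integrable_rpow_neg_one_add_norm_sq (E := ℝ) (μ := volume) (r := 3 / 2) (by norm_num)
  simp only [Real.norm_eq_abs, sq_abs] at this
  convert this using 3
  norm_num

lemma norm_sum_Ioc_mul_one_sub_div_le (hσ : 1 ≤ σ) (ha : LSeriesSummable a σ) (hx : 0 < x)
    (hB : ∀ y : ℝ, ‖LSeries a (σ + y * Complex.I)‖ ≤ B * (1 + y ^ 2) ^ (1 / 4 : ℝ)) :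
    ‖∑ n ∈ Ioc 0 ⌊x⌋₊, a n * (1 - n / x)‖ ≤
      B * x ^ σ * (1 / (2 * Real.pi) * ∫ y : ℝ, (1 + y ^ 2) ^ (-(3 / 4) : ℝ)) := by
  rw [sum_Ioc_mul_one_sub_div_eq_integral hσ ha hx, norm_smul, Real.norm_of_nonneg (by positivity),
    mul_left_comm, ← integral_const_mul]
  gcongr
  refine norm_integral_le_of_norm_le (integrable_one_add_sq_rpow.const_mul _)
    (.of_forall fun y ↦ ?_)
  have hpos : 0 < 1 + y ^ 2 := by positivity
  calc ‖LSeries a (σ + y * Complex.I) * perronKernel x (σ + y * Complex.I)‖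
      ≤ B * (1 + y ^ 2) ^ (1 / 4 : ℝ) * (x ^ σ * (1 + y ^ 2)⁻¹) :=
        norm_mul_le_of_le (hB y) (norm_perronKernel_le hx hσ y)
    _ = B * x ^ σ * ((1 + y ^ 2) ^ (1 / 4 : ℝ) * (1 + y ^ 2) ^ (-1 : ℝ)) := by
        rw [Real.rpow_neg_one]
        ring
    _ = B * x ^ σ * (1 + y ^ 2) ^ (-(3 / 4) : ℝ) := by
        rw [← Real.rpow_add hpos]
        norm_num

lemma analyticConductor_rpow_half_le {q : ℕ} [NeZero q] (s : ℂ) :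
    analyticConductor q s ^ (1 / 2 : ℝ) ≤ 5 * q * (1 + s.im ^ 2) ^ (1 / 4 : ℝ) := by
  have hq : (1 : ℝ) ≤ q := by exact_mod_cast NeZero.one_le
  have hsqrt : |s.im| + 4 ≤ 5 * Real.sqrt (1 + s.im ^ 2) := by
    have := Real.abs_le_sqrt (by linarith : s.im ^ 2 ≤ 1 + s.im ^ 2)
    have := Real.one_le_sqrt.mpr (by nlinarith : 1 ≤ 1 + s.im ^ 2)
    linarith
  rw [← Real.sqrt_eq_rpow, Real.sqrt_le_left (by positivity), mul_pow, ← Real.rpow_mul_natCast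
    (by positivity)]
  calc analyticConductor q s ≤ q * (5 * Real.sqrt (1 + s.im ^ 2)) := by
        rw [analyticConductor]
        gcongr
    _ ≤ (5 * q) * (q * (5 * Real.sqrt (1 + s.im ^ 2))) :=
        le_mul_of_one_le_left (by positivity) (by linarith)
    _ = (5 * q) ^ 2 * (1 + s.im ^ 2) ^ ((1 / 4 : ℝ) * (2 : ℕ)) := by
        rw [Real.sqrt_eq_rpow]
        norm_num
        ring

lemma one_lt_log_natCast {N : ℕ} (hN : 3 ≤ N) : 1 < Real.log N := by
  have : (3 : ℝ) ≤ N := by exact_mod_cast hN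
  rw [Real.lt_log_iff_exp_lt (by linarith)]
  linarith [Real.exp_one_lt_d9]

lemma exists_norm_sum_Ioc_logMul_iterate_moebiusTwist_mul_sub_le (k : ℕ) :
    ∃ C : ℝ, 0 < C ∧ ∀ (q : ℕ) [NeZero q] (χ : DirichletCharacter ℂ q) (N : ℕ), 3 ≤ N →
      ‖∑ n ∈ Ioc 0 N, LSeries.logMul^[k] (moebiusTwist χ) n * ((N : ℂ) - n)‖ ≤ C * q * N ^ 2 := by
  obtain ⟨C, hC, hbound⟩ := exists_norm_LSeries_logMul_iterate_moebiusTwist_le k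
  set J : ℝ := 1 / (2 * Real.pi) * ∫ y : ℝ, (1 + y ^ 2) ^ (-(3 / 4) : ℝ)
  have : 0 ≤ J := mul_nonneg (by positivity) (integral_nonneg fun y ↦ by positivity)
  refine ⟨5 * C * Real.exp 1 * J + 1, by positivity, fun q _ χ N hN ↦ ?_⟩
  have hN0 : (0 : ℝ) < N := by exact_mod_cast (by lia : 0 < N)
  have hlog := one_lt_log_natCast hN
  set σ : ℝ := 1 + (Real.log N)⁻¹ with hσ
  have hσ1 : 1 < σ := lt_add_of_pos_right _ (by positivity)
  have hσ2 : σ ≤ 2 := by linarith [inv_le_one_of_one_le₀ hlog.le]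
  have hpow : (N : ℝ) ^ σ = N * Real.exp 1 := by
    rw [hσ, Real.rpow_add hN0, Real.rpow_one, Real.rpow_inv_log hN0]
    exact_mod_cast (by lia : N ≠ 1)
  have hL (y : ℝ) : ‖LSeries (LSeries.logMul^[k] (moebiusTwist χ)) (σ + y * Complex.I)‖ ≤
      5 * C * q * (1 + y ^ 2) ^ (1 / 4 : ℝ) := by
    have him := analyticConductor_rpow_half_le (q := q) (σ + y * Complex.I)
    calc _ ≤ C * analyticConductor q (σ + y * Complex.I) ^ (1 / 2 : ℝ) :=
          hbound q χ _ (by simpa using hσ1) (by simpa using hσ2)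
      _ ≤ C * (5 * q * (1 + y ^ 2) ^ (1 / 4 : ℝ)) := by
          gcongr
          simpa using him
      _ = _ := by ring
  have hmean := norm_sum_Ioc_mul_one_sub_div_le hσ1.le
    (LSeriesSummable_logMul_iterate_moebiusTwist χ k (by simpa using hσ1)) hN0 hL
  rw [Nat.floor_natCast, hpow] at hmean
  calc _ = ‖(N : ℂ) *
        ∑ n ∈ Ioc 0 N, LSeries.logMul^[k] (moebiusTwist χ) n * (1 - n / (N : ℝ))‖ := by
        rw [mul_sum]
        congr 1
        refine sum_congr rfl fun n _ ↦ ?_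
        have : (N : ℂ) ≠ 0 := by exact_mod_cast hN0.ne'
        push_cast
        field_simp
    _ ≤ N * (5 * C * q * (N * Real.exp 1) * J) := by
        rw [norm_mul, Complex.norm_natCast]
        gcongr
    _ = 5 * C * Real.exp 1 * J * q * N ^ 2 := by ring
    _ ≤ _ := by
        gcongr
        linarith

end RieszMeans

section TwistedMertens

open Finset

variable {a : ℕ → ℂ} {v : ℕ → ℝ} {R N h : ℕ} {B V ε : ℝ}

lemma exists_log_pow_le_mul_rpow (k : ℕ) (hε : 0 < ε) :
    ∃ D : ℝ, 0 < D ∧ ∀ x : ℝ, 1 ≤ x → Real.log x ^ k ≤ D * x ^ ε := by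
  have hδ : 0 < ε / (k + 1) := by positivity
  refine ⟨((ε / (k + 1))⁻¹) ^ k, by positivity, fun x hx ↦ ?_⟩
  have hx0 : 0 ≤ x := by linarith
  calc Real.log x ^ k ≤ (x ^ (ε / (k + 1)) / (ε / (k + 1))) ^ k :=
        pow_le_pow_left₀ (Real.log_nonneg hx) (Real.log_le_rpow_div hx0 hδ) k
    _ = ((ε / (k + 1))⁻¹) ^ k * x ^ (ε / (k + 1) * k) := by
        rw [div_eq_inv_mul, mul_pow, ← Real.rpow_mul_natCast hx0]
    _ ≤ ((ε / (k + 1))⁻¹) ^ k * x ^ ε := by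
        gcongr
        rw [div_mul_eq_mul_div, div_le_iff₀ (by positivity)]
        nlinarith

lemma natCast_mul_sum_Ioc_eq (a : ℕ → ℂ) (N h : ℕ) :
    h * ∑ n ∈ Ioc 0 N, a n =
      ∑ n ∈ Ioc 0 (N + h), a n * (((N + h : ℕ) : ℂ) - n) - ∑ n ∈ Ioc 0 N, a n * ((N : ℂ) - n) -
        ∑ n ∈ Ioc N (N + h), a n * (((N + h : ℕ) : ℂ) - n) := by
  rw [← sum_Ioc_consecutive _ N.zero_le (N.le_add_right h), add_sub_right_comm,
    add_sub_cancel_right, ← sum_sub_distrib, mul_sum]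
  refine sum_congr rfl fun n _ ↦ ?_
  push_cast
  ring

lemma norm_sum_Ioc_le_of_norm_sum_Ioc_mul_sub_le (hh : 0 < h) (hhN : h ≤ N) (hB0 : 0 ≤ B)
    (hB : ∀ M, N ≤ M → ‖∑ n ∈ Ioc 0 M, a n * ((M : ℂ) - n)‖ ≤ B * M ^ 2)
    (hV : ∀ n ∈ Ioc N (N + h), ‖a n‖ ≤ V) :
    ‖∑ n ∈ Ioc 0 N, a n‖ ≤ 5 * B * N ^ 2 / h + V * h := by
  have hh' : (0 : ℝ) < h := by exact_mod_cast hh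
  have hhN' : (h : ℝ) ≤ N := by exact_mod_cast hhN
  have hshort : ‖∑ n ∈ Ioc N (N + h), a n * (((N + h : ℕ) : ℂ) - n)‖ ≤ h * (V * h) := by
    calc _ ≤ ∑ _n ∈ Ioc N (N + h), V * h := by
          refine norm_sum_le_of_le _ fun n hn ↦ norm_mul_le_of_le (hV n hn) ?_
          rw [mem_Ioc] at hn
          rw [← Nat.cast_sub hn.2, Complex.norm_natCast]
          exact_mod_cast (by lia : N + h - n ≤ h)
      _ = _ := by simp
  have hlong : B * ((N + h : ℕ) : ℝ) ^ 2 ≤ B * (4 * N ^ 2) := by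
    gcongr
    push_cast
    nlinarith
  refine le_of_mul_le_mul_left ?_ hh'
  calc (h : ℝ) * ‖∑ n ∈ Ioc 0 N, a n‖ = ‖h * ∑ n ∈ Ioc 0 N, a n‖ := by
        rw [norm_mul, Complex.norm_natCast]
    _ ≤ B * ((N + h : ℕ) : ℝ) ^ 2 + B * N ^ 2 + h * (V * h) := by
        rw [natCast_mul_sum_Ioc_eq]
        exact norm_sub_le_of_le (norm_sub_le_of_le (hB _ (N.le_add_right h)) (hB N le_rfl)) hshort
    _ ≤ B * (4 * N ^ 2) + B * N ^ 2 + h * (V * h) := by gcongr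
    _ = h * (5 * B * N ^ 2 / h + V * h) := by
        field_simp
        ring

lemma mul_sq_div_natCeil_add_sq_mul_natCeil_le {x P : ℝ} (hx : 0 < x) (hB : 0 ≤ B) (hP : 0 < P) :
    B * x ^ 2 / ⌈x / P⌉₊ + P ^ 2 * ⌈x / P⌉₊ ≤ B * x * P + x * P + P ^ 2 := by
  calc B * x ^ 2 / ⌈x / P⌉₊ + P ^ 2 * ⌈x / P⌉₊
      ≤ B * x ^ 2 / (x / P) + P ^ 2 * (x / P + 1) := by
        gcongr
        · exact Nat.le_ceil _
        · exact (Nat.ceil_lt_add_one (by positivity)).le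
    _ = B * x * P + x * P + P ^ 2 := by
        field_simp
        ring

-- Compare the Riesz means at `N` and `N + h`, with `h` of size `N / log (2 * N) ^ j`.
lemma exists_norm_sum_Ioc_logMul_iterate_moebiusTwist_le (j : ℕ) :
    ∃ C : ℝ, 0 < C ∧ ∀ (q : ℕ) [NeZero q] (χ : DirichletCharacter ℂ q) (N : ℕ), 3 ≤ N →
      ‖∑ n ∈ Ioc 0 N, LSeries.logMul^[2 * j] (moebiusTwist χ) n‖ ≤
        C * q * N * Real.log (2 * N) ^ j := by
  obtain ⟨C, hC, hmean⟩ := exists_norm_sum_Ioc_logMul_iterate_moebiusTwist_mul_sub_le (2 * j)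
  obtain ⟨D, hD, hlog⟩ := exists_log_pow_le_mul_rpow (2 * j) one_pos
  refine ⟨5 * C + 1 + 2 * D, by positivity, fun q _ χ N hN ↦ ?_⟩
  have hq : (1 : ℝ) ≤ q := by exact_mod_cast NeZero.one_le
  have hN0 : (0 : ℝ) < N := by exact_mod_cast (by lia : 0 < N)
  set L := Real.log (2 * N)
  have hL : 1 < L := by
    have := one_lt_log_natCast (by lia : 3 ≤ 2 * N)
    rwa [Nat.cast_mul, Nat.cast_ofNat] at this
  have hLj : 1 ≤ L ^ j := one_le_pow₀ hL.le
  have hV (n : ℕ) (hn : n ∈ Ioc N (N + ⌈N / L ^ j⌉₊)) :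
      ‖LSeries.logMul^[2 * j] (moebiusTwist χ) n‖ ≤ (L ^ j) ^ 2 := by
    have hle : ⌈N / L ^ j⌉₊ ≤ N := Nat.ceil_le.mpr (div_le_self hN0.le hLj)
    rw [mem_Ioc] at hn
    rw [← pow_mul']
    refine (norm_logMul_iterate_moebiusTwist_le χ _ n).trans ?_
    exact pow_le_pow_left₀ (Real.log_natCast_nonneg n) (Real.log_le_log
      (by exact_mod_cast (by lia : 0 < n)) (by exact_mod_cast (by lia : n ≤ 2 * N))) _
  have hLD : (L ^ j) ^ 2 ≤ D * (2 * N) := by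
    rw [← pow_mul', ← Real.rpow_one (2 * N : ℝ)]
    exact hlog (2 * N) (by exact_mod_cast (by lia : 1 ≤ 2 * N))
  calc _ ≤ 5 * (C * q) * N ^ 2 / ⌈N / L ^ j⌉₊ + (L ^ j) ^ 2 * ⌈N / L ^ j⌉₊ :=
        norm_sum_Ioc_le_of_norm_sum_Ioc_mul_sub_le (Nat.ceil_pos.mpr (by positivity))
          (Nat.ceil_le.mpr (div_le_self hN0.le hLj)) (by positivity)
          (fun M hM ↦ hmean q χ M (hN.trans hM)) hV
    _ ≤ 5 * (C * q) * N * L ^ j + 1 * (N * L ^ j) + D * (2 * N) * 1 := by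
        linarith [mul_sq_div_natCeil_add_sq_mul_natCeil_le (B := 5 * (C * q)) hN0 (by positivity)
          (by positivity : 0 < L ^ j)]
    _ ≤ 5 * (C * q) * N * L ^ j + q * (N * L ^ j) + D * (2 * N) * (q * L ^ j) := by
        gcongr
        exact one_le_mul_of_one_le_of_one_le hq hLj
    _ = (5 * C + 1 + 2 * D) * q * N * L ^ j := by ring

lemma exists_norm_sum_Ioc_logMul_iterate_moebiusTwist_le_of_le (j : ℕ) :
    ∃ C : ℝ, 0 < C ∧ ∀ (q : ℕ) [NeZero q] (χ : DirichletCharacter ℂ q) (N m : ℕ), 3 ≤ m → m ≤ N →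
      ‖∑ n ∈ Ioc 0 m, LSeries.logMul^[2 * j] (moebiusTwist χ) n‖ ≤
        C * q * (N * Real.log N ^ j) := by
  obtain ⟨C, hC, hbound⟩ := exists_norm_sum_Ioc_logMul_iterate_moebiusTwist_le j
  refine ⟨2 ^ j * C, by positivity, fun q _ χ N m hm hmN ↦ (hbound q χ m hm).trans ?_⟩
  have : (2 : ℝ) ≤ N := by exact_mod_cast (by lia : 2 ≤ N)
  have : (1 : ℝ) ≤ m := by exact_mod_cast (by lia : 1 ≤ m)
  have : (m : ℝ) ≤ N := by exact_mod_cast hmN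
  have : 0 ≤ Real.log (2 * m) := Real.log_nonneg (by linarith)
  calc C * q * m * Real.log (2 * m) ^ j ≤ C * q * N * Real.log (N * N) ^ j := by gcongr
    _ = 2 ^ j * C * q * (N * Real.log N ^ j) := by
        rw [Real.log_mul (by positivity) (by positivity), ← two_mul, mul_pow]
        ring

lemma sum_Ioc_mul_eq_by_parts (a w : ℕ → ℂ) {x : ℕ} (hRx : R ≤ x) :
    ∑ n ∈ Ioc R x, a n * w n = (∑ n ∈ Ioc R x, a n) * w x +
      ∑ m ∈ Ico R x, (∑ n ∈ Ioc R m, a n) * (w m - w (m + 1)) := by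
  induction x, hRx using Nat.le_induction with
  | base => simp
  | succ x hRx ih =>
    rw [sum_Ioc_succ_top hRx, sum_Ioc_succ_top hRx, ih, sum_Ico_succ_top hRx]
    ring

lemma norm_sum_Ioc_mul_le {x : ℕ} (hRx : R ≤ x) (w : ℕ → ℂ)
    (hB : ∀ m, R ≤ m → m ≤ x → ‖∑ n ∈ Ioc R m, a n‖ ≤ B) :
    ‖∑ n ∈ Ioc R x, a n * w n‖ ≤ B * (‖w x‖ + ∑ m ∈ Ico R x, ‖w m - w (m + 1)‖) := by
  rw [sum_Ioc_mul_eq_by_parts a w hRx, mul_add, mul_sum]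
  refine norm_add_le_of_le (norm_mul_le_of_le (hB x hRx le_rfl) le_rfl)
    (norm_sum_le_of_le _ fun m hm ↦ ?_)
  rw [mem_Ico] at hm
  exact norm_mul_le_of_le (hB m hm.1 hm.2.le) le_rfl

lemma norm_sum_Ioc_mul_ofReal_le_of_antitoneOn {x : ℕ} (hRx : R ≤ x)
    (hv : AntitoneOn v (Set.Icc R x)) (hv0 : 0 ≤ v x)
    (hB : ∀ m, R ≤ m → m ≤ x → ‖∑ n ∈ Ioc R m, a n‖ ≤ B) :
    ‖∑ n ∈ Ioc R x, a n * (v n : ℂ)‖ ≤ B * v R := by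
  refine (norm_sum_Ioc_mul_le hRx (fun n ↦ (v n : ℂ)) hB).trans_eq ?_
  have hterm : ∀ m ∈ Ico R x, ‖(v m : ℂ) - (v (m + 1) : ℂ)‖ = -(v (m + 1) - v m) := by
    intro m hm
    rw [mem_Ico] at hm
    rw [← Complex.ofReal_sub, Complex.norm_of_nonneg (sub_nonneg.mpr
      (hv ⟨hm.1, hm.2.le⟩ ⟨by lia, hm.2⟩ m.le_succ)), neg_sub]
  rw [sum_congr rfl hterm, sum_neg_distrib, sum_Ico_sub v hRx, Complex.norm_of_nonneg hv0]
  ring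

lemma norm_sum_Ioc_le_of_forall_norm_sum_Ioc_le {x : ℕ} (hRx : R ≤ x)
    (hB : ∀ m, R ≤ m → m ≤ x → ‖∑ n ∈ Ioc 0 m, a n‖ ≤ B) : ‖∑ n ∈ Ioc R x, a n‖ ≤ 2 * B := by
  rw [← sub_eq_iff_eq_add'.mpr (sum_Ioc_consecutive a R.zero_le hRx).symm, two_mul]
  exact norm_sub_le_of_le (hB x hRx le_rfl) (hB R le_rfl hRx)

lemma norm_sum_Ioc_le_div_log_pow {x k : ℕ} (hR : 2 ≤ R) (hRx : R ≤ x)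
    (hB : ∀ m, R ≤ m → m ≤ x → ‖∑ n ∈ Ioc 0 m, LSeries.logMul^[k] a n‖ ≤ B) :
    ‖∑ n ∈ Ioc R x, a n‖ ≤ 2 * B / Real.log R ^ k := by
  have hlog {n : ℕ} (hn : R ≤ n) : 0 < Real.log n :=
    Real.log_pos (by exact_mod_cast (by lia : 1 < n))
  have hanti : AntitoneOn (fun n : ℕ ↦ (Real.log n ^ k)⁻¹) (Set.Icc R x) := by
    intro m hm n _ hmn
    have := hlog hm.1
    have : 0 < m := by linarith [hm.1]
    dsimp only
    gcongr
  have hterm : ∀ n ∈ Ioc R x,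
      a n = LSeries.logMul^[k] a n * ((Real.log n ^ k)⁻¹ : ℝ) := by
    intro n hn
    have : (Real.log n : ℂ) ≠ 0 := by exact_mod_cast (hlog (mem_Ioc.mp hn).1.le).ne'
    rw [logMul_iterate_apply, Complex.ofReal_inv, Complex.ofReal_pow, mul_right_comm,
      mul_inv_cancel₀ (pow_ne_zero k this), one_mul]
  rw [sum_congr rfl hterm, div_eq_mul_inv]
  exact norm_sum_Ioc_mul_ofReal_le_of_antitoneOn hRx hanti
    (inv_nonneg.mpr (pow_nonneg (hlog hRx).le k)) fun m hRm hmx ↦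
      norm_sum_Ioc_le_of_forall_norm_sum_Ioc_le hRm fun l hRl hlm ↦ hB l hRl (hlm.trans hmx)

lemma norm_sum_Ioc_moebiusTwist_le {q : ℕ} (χ : DirichletCharacter ℂ q) (N : ℕ) :
    ‖∑ n ∈ Ioc 0 N, moebiusTwist χ n‖ ≤ N :=
  (norm_sum_le_of_le _ fun n _ ↦ norm_moebiusTwist_le_one χ n).trans_eq (by simp)

lemma exists_sqrt_le_mul_div_log_pow (j : ℕ) :
    ∃ D : ℝ, 0 < D ∧ ∀ x : ℝ, 1 < x → √x ≤ D * (x / Real.log x ^ j) := by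
  obtain ⟨D, hD, hlog⟩ := exists_log_pow_le_mul_rpow j (by norm_num : (0 : ℝ) < 1 / 2)
  refine ⟨D, hD, fun x hx ↦ ?_⟩
  have hlogx := Real.log_pos hx
  rw [← mul_div_assoc, le_div_iff₀ (by positivity)]
  calc √x * Real.log x ^ j ≤ √x * (D * √x) := by
        rw [Real.sqrt_eq_rpow x]
        gcongr
        exact hlog x hx.le
    _ = D * x := by rw [mul_left_comm, Real.mul_self_sqrt (by linarith)]

lemma exists_natCast_mem_Icc_sqrt (hN : 0 < N) :
    ∃ R : ℕ, 3 ≤ R ∧ (R : ℝ) ∈ Set.Icc √N (3 * √N) := by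
  have hfloor : 1 ≤ Nat.sqrt N := Nat.le_sqrt.mpr (by lia)
  have hone : 1 ≤ √(N : ℝ) := Real.one_le_sqrt.mpr (by exact_mod_cast hN)
  have hle := Real.nat_sqrt_le_real_sqrt (a := N)
  have hlt := Real.real_sqrt_le_nat_sqrt_succ (a := N)
  refine ⟨Nat.sqrt N + 2, by lia, ?_, ?_⟩ <;> push_cast <;> linarith

-- Partial summation removes the weight `log n ^ (2 * j)` on `n > R`, where `R` is about `√N`.
lemma exists_norm_sum_Ioc_moebiusTwist_le (j : ℕ) :
    ∃ C : ℝ, 0 < C ∧ ∀ (q : ℕ) [NeZero q] (χ : DirichletCharacter ℂ q) (N x : ℕ), 2 ≤ N → x ≤ N →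
      ‖∑ n ∈ Ioc 0 x, moebiusTwist χ n‖ ≤ C * q * (N / Real.log N ^ j) := by
  obtain ⟨C, hC, hlogsum⟩ := exists_norm_sum_Ioc_logMul_iterate_moebiusTwist_le_of_le j
  obtain ⟨D, hD, hsqrt⟩ := exists_sqrt_le_mul_div_log_pow j
  refine ⟨3 * D + 2 * 4 ^ j * C, by positivity, fun q _ χ N x hN hx ↦ ?_⟩
  have hq : (1 : ℝ) ≤ q := by exact_mod_cast NeZero.one_le
  have hN' : (2 : ℝ) ≤ N := by exact_mod_cast hN
  set L := Real.log N
  have hL : 0 < L := Real.log_pos (by linarith)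
  obtain ⟨R, hR3, hRlow, hRup⟩ := exists_natCast_mem_Icc_sqrt (by lia : 0 < N)
  have hhead (m : ℕ) (hm : m ≤ R) :
      ‖∑ n ∈ Ioc 0 m, moebiusTwist χ n‖ ≤ 3 * D * q * (N / L ^ j) := by
    have : (m : ℝ) ≤ R := by exact_mod_cast hm
    calc _ ≤ (m : ℝ) := norm_sum_Ioc_moebiusTwist_le χ m
      _ ≤ 3 * (D * (N / L ^ j)) * 1 := by linarith [hsqrt N (by linarith)]
      _ ≤ 3 * (D * (N / L ^ j)) * q := by gcongr
      _ = _ := by ring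
  rcases le_total x R with hxR | hRx
  · refine (hhead x hxR).trans ?_
    gcongr
    exact le_add_of_nonneg_right (by positivity)
  have hlogR : L / 2 ≤ Real.log R := by
    rw [← Real.log_sqrt (by positivity)]
    gcongr
  have htail : ‖∑ n ∈ Ioc R x, moebiusTwist χ n‖ ≤
      2 * (C * q * (N * L ^ j)) / (L / 2) ^ (2 * j) := by
    refine (norm_sum_Ioc_le_div_log_pow (by lia) hRx fun m hRm hmx ↦
      hlogsum q χ N m (hR3.trans hRm) (hmx.trans hx)).trans ?_
    gcongr
  calc _ ≤ 3 * D * q * (N / L ^ j) + 2 * (C * q * (N * L ^ j)) / (L / 2) ^ (2 * j) := by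
        rw [← sum_Ioc_consecutive _ R.zero_le hRx]
        exact norm_add_le_of_le (hhead R le_rfl) htail
    _ = _ := by
        rw [show (4 : ℝ) = 2 ^ 2 by norm_num, ← pow_mul, div_pow, mul_comm 2 j, pow_mul L]
        field_simp

end TwistedMertens

section MajorArcs

open Finset
open scoped ArithmeticFunction.Moebius FourierTransform

variable {q : ℕ} {a : ℕ → ℂ} {B : ℝ}

lemma totient_mul_sum_filter_eq [NeZero q] {b : ZMod q} (hb : IsUnit b) (s : Finset ℕ)
    (f : ℕ → ℂ) : q.totient * ∑ n ∈ s with ((n : ℕ) : ZMod q) = b, f n =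
      ∑ χ : DirichletCharacter ℂ q, χ b⁻¹ * ∑ n ∈ s, χ n * f n := by
  simp_rw [mul_sum, ← mul_assoc]
  rw [sum_comm, sum_filter]
  refine sum_congr rfl fun n _ ↦ ?_
  rw [← sum_mul, DirichletCharacter.sum_char_inv_mul_char_eq ℂ hb, ite_mul, zero_mul]
  simp only [eq_comm]

lemma card_dirichletCharacter [NeZero q] :
    #(univ : Finset (DirichletCharacter ℂ q)) = q.totient := by
  rw [card_univ, ← Nat.card_eq_fintype_card,
    DirichletCharacter.card_eq_totient_of_hasEnoughRootsOfUnity]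

lemma exists_norm_sum_moebius_residueClass_le (j : ℕ) :
    ∃ C : ℝ, 0 < C ∧ ∀ (q : ℕ) [NeZero q] (b : ZMod q) (N x : ℕ), IsUnit b → 2 ≤ N → x ≤ N →
      ‖∑ n ∈ Ioc 0 x with ((n : ℕ) : ZMod q) = b, ((μ n : ℤ) : ℂ)‖ ≤
        C * q * (N / Real.log N ^ j) := by
  obtain ⟨C, hC, hbound⟩ := exists_norm_sum_Ioc_moebiusTwist_le j
  refine ⟨C, hC, fun q _ b N x hb hN hx ↦ ?_⟩
  have hφ : (0 : ℝ) < q.totient := by exact_mod_cast Nat.totient_pos.mpr (NeZero.pos q)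
  refine le_of_mul_le_mul_left ?_ hφ
  calc (q.totient : ℝ) * ‖∑ n ∈ Ioc 0 x with ((n : ℕ) : ZMod q) = b, ((μ n : ℤ) : ℂ)‖
      = ‖∑ χ : DirichletCharacter ℂ q, χ b⁻¹ * ∑ n ∈ Ioc 0 x, moebiusTwist χ n‖ := by
        rw [← Complex.norm_natCast, ← norm_mul, totient_mul_sum_filter_eq hb]
        rfl
    _ ≤ ∑ _χ : DirichletCharacter ℂ q, 1 * (C * q * (N / Real.log N ^ j)) :=
        norm_sum_le_of_le _ fun χ _ ↦
          norm_mul_le_of_le (χ.norm_le_one _) (hbound q χ N x hN hx)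
    _ = q.totient * (C * q * (N / Real.log N ^ j)) := by
        rw [sum_const, card_dirichletCharacter, nsmul_eq_mul, one_mul]

lemma exists_norm_sum_moebius_mul_coprime_le (j : ℕ) :
    ∃ C : ℝ, 0 < C ∧ ∀ (q : ℕ) [NeZero q] (g : ZMod q → ℂ) (N x : ℕ), (∀ z, ‖g z‖ ≤ 1) →
      2 ≤ N → x ≤ N → ‖∑ n ∈ Ioc 0 x with n.Coprime q, ((μ n : ℤ) : ℂ) * g n‖ ≤
        C * q ^ 2 * (N / Real.log N ^ j) := by
  obtain ⟨C, hC, hbound⟩ := exists_norm_sum_moebius_residueClass_le j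
  refine ⟨C, hC, fun q _ g N x hg hN hx ↦ ?_⟩
  have hclass (b : ZMod q) : ‖∑ n ∈ Ioc 0 x with Nat.Coprime n q ∧ ((n : ℕ) : ZMod q) = b,
      ((μ n : ℤ) : ℂ) * g n‖ ≤ C * q * (N / Real.log N ^ j) := by
    by_cases hb : IsUnit b
    · have hfilter : {n ∈ Ioc 0 x | Nat.Coprime n q ∧ ((n : ℕ) : ZMod q) = b} =
          {n ∈ Ioc 0 x | ((n : ℕ) : ZMod q) = b} := filter_congr fun n _ ↦
        ⟨And.right, fun hn ↦ ⟨(ZMod.isUnit_iff_coprime n q).mp (hn ▸ hb), hn⟩⟩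
      have hconst : ∀ n ∈ {n ∈ Ioc 0 x | ((n : ℕ) : ZMod q) = b},
          ((μ n : ℤ) : ℂ) * g n = ((μ n : ℤ) : ℂ) * g b := fun n hn ↦ by
        rw [(mem_filter.mp hn).2]
      rw [hfilter, sum_congr rfl hconst, ← sum_mul]
      exact (norm_mul_le_of_le (hbound q b N x hb hN hx) (hg b)).trans_eq (mul_one _)
    · rw [filter_false_of_mem fun (n : ℕ) _ (hn : n.Coprime q ∧ n = b) ↦
        hb (hn.2 ▸ (ZMod.isUnit_iff_coprime n q).mpr hn.1), sum_empty, norm_zero]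
      have := Real.log_natCast_nonneg N
      positivity
  calc _ = ‖∑ b : ZMod q, ∑ n ∈ Ioc 0 x with Nat.Coprime n q ∧ ((n : ℕ) : ZMod q) = b,
        ((μ n : ℤ) : ℂ) * g n‖ := by
        rw [← sum_fiberwise _ (fun n : ℕ ↦ (n : ZMod q))]
        simp only [filter_filter]
    _ ≤ ∑ _b : ZMod q, C * q * (N / Real.log N ^ j) := norm_sum_le_of_le _ fun b _ ↦ hclass b
    _ = C * q ^ 2 * (N / Real.log N ^ j) := by
        rw [sum_const, card_univ, ZMod.card, nsmul_eq_mul]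
        ring

lemma coprime_of_squarefree_of_gcd_eq {d m : ℕ} (hdq : d ∣ q) (hsq : Squarefree (d * m))
    (hgcd : (d * m).gcd q = d) : m.Coprime q := by
  obtain ⟨hdm, hd, -⟩ := Nat.squarefree_mul_iff.mp hsq
  obtain ⟨e, rfl⟩ := hdq
  rw [Nat.gcd_mul_left] at hgcd
  exact hdm.symm.mul_right (Nat.eq_of_mul_eq_mul_left hd.ne_zero.bot_lt (by lia))

lemma sum_moebius_mul_gcd_eq [NeZero q] {d : ℕ} (hdq : d ∣ q) (x : ℕ) (g : ZMod q → ℂ) :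
    ∑ n ∈ Ioc 0 x with n.gcd q = d, ((μ n : ℤ) : ℂ) * g n =
      ((μ d : ℤ) : ℂ) *
        ∑ m ∈ Ioc 0 (x / d) with m.Coprime q, ((μ m : ℤ) : ℂ) * g (d * m) := by
  have hd : 0 < d := Nat.pos_of_dvd_of_pos hdq (NeZero.pos q)
  rw [mul_sum, eq_comm]
  refine sum_of_injOn (d * ·) (mul_right_injective₀ hd.ne').injOn ?_ ?_ ?_
  · intro m hm
    simp only [coe_filter, mem_Ioc, Set.mem_ofPred_eq] at hm ⊢
    refine ⟨⟨Nat.mul_pos hd hm.1.1, ?_⟩, ?_⟩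
    · exact (Nat.mul_le_mul_left d hm.1.2).trans (Nat.mul_div_le x d)
    · rw [Nat.Coprime.gcd_mul_right_cancel _ hm.2, Nat.gcd_eq_left hdq]
  · intro n hn hn'
    rw [mem_filter, mem_Ioc] at hn
    obtain ⟨m, rfl⟩ : d ∣ n := hn.2 ▸ Nat.gcd_dvd_left n q
    have hsq : ¬Squarefree (d * m) := fun hsq ↦ hn' ⟨m, by
      simp only [coe_filter, mem_Ioc, Set.mem_ofPred_eq]
      exact ⟨⟨Nat.pos_of_mul_pos_left hn.1.1,
        (Nat.le_div_iff_mul_le hd).mpr (mul_comm d m ▸ hn.1.2)⟩,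
        coprime_of_squarefree_of_gcd_eq hdq hsq hn.2⟩, rfl⟩
    rw [ArithmeticFunction.moebius_eq_zero_of_not_squarefree hsq, Int.cast_zero, zero_mul]
  · intro m hm
    have hcop : d.Coprime m := (Nat.Coprime.coprime_dvd_right hdq (mem_filter.mp hm).2).symm
    rw [ArithmeticFunction.isMultiplicative_moebius.map_mul_of_coprime hcop]
    push_cast
    ring

lemma exists_norm_sum_moebius_mul_periodic_le (j : ℕ) :
    ∃ C : ℝ, 0 < C ∧ ∀ (q : ℕ) [NeZero q] (g : ZMod q → ℂ) (N x : ℕ), (∀ z, ‖g z‖ ≤ 1) →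
      2 ≤ N → x ≤ N → ‖∑ n ∈ Ioc 0 x, ((μ n : ℤ) : ℂ) * g n‖ ≤
        C * q ^ 3 * (N / Real.log N ^ j) := by
  obtain ⟨C, hC, hbound⟩ := exists_norm_sum_moebius_mul_coprime_le j
  refine ⟨C, hC, fun q _ g N x hg hN hx ↦ ?_⟩
  have := Real.log_natCast_nonneg N
  rw [← sum_fiberwise_of_maps_to (t := q.divisors) (g := fun n ↦ n.gcd q)
    fun n _ ↦ Nat.mem_divisors.mpr ⟨Nat.gcd_dvd_right n q, NeZero.ne q⟩]
  calc _ ≤ ∑ d ∈ q.divisors, 1 * (C * q ^ 2 * (N / Real.log N ^ j)) := by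
        refine norm_sum_le_of_le _ fun d hd ↦ ?_
        rw [sum_moebius_mul_gcd_eq (Nat.dvd_of_mem_divisors hd)]
        exact norm_mul_le_of_le (norm_moebius_le_one d) (hbound q (fun z ↦ g (d * z)) N (x / d)
          (fun z ↦ hg _) hN ((Nat.div_le_self x d).trans hx))
    _ = #q.divisors * (C * q ^ 2 * (N / Real.log N ^ j)) := by
        rw [sum_const, nsmul_eq_mul, one_mul]
    _ ≤ q * (C * q ^ 2 * (N / Real.log N ^ j)) := by
        gcongr
        exact Nat.card_divisors_le_self q
    _ = _ := by ring

lemma norm_sum_Ioc_mul_fourierChar_le {N : ℕ}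
    (hB : ∀ m ≤ N, ‖∑ n ∈ Ioc 0 m, a n‖ ≤ B) (β : ℝ) :
    ‖∑ n ∈ Ioc 0 N, a n * 𝐞 (n * β)‖ ≤ B * (1 + 2 * Real.pi * N * |β|) := by
  have hB0 : 0 ≤ B := (norm_nonneg _).trans (hB 0 N.zero_le)
  have hstep (m : ℕ) : ‖(𝐞 (m * β) : ℂ) - 𝐞 ((m + 1 : ℕ) * β)‖ ≤ 2 * Real.pi * |β| := by
    rw [Nat.cast_succ, add_one_mul, fourierChar_add, norm_sub_rev, ← mul_sub_one, norm_mul,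
      Circle.norm_coe, one_mul]
    exact norm_fourierChar_sub_one_le β
  refine (norm_sum_Ioc_mul_le N.zero_le (fun n : ℕ ↦ (𝐞 (n * β) : ℂ)) fun m _ ↦ hB m).trans ?_
  gcongr
  · exact (Circle.norm_coe _).le
  · refine (sum_le_sum fun m _ ↦ hstep m).trans_eq ?_
    rw [sum_const, Nat.card_Ico, Nat.sub_zero, nsmul_eq_mul]
    ring

lemma fourierChar_mul_div_eq_stdAddChar [NeZero q] (c : ℤ) (n : ℕ) :
    (𝐞 (n * (c / q)) : ℂ) = ZMod.stdAddChar ((c : ZMod q) * (n : ZMod q)) := by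
  rw [← Int.cast_natCast (R := ZMod q), ← Int.cast_mul, ZMod.stdAddChar_coe,
    Real.fourierChar_apply]
  push_cast
  ring_nf

lemma exists_norm_expSum_moebius_le_of_majorArc (j : ℕ) :
    ∃ C : ℝ, 0 < C ∧ ∀ (q : ℕ) [NeZero q] (c : ℤ) (t : ℝ) (N : ℕ), 2 ≤ N →
      ‖expSum ((μ : ArithmeticFunction ℤ) : ArithmeticFunction ℂ) N t‖ ≤
        C * q ^ 3 * (N / Real.log N ^ j) * (1 + 2 * Real.pi * N * |t - c / q|) := by
  obtain ⟨C, hC, hbound⟩ := exists_norm_sum_moebius_mul_periodic_le j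
  refine ⟨C, hC, fun q _ c t N hN ↦ ?_⟩
  refine le_of_eq_of_le ?_ (norm_sum_Ioc_mul_fourierChar_le (fun m hm ↦ hbound q
    (fun z ↦ ZMod.stdAddChar ((c : ZMod q) * z)) N m (fun z ↦ (AddChar.norm_apply _ _).le) hN hm)
    (t - c / q))
  rw [expSum]
  congr 1
  refine sum_congr rfl fun n _ ↦ ?_
  rw [ArithmeticFunction.intCoe_apply, mul_assoc, ← fourierChar_mul_div_eq_stdAddChar,
    ← fourierChar_add]
  ring_nf

end MajorArcs

section CircleMethod

open Finset
open scoped ArithmeticFunction.Moebius FourierTransform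

variable {N : ℕ}

lemma exists_one_add_log_pow_le (k : ℕ) :
    ∃ D : ℝ, 0 < D ∧ ∀ N : ℕ, 0 < N → (1 + Real.log N) ^ k ≤ D * N := by
  obtain ⟨D, hD, hlog⟩ := exists_log_pow_le_mul_rpow k one_pos
  refine ⟨D * Real.exp 1, by positivity, fun N hN ↦ ?_⟩
  have hN1 : (1 : ℝ) ≤ N := by exact_mod_cast hN
  calc (1 + Real.log N) ^ k = Real.log (Real.exp 1 * N) ^ k := by
        rw [Real.log_mul (Real.exp_ne_zero 1) (by positivity), Real.log_exp]
    _ ≤ D * (Real.exp 1 * N) ^ (1 : ℝ) :=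
        hlog _ (one_le_mul_of_one_le_of_one_le (Real.one_le_exp zero_le_one) hN1)
    _ = D * Real.exp 1 * N := by rw [Real.rpow_one, mul_assoc]

lemma norm_expSum_moebius_le (N : ℕ) (t : ℝ) :
    ‖expSum ((μ : ArithmeticFunction ℤ) : ArithmeticFunction ℂ) N t‖ ≤ N := by
  refine norm_expSum_le.trans ((sum_le_card_nsmul _ _ 1 fun n _ ↦ ?_).trans_eq ?_)
  · rw [ArithmeticFunction.intCoe_apply]
    exact norm_moebius_le_one n
  · rw [Nat.card_Ioc, Nat.sub_zero, nsmul_one]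

lemma exists_norm_expSum_moebius_le_of_le_log_pow (k m : ℕ) :
    ∃ C : ℝ, 0 < C ∧ ∀ (N : ℕ) (t : ℝ), 0 < N → N ≤ 8 * (1 + Real.log N) ^ k →
      ‖expSum ((μ : ArithmeticFunction ℤ) : ArithmeticFunction ℂ) N t‖ ≤
        C * (N / (1 + Real.log N) ^ m) := by
  obtain ⟨D, hD, hlog⟩ := exists_one_add_log_pow_le (m + k)
  refine ⟨D * 8, by positivity, fun N t hN hNk ↦ (norm_expSum_moebius_le N t).trans ?_⟩
  have hM : 0 < 1 + Real.log N := by linarith [Real.log_natCast_nonneg N]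
  have hMm : (1 + Real.log N) ^ m ≤ D * 8 := by
    refine le_of_mul_le_mul_right ?_ (pow_pos hM k)
    calc (1 + Real.log N) ^ m * (1 + Real.log N) ^ k ≤ D * N := by
          rw [← pow_add]
          exact hlog N hN
      _ ≤ D * (8 * (1 + Real.log N) ^ k) := by gcongr
      _ = D * 8 * (1 + Real.log N) ^ k := (mul_assoc _ _ _).symm
  rw [← mul_div_assoc, le_div_iff₀ (by positivity), mul_comm (N : ℝ)]
  gcongr

lemma exists_isCoprime_abs_sub_div_le (t : ℝ) {V : ℕ} (hV : 0 < V) (hVN : V ≤ N) :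
    ∃ (q : ℕ) (_ : NeZero q) (a : ℤ), IsCoprime a q ∧ q * V ≤ N ∧
      |t - a / q| ≤ 1 / (q : ℝ) ^ 2 ∧ N * |t - a / q| ≤ V := by
  obtain ⟨r, hr, hden⟩ := Real.exists_rat_abs_sub_le_and_den_le t (Nat.div_pos hVN hV)
  have hq : (1 : ℝ) ≤ r.den := by exact_mod_cast r.den_pos
  have hdenQ : (r.den : ℝ) ≤ (N / V : ℕ) + 1 := by exact_mod_cast hden.trans (Nat.le_succ _)
  have hNQ : (N : ℝ) ≤ V * ((N / V : ℕ) + 1) := by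
    exact_mod_cast (Nat.lt_mul_div_succ N hV).le
  rw [Rat.cast_def r] at hr
  refine ⟨r.den, ⟨r.den_ne_zero⟩, r.num, Rat.isCoprime_num_den r,
    (Nat.le_div_iff_mul_le hV).mp hden, ?_, ?_⟩
  · refine hr.trans ?_
    rw [sq]
    gcongr
  · calc N * |t - r.num / r.den| ≤ V * ((N / V : ℕ) + 1) * (1 / (((N / V : ℕ) + 1) * 1)) := by
          gcongr
          refine hr.trans ?_
          gcongr
      _ = V := by field_simp

lemma norm_expSum_moebius_le_of_minorArc {q U : ℕ} {a : ℤ} {t : ℝ} (m : ℕ) (haq : IsCoprime a q)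
    (ht : |t - a / q| ≤ 1 / (q : ℝ) ^ 2) (hU : (1 + Real.log N) ^ (2 * (m + 3)) ≤ U)
    (hUq : 2 * U ^ 2 ≤ q) (hqN : q * U ^ 3 ≤ N) :
    ‖expSum ((μ : ArithmeticFunction ℤ) : ArithmeticFunction ℂ) N t‖ ≤
      21 * (N / (1 + Real.log N) ^ m) := by
  have hM : 0 < 1 + Real.log N := by linarith [Real.log_natCast_nonneg N]
  have hU0 : 0 < U := by exact_mod_cast (pow_pos hM _).trans_le hU
  have hsqrt : (1 + Real.log N) ^ (m + 3) ≤ √U :=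
    Real.le_sqrt_of_sq_le (by rwa [← pow_mul, mul_comm])
  calc _ ≤ 21 * N * (1 + Real.log N) ^ 3 / √U :=
        norm_expSum_moebius_le_of_sq_le haq ht hU0 hUq hqN
    _ ≤ 21 * N * (1 + Real.log N) ^ 3 / (1 + Real.log N) ^ (m + 3) := by gcongr
    _ = 21 * (N / (1 + Real.log N) ^ m) := by
        rw [pow_add]
        field_simp

lemma one_add_log_natCast_le (hN : 2 ≤ N) : 1 + Real.log N ≤ 3 * Real.log N := by
  have := Real.log_le_log two_pos (by exact_mod_cast hN : (2 : ℝ) ≤ N)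
  linarith [Real.log_two_gt_d9]

lemma exists_norm_expSum_moebius_le_of_le_log_pow_of_majorArc (k m : ℕ) :
    ∃ C : ℝ, 0 < C ∧ ∀ (q : ℕ) [NeZero q] (a : ℤ) (t : ℝ) (N : ℕ) (U : ℝ), 2 ≤ N → 1 ≤ U →
      U ≤ 2 * (1 + Real.log N) ^ k → q ≤ 2 * U ^ 2 → N * |t - a / q| ≤ U ^ 3 →
      ‖expSum ((μ : ArithmeticFunction ℤ) : ArithmeticFunction ℂ) N t‖ ≤
        C * (N / (1 + Real.log N) ^ m) := by
  obtain ⟨C, hC, hbound⟩ := exists_norm_expSum_moebius_le_of_majorArc (9 * k + m)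
  refine ⟨C * 8 * 8 * 2 ^ 9 * 3 ^ (9 * k + m), by positivity,
    fun q _ a t N U hN hU1 hU hq hβ ↦ (hbound q a t N hN).trans ?_⟩
  have hL : 0 < Real.log N := Real.log_pos (by exact_mod_cast hN)
  set M := 1 + Real.log N
  have hM : 0 < M := by positivity
  have hlog : 1 / Real.log N ^ (9 * k + m) ≤ 3 ^ (9 * k + m) / M ^ (9 * k + m) := by
    rw [div_le_div_iff₀ (by positivity) (by positivity), one_mul, ← mul_pow]
    gcongr
    exact one_add_log_natCast_le hN
  have hphase : 1 + 2 * Real.pi * N * |t - a / q| ≤ 8 * U ^ 3 := by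
    have hU3 : 1 ≤ U ^ 3 := one_le_pow₀ hU1
    calc 1 + 2 * Real.pi * N * |t - a / q| = 1 + 2 * Real.pi * (N * |t - a / q|) := by ring
      _ ≤ U ^ 3 + 7 * U ^ 3 := by
          gcongr
          linarith [Real.pi_lt_d2]
      _ = 8 * U ^ 3 := by ring
  calc _ ≤ C * (2 * U ^ 2) ^ 3 * (N / Real.log N ^ (9 * k + m)) * (8 * U ^ 3) := by gcongr
    _ = C * 8 * 8 * N * U ^ 9 * (1 / Real.log N ^ (9 * k + m)) := by ring
    _ ≤ C * 8 * 8 * N * (2 * M ^ k) ^ 9 * (3 ^ (9 * k + m) / M ^ (9 * k + m)) := by gcongr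
    _ = C * 8 * 8 * 2 ^ 9 * 3 ^ (9 * k + m) * (N / M ^ m) := by
        rw [pow_add M, pow_mul' M]
        field_simp

lemma exists_norm_expSum_moebius_le_div_log_pow (m : ℕ) :
    ∃ C : ℝ, 0 < C ∧ ∀ (N : ℕ) (t : ℝ), 2 ≤ N →
      ‖expSum ((μ : ArithmeticFunction ℤ) : ArithmeticFunction ℂ) N t‖ ≤
        C * (N / (1 + Real.log N) ^ m) := by
  set k := 2 * (m + 3)
  obtain ⟨C₁, -, hsmall⟩ := exists_norm_expSum_moebius_le_of_le_log_pow (k * 3) m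
  obtain ⟨C₂, hC₂, hmajor⟩ := exists_norm_expSum_moebius_le_of_le_log_pow_of_majorArc k m
  refine ⟨max (max C₁ 21) C₂, lt_max_of_lt_right hC₂, fun N t hN ↦ ?_⟩
  have hL := Real.log_natCast_nonneg N
  have hmax {C : ℝ} (hC : C ≤ max (max C₁ 21) C₂) : C * (N / (1 + Real.log N) ^ m) ≤
      max (max C₁ 21) C₂ * (N / (1 + Real.log N) ^ m) := by gcongr
  have hM : 1 ≤ (1 + Real.log N) ^ k := one_le_pow₀ (by linarith)
  set U := ⌈(1 + Real.log N) ^ k⌉₊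
  have hMU : (1 + Real.log N) ^ k ≤ U := Nat.le_ceil _
  have hUM : (U : ℝ) ≤ 2 * (1 + Real.log N) ^ k := by
    linarith [Nat.ceil_lt_add_one (zero_le_one.trans hM)]
  have hU1 : (1 : ℝ) ≤ U := hM.trans hMU
  rcases lt_or_ge N (U ^ 3) with hNU | hNU
  · refine (hsmall N t (by lia) ?_).trans (hmax ((le_max_left _ _).trans (le_max_left _ _)))
    calc (N : ℝ) ≤ U ^ 3 := by exact_mod_cast hNU.le
      _ ≤ (2 * (1 + Real.log N) ^ k) ^ 3 := by gcongr
      _ = 8 * (1 + Real.log N) ^ (k * 3) := by rw [mul_pow, ← pow_mul]; norm_num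
  obtain ⟨q, _, a, haq, hqN, ht, hβ⟩ :=
    exists_isCoprime_abs_sub_div_le t (pow_pos (by exact_mod_cast hU1) 3) hNU
  rcases le_total (2 * U ^ 2) q with hUq | hqU
  · exact (norm_expSum_moebius_le_of_minorArc m haq ht hMU hUq hqN).trans
      (hmax ((le_max_right _ _).trans (le_max_left _ _)))
  · exact (hmajor q a t N U hN hU1 hUM (by exact_mod_cast hqU) (by exact_mod_cast hβ)).trans
      (hmax (le_max_right _ _))

lemma sum_exp_mul_moebius_eq_expSum (N : ℕ) (t : ℝ) :
    ∑ n ∈ Icc 1 N, Complex.exp (2 * Real.pi * Complex.I * n * t) *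
        (ArithmeticFunction.moebius n : ℂ) =
      expSum ((μ : ArithmeticFunction ℤ) : ArithmeticFunction ℂ) N t := by
  refine sum_congr rfl fun n _ ↦ ?_
  rw [ArithmeticFunction.intCoe_apply, mul_comm, Real.fourierChar_apply]
  push_cast
  ring_nf

end CircleMethod

/-- Davenport's estimate: for every `A > 0` there exists `C_A > 0` such that for all
`N ≥ 2` and all real `t`, `|Σ_{n≤N} e^{2πint} μ(n)| ≤ C_A · N / (log N)^A`. -/
theorem davenport_estimate (A : ℝ) (hA : 0 < A) :
    ∃ C : ℝ, 0 < C ∧ ∀ N : ℕ, 2 ≤ N → ∀ t : ℝ,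
      norm
          (∑ n ∈ Finset.Icc 1 N,
            Complex.exp (2 * Real.pi * Complex.I * n * t) *
              (ArithmeticFunction.moebius n : ℂ))
        ≤ C * N / Real.log N ^ A := by
  obtain ⟨C, hC, hbound⟩ := exists_norm_expSum_moebius_le_div_log_pow ⌈A⌉₊
  refine ⟨C, hC, fun N hN t ↦ ?_⟩
  have hL : 0 < Real.log N := Real.log_pos (by exact_mod_cast hN)
  have hpow : Real.log N ^ A ≤ (1 + Real.log N) ^ ⌈A⌉₊ :=
    calc Real.log N ^ A ≤ (1 + Real.log N) ^ A :=
          Real.rpow_le_rpow hL.le (by linarith) hA.le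
      _ ≤ (1 + Real.log N) ^ (⌈A⌉₊ : ℝ) :=
          Real.rpow_le_rpow_of_exponent_le (by linarith) (Nat.le_ceil A)
      _ = (1 + Real.log N) ^ ⌈A⌉₊ := Real.rpow_natCast _ _
  calc _ ≤ C * (N / (1 + Real.log N) ^ ⌈A⌉₊) := by
        rw [sum_exp_mul_moebius_eq_expSum]
        exact hbound N t hN
    _ ≤ C * (N / Real.log N ^ A) := by gcongr
    _ = C * N / Real.log N ^ A := (mul_div_assoc _ _ _).symm
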